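/- arXiv:2202.04020 — 4 statements merged into one kernel-verified Lean document; each statement's English description precedes it below -/
import Mathlib

section
/- Let X* be an optimal solution of min_{X∈F_{n,k}} f(X). (Forward direction) If rank(X*) = k and there exists a corresponding dual solution (Z₁*, Z₂*, s*) — i.e., Z₁* ⪰ 0, Z₂* ⪰ 0, ∇f(X*) = Z₁* − Z₂* + s*I, ⟨Z₁*, X*⟩ = 0 and ⟨Z₂*, I − X*⟩ = 0 — satisfying strict complementarity, meaning rank(Z₁*) = n − k or rank(Z₂*) = k, then λ_{n−k}(∇f(X*)) − λ_{n−k+1}(∇f(X*)) > 0. (Converse) If λ_{n−k}(∇f(X*)) − λ_{n−k+1}(∇f(X*)) > 0, then every corresponding dual solution (Z₁*, Z₂*, s*) satisfies strict complementarity. -/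
/-!
Let `G = ∇f(X*)` and let `(Z₁, Z₂, s)` be a dual solution, so `G - s = Z₁ - Z₂`. Complementary
slackness upgrades to `Z₁ X* = 0` and `Z₂ (1 - X*) = 0`
(`mul_eq_zero_of_trace_mul_eq_zero`), hence `Z₂ Z₁ = Z₂ X* Z₁ = 0`: the matrices `Z₁` and `Z₂` are
the positive and negative parts of `G - s`. The quadratic form of `G - s` is therefore `≤ 0` on
`ker Z₁`, `> 0` on the nonzero vectors of `range Z₁`, `≥ 0` on `ker Z₂` and `< 0` on the nonzero
vectors of `range Z₂`. The two halves of the Courant–Fischer principle (`exists_eigval_mul_le`,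
`exists_le_eigval_mul`) translate the dimensions of these spaces into positions of the eigenvalues
of `G` relative to `s`.

If `rank Z₁ = n - k`, then `ker Z₁` and `range Z₁` give `λ_{n-k+1} ≤ s < λ_{n-k}`; if
`rank Z₂ = k`, then `range Z₂` and `ker Z₂` give `λ_{n-k+1} < s ≤ λ_{n-k}`.

Conversely, a gap forces `s < λ_{n-k}` or `λ_{n-k+1} < s`. In the first case `rank Z₁ ≥ n - k`, while
`rank Z₁ + rank X* ≤ n` and `rank X* ≥ trace X* = k` (`trace_le_rank`), so equality holds throughout.
In the second case `rank Z₂ ≥ k`, so `rank (1 - X*) ≤ n - k = trace (1 - X*)`; hence `1 - X*` is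
a projection (`mul_one_sub_eq_zero`), `rank X* = k`, and `rank Z₂ = k` as well.
-/

open Matrix

noncomputable def frobNorm {m : ℕ} (A : Matrix (Fin m) (Fin m) ℝ) : ℝ :=
  Real.sqrt (∑ i, ∑ j, (A i j) ^ 2)

/-- `eigval A j` is the `j`-th largest eigenvalue (1-indexed) of the symmetric matrix `A`. -/
noncomputable def eigval {m : ℕ} (A : Matrix (Fin m) (Fin m) ℝ) (j : ℕ) : ℝ :=
  if h : A.IsHermitian then
    if hj : m - j < m then (h.eigenvalues ∘ Tuple.sort h.eigenvalues) ⟨m - j, hj⟩ else 0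
  else 0

/-- spectral norm: largest singular value. -/
noncomputable def specNorm {m : ℕ} (A : Matrix (Fin m) (Fin m) ℝ) : ℝ :=
  Real.sqrt (eigval (Aᵀ * A) 1)

/-- `P_{n,k}`: rank-`k` orthogonal projection matrices. -/
def ProjSet (n k : ℕ) : Set (Matrix (Fin n) (Fin n) ℝ) :=
  {X | ∃ Q : Matrix (Fin n) (Fin k) ℝ, Qᵀ * Q = 1 ∧ X = Q * Qᵀ}

/-- The Fantope `F_{n,k}`. -/
def Fantope (n k : ℕ) : Set (Matrix (Fin n) (Fin n) ℝ) :=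
  {X | X.IsSymm ∧ X.PosSemidef ∧ (1 - X).PosSemidef ∧ X.trace = (k : ℝ)}

open scoped MatrixOrder

/-! ### Eigenvalue bounds from subspaces -/

/-- The spectral theorem as a plain matrix identity. -/
lemma eq_conj_diagonal {m : ℕ} {A : Matrix (Fin m) (Fin m) ℝ} (hA : A.IsHermitian) :
    A = (hA.eigenvectorUnitary : Matrix (Fin m) (Fin m) ℝ) * diagonal hA.eigenvalues *
      star (hA.eigenvectorUnitary : Matrix (Fin m) (Fin m) ℝ) := by
  simpa [Unitary.conjStarAlgAut_apply, Function.comp_def] using hA.spectral_theorem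

/-- The quadratic form of a real symmetric matrix in its orthonormal eigenbasis. -/
lemma quadForm_eq_sum_eigenvalues {m : ℕ} {A : Matrix (Fin m) (Fin m) ℝ} (hA : A.IsHermitian)
    (x : Fin m → ℝ) :
    x ⬝ᵥ (A *ᵥ x) = ∑ i, hA.eigenvalues i *
      ((star (hA.eigenvectorUnitary : Matrix (Fin m) (Fin m) ℝ) *ᵥ x) i) ^ 2 := by
  set U : Matrix (Fin m) (Fin m) ℝ := ↑(hA.eigenvectorUnitary) with hU
  have hs : A = U * diagonal hA.eigenvalues * star U := eq_conj_diagonal hA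
  have h1 : x ⬝ᵥ (A *ᵥ x) = (star U *ᵥ x) ⬝ᵥ (diagonal hA.eigenvalues *ᵥ (star U *ᵥ x)) := by
    conv_lhs => rw [hs]
    rw [← mulVec_mulVec, ← mulVec_mulVec, dotProduct_mulVec x U, star_eq_conjTranspose,
      conjTranspose_eq_transpose_of_trivial, mulVec_transpose]
  rw [h1]
  simp only [dotProduct, mulVec_diagonal]
  exact Finset.sum_congr rfl fun i _ => by ring

/-- Parseval's identity in the eigenbasis. -/
lemma dotProduct_self_eq_sum_coords {m : ℕ} {A : Matrix (Fin m) (Fin m) ℝ} (hA : A.IsHermitian)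
    (x : Fin m → ℝ) :
    x ⬝ᵥ x = ∑ i,
      ((star (hA.eigenvectorUnitary : Matrix (Fin m) (Fin m) ℝ) *ᵥ x) i) ^ 2 := by
  set U : Matrix (Fin m) (Fin m) ℝ := ↑(hA.eigenvectorUnitary) with hU
  have hUU : U * star U = 1 := Unitary.coe_mul_star_self hA.eigenvectorUnitary
  have h1 : x ⬝ᵥ x = (star U *ᵥ x) ⬝ᵥ (star U *ᵥ x) := by
    conv_lhs => enter [2]; rw [← one_mulVec x, ← hUU]
    rw [← mulVec_mulVec, dotProduct_mulVec x U, star_eq_conjTranspose,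
      conjTranspose_eq_transpose_of_trivial, mulVec_transpose]
  rw [h1]
  simp only [dotProduct]
  exact Finset.sum_congr rfl fun i _ => by ring

/-- A subspace of dimension larger than `#S` contains a nonzero vector orthogonal to all the
eigenvectors indexed by `S`. -/
lemma exists_ne_zero_coords_eq_zero {m : ℕ} {A : Matrix (Fin m) (Fin m) ℝ} (hA : A.IsHermitian)
    (W : Submodule ℝ (Fin m → ℝ)) (S : Finset (Fin m)) (hS : S.card < Module.finrank ℝ W) :
    ∃ x ∈ W, x ≠ 0 ∧ ∀ i ∈ S,
      (star (hA.eigenvectorUnitary : Matrix (Fin m) (Fin m) ℝ) *ᵥ x) i = 0 := by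
  let L : W →ₗ[ℝ] (S → ℝ) :=
    (LinearMap.funLeft ℝ ℝ (Subtype.val : S → Fin m)) ∘ₗ
      (star (hA.eigenvectorUnitary : Matrix (Fin m) (Fin m) ℝ)).mulVecLin ∘ₗ W.subtype
  have hker : LinearMap.ker L ≠ ⊥ := by
    apply LinearMap.ker_ne_bot_of_finrank_lt
    simpa using hS
  obtain ⟨w, hw, hw0⟩ := (Submodule.ne_bot_iff _).1 hker
  refine ⟨w, w.2, by simpa using hw0, fun i hi => ?_⟩
  exact congrFun (LinearMap.mem_ker.1 hw) ⟨i, hi⟩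

/-- Half of the Courant–Fischer principle: every subspace of dimension more than `m - j` contains
a nonzero vector whose Rayleigh quotient is at least the `j`-th largest eigenvalue. -/
lemma exists_eigval_mul_le {m : ℕ} {A : Matrix (Fin m) (Fin m) ℝ} (hA : A.IsHermitian)
    {j : ℕ} (hj : 1 ≤ j) (hjm : j ≤ m) (W : Submodule ℝ (Fin m → ℝ))
    (hW : m - j < Module.finrank ℝ W) :
    ∃ x ∈ W, x ≠ 0 ∧ eigval A j * (x ⬝ᵥ x) ≤ x ⬝ᵥ (A *ᵥ x) := by
  have hp : m - j < m := by omega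
  set σ := Tuple.sort hA.eigenvalues with hσ
  have hmono : Monotone (hA.eigenvalues ∘ σ) := Tuple.monotone_sort _
  have he : eigval A j = hA.eigenvalues (σ ⟨m - j, hp⟩) := by
    rw [eigval, dif_pos hA, dif_pos hp]; rfl
  obtain ⟨x, hxW, hx0, hx⟩ := exists_ne_zero_coords_eq_zero hA W
    ((Finset.Iio (⟨m - j, hp⟩ : Fin m)).map σ.toEmbedding) (by simpa using hW)
  refine ⟨x, hxW, hx0, ?_⟩
  rw [quadForm_eq_sum_eigenvalues hA, dotProduct_self_eq_sum_coords hA, Finset.mul_sum]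
  refine Finset.sum_le_sum fun i _ => ?_
  by_cases hi : σ.symm i < ⟨m - j, hp⟩
  · rw [hx i (Finset.mem_map.2 ⟨σ.symm i, Finset.mem_Iio.2 hi, by simp⟩)]
    simp
  · have := hmono (not_lt.1 hi)
    simp only [Function.comp_apply, Equiv.apply_symm_apply] at this
    rw [he]
    exact mul_le_mul_of_nonneg_right this (sq_nonneg _)

/-- The other half of the Courant–Fischer principle: every subspace of dimension at least `j`
contains a nonzero vector whose Rayleigh quotient is at most the `j`-th largest eigenvalue. -/
lemma exists_le_eigval_mul {m : ℕ} {A : Matrix (Fin m) (Fin m) ℝ} (hA : A.IsHermitian)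
    {j : ℕ} (hj : 1 ≤ j) (hjm : j ≤ m) (W : Submodule ℝ (Fin m → ℝ))
    (hW : j ≤ Module.finrank ℝ W) :
    ∃ x ∈ W, x ≠ 0 ∧ x ⬝ᵥ (A *ᵥ x) ≤ eigval A j * (x ⬝ᵥ x) := by
  have hp : m - j < m := by omega
  set σ := Tuple.sort hA.eigenvalues with hσ
  have hmono : Monotone (hA.eigenvalues ∘ σ) := Tuple.monotone_sort _
  have he : eigval A j = hA.eigenvalues (σ ⟨m - j, hp⟩) := by
    rw [eigval, dif_pos hA, dif_pos hp]; rfl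
  obtain ⟨x, hxW, hx0, hx⟩ := exists_ne_zero_coords_eq_zero hA W
    ((Finset.Ioi (⟨m - j, hp⟩ : Fin m)).map σ.toEmbedding) (by simp; omega)
  refine ⟨x, hxW, hx0, ?_⟩
  rw [quadForm_eq_sum_eigenvalues hA, dotProduct_self_eq_sum_coords hA, Finset.mul_sum]
  refine Finset.sum_le_sum fun i _ => ?_
  by_cases hi : ⟨m - j, hp⟩ < σ.symm i
  · rw [hx i (Finset.mem_map.2 ⟨σ.symm i, Finset.mem_Ioi.2 hi, by simp⟩)]
    simp
  · have := hmono (not_lt.1 hi)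
    simp only [Function.comp_apply, Equiv.apply_symm_apply] at this
    rw [he]
    exact mul_le_mul_of_nonneg_right this (sq_nonneg _)

/-! ### Complementary slackness -/

/-- Complementary slackness in product form: positive semidefinite matrices with
`trace (A * B) = 0` satisfy `A * B = 0`. Writing `A = Cᴴ C` and `B = Dᴴ D`, the trace is
the squared Frobenius norm of `C Dᴴ`. -/
lemma mul_eq_zero_of_trace_mul_eq_zero {m : ℕ} {A B : Matrix (Fin m) (Fin m) ℝ}
    (hA : A.PosSemidef) (hB : B.PosSemidef) (h : (A * B).trace = 0) : A * B = 0 := by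
  obtain ⟨C, rfl⟩ := CStarAlgebra.nonneg_iff_eq_star_mul_self.1 hA.nonneg
  obtain ⟨D, rfl⟩ := CStarAlgebra.nonneg_iff_eq_star_mul_self.1 hB.nonneg
  simp only [star_eq_conjTranspose] at h ⊢
  have h2 : ((C * Dᴴ)ᴴ * (C * Dᴴ)).trace = 0 := by
    rw [← h, conjTranspose_mul, conjTranspose_conjTranspose, Matrix.mul_assoc,
      trace_mul_comm D]
    simp only [Matrix.mul_assoc]
  have h3 := trace_conjTranspose_mul_self_eq_zero_iff.1 h2
  calc Cᴴ * C * (Dᴴ * D) = Cᴴ * (C * Dᴴ) * D := by simp only [Matrix.mul_assoc]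
    _ = 0 := by rw [h3]; simp

/-! ### Trace and rank of a symmetric matrix bounded by the identity -/

lemma eigenvalues_le_one {m : ℕ} {Y : Matrix (Fin m) (Fin m) ℝ} (hY : Y.IsHermitian)
    (hY1 : (1 - Y).PosSemidef) (i : Fin m) : hY.eigenvalues i ≤ 1 := by
  set U : Matrix (Fin m) (Fin m) ℝ := ↑(hY.eigenvectorUnitary) with hU
  have hUU : star U * U = 1 := Unitary.coe_star_mul_self hY.eigenvectorUnitary
  have hs : Y = U * diagonal hY.eigenvalues * star U := eq_conj_diagonal hY
  have h2 : Uᴴ * (1 - Y) * U = 1 - diagonal hY.eigenvalues := by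
    rw [← star_eq_conjTranspose, Matrix.mul_sub, Matrix.sub_mul, Matrix.mul_one, hUU]
    congr 1
    calc star U * Y * U = star U * (U * diagonal hY.eigenvalues * star U) * U := by rw [← hs]
      _ = (star U * U) * diagonal hY.eigenvalues * (star U * U) := by
        simp only [Matrix.mul_assoc]
      _ = _ := by rw [hUU]; simp
  have h3 := (hY1.conjTranspose_mul_mul_same U).diag_nonneg (i := i)
  rw [h2] at h3
  simpa using h3

lemma rank_eq_sum_ite {m : ℕ} {Y : Matrix (Fin m) (Fin m) ℝ} (hY : Y.IsHermitian) :
    (Y.rank : ℝ) = ∑ i, if hY.eigenvalues i ≠ 0 then (1 : ℝ) else 0 := by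
  rw [hY.rank_eq_card_non_zero_eigs, Finset.sum_boole, Fintype.card_subtype]

lemma trace_eq_sum {m : ℕ} {Y : Matrix (Fin m) (Fin m) ℝ} (hY : Y.IsHermitian) :
    Y.trace = ∑ i, hY.eigenvalues i := by
  simpa using hY.trace_eq_sum_eigenvalues

lemma eigenvalues_le_ite {m : ℕ} {Y : Matrix (Fin m) (Fin m) ℝ} (hY : Y.IsHermitian)
    (hY1 : (1 - Y).PosSemidef) (i : Fin m) :
    hY.eigenvalues i ≤ if hY.eigenvalues i ≠ 0 then (1 : ℝ) else 0 := by
  split_ifs with h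
  · exact eigenvalues_le_one hY hY1 i
  · exact (not_not.1 h).le

/-- If `Y ⪯ 1`, each nonzero eigenvalue contributes at most `1` to the trace. -/
lemma trace_le_rank {m : ℕ} {Y : Matrix (Fin m) (Fin m) ℝ} (hY : Y.IsHermitian)
    (hY1 : (1 - Y).PosSemidef) : Y.trace ≤ Y.rank := by
  rw [rank_eq_sum_ite hY, trace_eq_sum hY]
  exact Finset.sum_le_sum fun i _ => eigenvalues_le_ite hY hY1 i

/-- If `Y ⪯ 1` and its trace reaches its rank, every eigenvalue is `0` or `1`, so `Y` is a
projection. -/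
lemma mul_one_sub_eq_zero {m : ℕ} {Y : Matrix (Fin m) (Fin m) ℝ} (hY : Y.IsHermitian)
    (hY1 : (1 - Y).PosSemidef) (h : (Y.rank : ℝ) ≤ Y.trace) : Y * (1 - Y) = 0 := by
  have heq : ∀ i, hY.eigenvalues i = if hY.eigenvalues i ≠ 0 then (1 : ℝ) else 0 := by
    have h1 : Y.trace = Y.rank := le_antisymm (trace_le_rank hY hY1) h
    rw [rank_eq_sum_ite hY, trace_eq_sum hY] at h1
    intro i
    exact (Finset.sum_eq_sum_iff_of_le fun i _ => eigenvalues_le_ite hY hY1 i).1 h1 i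
      (Finset.mem_univ i)
  have hsq : ∀ i, hY.eigenvalues i * hY.eigenvalues i = hY.eigenvalues i := by
    intro i
    have := heq i
    split_ifs at this with h0
    · rw [this, one_mul]
    · rw [this, zero_mul]
  set U : Matrix (Fin m) (Fin m) ℝ := ↑(hY.eigenvectorUnitary) with hU
  have hUU : star U * U = 1 := Unitary.coe_star_mul_self hY.eigenvectorUnitary
  have hs : Y = U * diagonal hY.eigenvalues * star U := eq_conj_diagonal hY
  have hYY : Y * Y = Y := by
    calc Y * Y = (U * diagonal hY.eigenvalues * star U) *
          (U * diagonal hY.eigenvalues * star U) := by rw [← hs]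
      _ = U * diagonal hY.eigenvalues * (star U * U) * diagonal hY.eigenvalues * star U := by
        simp only [Matrix.mul_assoc]
      _ = U * (diagonal hY.eigenvalues * diagonal hY.eigenvalues) * star U := by
        rw [hUU, Matrix.mul_one]; simp only [Matrix.mul_assoc]
      _ = U * diagonal hY.eigenvalues * star U := by rw [diagonal_mul_diagonal]; simp only [hsq]
      _ = Y := hs.symm
  rw [Matrix.mul_sub, Matrix.mul_one, hYY, sub_self]

/-! ### Kernel and range of a dual matrix -/

lemma finrank_ker_mulVecLin {m : ℕ} (Z : Matrix (Fin m) (Fin m) ℝ) :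
    Z.rank + Module.finrank ℝ (LinearMap.ker Z.mulVecLin) = m := by
  have := LinearMap.finrank_range_add_finrank_ker Z.mulVecLin
  simpa [Matrix.rank] using this

/-- A positive semidefinite matrix is positive definite on its own range, because range and
kernel are orthogonal. -/
lemma quadForm_pos_of_mem_range {m : ℕ} {Z : Matrix (Fin m) (Fin m) ℝ} (hZ : Z.PosSemidef)
    {x : Fin m → ℝ} (hx : x ∈ LinearMap.range Z.mulVecLin) (hx0 : x ≠ 0) :
    0 < x ⬝ᵥ (Z *ᵥ x) := by
  have h0 : 0 ≤ x ⬝ᵥ (Z *ᵥ x) := by simpa using hZ.dotProduct_mulVec_nonneg x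
  refine lt_of_le_of_ne h0 fun h => hx0 ?_
  have hZx : Z *ᵥ x = 0 := (hZ.dotProduct_mulVec_zero_iff x).1 (by simpa using h.symm)
  obtain ⟨y, rfl⟩ := hx
  have hT : Zᵀ = Z := isHermitian_iff_isSymm.1 hZ.isHermitian
  simp only [mulVecLin_apply] at hZx ⊢
  have : (Z *ᵥ y) ⬝ᵥ (Z *ᵥ y) = 0 := by
    rw [dotProduct_mulVec, ← mulVec_transpose, hT, hZx, zero_dotProduct]
  exact dotProduct_self_eq_zero.1 this

/-! ### Strict complementarity and the eigenvalue gap -/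

theorem stmt1 {n k : ℕ} (hk : 0 < k) (hkn : k < n)
    (f : Matrix (Fin n) (Fin n) ℝ → ℝ)
    (grad : Matrix (Fin n) (Fin n) ℝ → Matrix (Fin n) (Fin n) ℝ)
    (β : ℝ) (hβ : 0 < β)
    (hgradSymm : ∀ X : Matrix (Fin n) (Fin n) ℝ, (grad X).IsSymm)
    (hconv : ∀ X Y : Matrix (Fin n) (Fin n) ℝ, X.IsSymm → Y.IsSymm →
      f X + (grad X * (Y - X)).trace ≤ f Y)
    (hsmooth : ∀ X Y : Matrix (Fin n) (Fin n) ℝ, X.IsSymm → Y.IsSymm →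
      frobNorm (grad X - grad Y) ≤ β * frobNorm (X - Y))
    (Xstar : Matrix (Fin n) (Fin n) ℝ)
    (hXstarMem : Xstar ∈ Fantope n k)
    (hXstarOpt : ∀ X ∈ Fantope n k, f Xstar ≤ f X)
    :
    (Xstar.rank = k →
      ∀ (Z1 Z2 : Matrix (Fin n) (Fin n) ℝ) (s : ℝ),
        Z1.PosSemidef → Z2.PosSemidef →
        grad Xstar = Z1 - Z2 + s • (1 : Matrix (Fin n) (Fin n) ℝ) →
        (Z1 * Xstar).trace = 0 → (Z2 * (1 - Xstar)).trace = 0 →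
        (Z1.rank = n - k ∨ Z2.rank = k) →
        0 < eigval (grad Xstar) (n - k) - eigval (grad Xstar) (n - k + 1)) ∧
    (0 < eigval (grad Xstar) (n - k) - eigval (grad Xstar) (n - k + 1) →
      ∀ (Z1 Z2 : Matrix (Fin n) (Fin n) ℝ) (s : ℝ),
        Z1.PosSemidef → Z2.PosSemidef →
        grad Xstar = Z1 - Z2 + s • (1 : Matrix (Fin n) (Fin n) ℝ) →
        (Z1 * Xstar).trace = 0 → (Z2 * (1 - Xstar)).trace = 0 →
        (Z1.rank = n - Xstar.rank ∨ Z2.rank = Xstar.rank)) := by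
  obtain ⟨-, hXpsd, hX1psd, hXtr⟩ := hXstarMem
  set G := grad Xstar with hGdef
  have hG : G.IsHermitian := isHermitian_iff_isSymm.2 (hgradSymm Xstar)
  -- The quadratic form of the gradient, read off from stationarity.
  have hquad : ∀ (Z1 Z2 : Matrix (Fin n) (Fin n) ℝ) (s : ℝ), G = Z1 - Z2 + s • 1 →
      ∀ x : Fin n → ℝ,
        x ⬝ᵥ (G *ᵥ x) = x ⬝ᵥ (Z1 *ᵥ x) - x ⬝ᵥ (Z2 *ᵥ x) + s * (x ⬝ᵥ x) := by
    intro Z1 Z2 s h x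
    rw [h, add_mulVec, sub_mulVec, smul_mulVec, one_mulVec, dotProduct_add, dotProduct_sub,
      dotProduct_smul, smul_eq_mul]
  have hnn : ∀ {Z : Matrix (Fin n) (Fin n) ℝ}, Z.PosSemidef → ∀ x, 0 ≤ x ⬝ᵥ (Z *ᵥ x) := by
    intro Z hZ x
    simpa using hZ.dotProduct_mulVec_nonneg x
  have hpos : ∀ {x : Fin n → ℝ}, x ≠ 0 → 0 < x ⬝ᵥ x := by
    intro x hx
    have h0 : 0 ≤ x ⬝ᵥ x := by simpa using hnn (PosSemidef.one (n := Fin n) (R := ℝ)) x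
    exact lt_of_le_of_ne h0 fun h => hx (dotProduct_self_eq_zero.1 h.symm)
  constructor
  · intro _ Z1 Z2 s hZ1 hZ2 hst hc1 hc2 hrank
    have hZ1X : Z1 * Xstar = 0 := mul_eq_zero_of_trace_mul_eq_zero hZ1 hXpsd hc1
    have hZ2X : Z2 * (1 - Xstar) = 0 := mul_eq_zero_of_trace_mul_eq_zero hZ2 hX1psd hc2
    -- `Z₂ = Z₂ X` and `X Z₁ = 0` give `Z₂ Z₁ = Z₂ X Z₁ = 0`.
    have hZ2X' : Z2 = Z2 * Xstar := by
      rw [Matrix.mul_sub, Matrix.mul_one, sub_eq_zero] at hZ2X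
      exact hZ2X
    have hT1 : Z1ᵀ = Z1 := isHermitian_iff_isSymm.1 hZ1.isHermitian
    have hT2 : Z2ᵀ = Z2 := isHermitian_iff_isSymm.1 hZ2.isHermitian
    have hTX : Xstarᵀ = Xstar := isHermitian_iff_isSymm.1 hXpsd.isHermitian
    have h21 : Z2 * Z1 = 0 := by
      have hXZ1 : Xstar * Z1 = 0 := by
        have := congrArg transpose hZ1X
        simpa [transpose_mul, hT1, hTX] using this
      rw [hZ2X', Matrix.mul_assoc, hXZ1, Matrix.mul_zero]
    have h12 : Z1 * Z2 = 0 := by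
      have := congrArg transpose h21
      simpa [transpose_mul, hT1, hT2] using this
    rcases hrank with hr | hr
    · obtain ⟨x, hx, hx0, hle⟩ := exists_eigval_mul_le hG (j := n - k + 1) (by omega) (by omega)
        (LinearMap.ker Z1.mulVecLin) (by have := finrank_ker_mulVecLin Z1; omega)
      obtain ⟨y, hy, hy0, hge⟩ := exists_le_eigval_mul hG (j := n - k) (by omega) (by omega)
        (LinearMap.range Z1.mulVecLin) hr.ge
      have hZ1x : Z1 *ᵥ x = 0 := hx
      have hZ2y : Z2 *ᵥ y = 0 := by
        obtain ⟨w, rfl⟩ := hy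
        rw [mulVecLin_apply, mulVec_mulVec, h21, zero_mulVec]
      rw [hquad Z1 Z2 s hst, hZ1x, dotProduct_zero] at hle
      rw [hquad Z1 Z2 s hst, hZ2y, dotProduct_zero] at hge
      have h1 : eigval G (n - k + 1) ≤ s :=
        le_of_mul_le_mul_right (by linarith [hnn hZ2 x]) (hpos hx0)
      have h2 : s < eigval G (n - k) :=
        lt_of_mul_lt_mul_right (by linarith [quadForm_pos_of_mem_range hZ1 hy hy0]) (hpos hy0).le
      linarith
    · obtain ⟨x, hx, hx0, hle⟩ := exists_eigval_mul_le hG (j := n - k + 1) (by omega) (by omega)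
        (LinearMap.range Z2.mulVecLin) (lt_of_lt_of_eq (by omega) hr.symm)
      obtain ⟨y, hy, hy0, hge⟩ := exists_le_eigval_mul hG (j := n - k) (by omega) (by omega)
        (LinearMap.ker Z2.mulVecLin) (by have := finrank_ker_mulVecLin Z2; omega)
      have hZ2y : Z2 *ᵥ y = 0 := hy
      have hZ1x : Z1 *ᵥ x = 0 := by
        obtain ⟨w, rfl⟩ := hx
        rw [mulVecLin_apply, mulVec_mulVec, h12, zero_mulVec]
      rw [hquad Z1 Z2 s hst, hZ1x, dotProduct_zero] at hle
      rw [hquad Z1 Z2 s hst, hZ2y, dotProduct_zero] at hge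
      have h1 : eigval G (n - k + 1) < s :=
        lt_of_mul_lt_mul_right (by linarith [quadForm_pos_of_mem_range hZ2 hx hx0]) (hpos hx0).le
      have h2 : s ≤ eigval G (n - k) :=
        le_of_mul_le_mul_right (by linarith [hnn hZ1 y]) (hpos hy0)
      linarith
  · intro hgap Z1 Z2 s hZ1 hZ2 hst hc1 hc2
    have hZ1X : Z1 * Xstar = 0 := mul_eq_zero_of_trace_mul_eq_zero hZ1 hXpsd hc1
    have hZ2X : Z2 * (1 - Xstar) = 0 := mul_eq_zero_of_trace_mul_eq_zero hZ2 hX1psd hc2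
    have hr1 := rank_add_rank_le_card_of_mul_eq_zero hZ1X
    have hr2 := rank_add_rank_le_card_of_mul_eq_zero hZ2X
    rw [Fintype.card_fin] at hr1 hr2
    have hkX : k ≤ Xstar.rank := by
      have := trace_le_rank hXpsd.isHermitian hX1psd
      rw [hXtr] at this
      exact_mod_cast this
    -- Since the two eigenvalues differ, `s` is below the larger or above the smaller one.
    rcases lt_or_ge s (eigval G (n - k)) with hs | hs
    · left
      have hge : n - k ≤ Z1.rank := by
        by_contra! hlt
        obtain ⟨x, hx, hx0, hle⟩ := exists_eigval_mul_le hG (j := n - k) (by omega) (by omega)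
          (LinearMap.ker Z1.mulVecLin) (by have := finrank_ker_mulVecLin Z1; omega)
        have hZ1x : Z1 *ᵥ x = 0 := hx
        rw [hquad Z1 Z2 s hst, hZ1x, dotProduct_zero] at hle
        have h1 : eigval G (n - k) ≤ s :=
          le_of_mul_le_mul_right (by linarith [hnn hZ2 x]) (hpos hx0)
        linarith
      omega
    · right
      have hs' : eigval G (n - k + 1) < s := by linarith
      have hge : k ≤ Z2.rank := by
        by_contra! hlt
        obtain ⟨y, hy, hy0, hge⟩ := exists_le_eigval_mul hG (j := n - k + 1) (by omega) (by omega)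
          (LinearMap.ker Z2.mulVecLin) (by have := finrank_ker_mulVecLin Z2; omega)
        have hZ2y : Z2 *ᵥ y = 0 := hy
        rw [hquad Z1 Z2 s hst, hZ2y, dotProduct_zero] at hge
        have h2 : s ≤ eigval G (n - k + 1) :=
          le_of_mul_le_mul_right (by linarith [hnn hZ1 y]) (hpos hy0)
        linarith
      -- `1 - X` has trace `n - k`, so its rank, at most `n - k`, attains its trace.
      have hX1' : (1 - (1 - Xstar)).PosSemidef := by rwa [sub_sub_cancel]
      have htr : (1 - Xstar).trace = ((n - k : ℕ) : ℝ) := by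
        rw [trace_sub, hXtr, trace_one, Fintype.card_fin, Nat.cast_sub hkn.le]
      have hle : (1 - Xstar).rank ≤ n - k := by omega
      have hge' : n - k ≤ (1 - Xstar).rank := by
        have := trace_le_rank hX1psd.isHermitian hX1'
        rw [htr] at this
        exact_mod_cast this
      have hproj := mul_one_sub_eq_zero hX1psd.isHermitian hX1'
        (by rw [htr]; exact_mod_cast hle)
      rw [sub_sub_cancel] at hproj
      have hr3 := rank_add_rank_le_card_of_mul_eq_zero hproj
      rw [Fintype.card_fin] at hr3
      omega
end

section
/- Suppose X* is an optimal solution of min_{X∈F_{n,k}} f(X) satisfying the eigen-gap assumption with parameter δ > 0, and let G ≥ sup_{X∈F_{n,k}} ‖∇f(X)‖₂. Let {Q_t}_{t≥1} be generated by the gradient orthogonal iteration: Q₁ is an n×k matrix with orthonormal columns, and for each t ≥ 1, Q_{t+1} is an n×k matrix with orthonormal columns for which there exists an upper triangular k×k matrix R_{t+1} with Q_{t+1}R_{t+1} = (Q_tQ_tᵀ − η∇f(Q_tQ_tᵀ))Q_t, where η = 1/(5·max{β, G}). If the initialization satisfies ‖Q₁Q₁ᵀ − X*‖_F ≤ min{1,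 √(δ/2)}·ηδ/(2(1+ηβ)), then for all t ≥ 1: f(Q_tQ_tᵀ) − f(X*) ≤ (f(Q₁Q₁ᵀ) − f(X*))·exp(−δ(t−1)/(40·max{β, G})). -/
/-!
Write `X = Q_t Q_tᵀ`, `R = Q_{t+1} Q_{t+1}ᵀ`, `g = ∇f(X)`, `g* = ∇f(X*)`, and `h = f(X) - f(X*)`.
All estimates are made on projections, never on the factors `Q_t`: the iteration enters only through
`R (1 - ηg) X = (1 - ηg) X`.

The optimal solution is a projection. First-order optimality (`first_order`) says that `X*` minimizes
`⟨g*, ·⟩` over the Fantope, and the eigengap makes the projection onto the bottom `k` eigenvectors of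
`g*` the unique minimizer (`gap_growth`, `eq_proj_of_trace_le`). So `X*` commutes with `g*`, and `g*`
is at most `a` on the range of `X*` and at least `b ≥ a + δ` on its complement.

Contraction (`NearOpt.contraction`). Let `p = ‖X (1 - X*)‖`, `q = ‖X (1 - R)‖` and
`V = (1 - X)(1 - ηg) X`, the off-diagonal block of the step. Expanding `⟨g, X - X*⟩` in blocks
relative to `X`, the diagonal blocks contribute at most `-(3/5) δ p²` because the gap persists near
`X*` (`gap_pairing`), while the off-diagonal ones contribute `2 ⟨X*, V⟩ / η`. Together with convexity
this gives `η h + (3/5) η δ p² ≤ 2 p ‖V‖`, hence `η δ · η h ≲ ‖V‖² ≲ q²` by completing the square.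
On the other hand a step decreases `η h` by at least `(6/5) q²` (`NearOpt.descent`), so
`h_{t+1} ≤ (1 - ηδ/8) h_t`, and `ηδ/8 = δ / (40 max(β, G))`.

Staying near `X*` (`NearOpt.potential`). The estimate above needs `p² ≤ (3/16) (ηδ)²`. The distance
to `X*` itself need not decrease, but the potential `Φ = ⟨(1 - ηg*) X*, 1 - X⟩` does: its decrement
`⟨(1 - ηg*) X*, R - X⟩` has diagonal blocks controlled by the decrease of `f`, and off-diagonal part
`2 ⟨X*, V⟩` up to small errors (`potential_expand`, `cross_term`), and this pairing is nonnegative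
with room to spare by the inequality `η h + (3/5) η δ p² ≤ 2 ⟨X*, V⟩`. Since
`(4/5) p² ≤ Φ ≤ (6/5) p²`, the initial bound on `‖Q_0 Q_0ᵀ - X*‖` keeps all the iterates in the region.
-/

open Matrix

/-! ### The Frobenius norm and orthogonal projections -/

section Frobenius

variable {m : ℕ}

local notation "Mat" m => Matrix (Fin m) (Fin m) ℝ

lemma fro_nonneg (A : Mat m) : 0 ≤ frobNorm A := Real.sqrt_nonneg _

open scoped Matrix.Norms.Frobenius in
lemma fro_eq_norm (A : Mat m) : frobNorm A = ‖A‖ := by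
  rw [Matrix.frobenius_norm_def, frobNorm, Real.sqrt_eq_rpow]
  simp

lemma fro_sq (A : Mat m) : frobNorm A ^ 2 = (Aᵀ * A).trace := by
  unfold frobNorm
  refine (Real.sq_sqrt
    (Finset.sum_nonneg fun i _ => Finset.sum_nonneg fun j _ => sq_nonneg _)).trans ?_
  simp only [Matrix.trace, Matrix.diag_apply, Matrix.mul_apply, Matrix.transpose_apply]
  rw [Finset.sum_comm]
  simp only [sq]

open scoped Matrix.Norms.Frobenius in
lemma fro_mul (A B : Mat m) : frobNorm (A * B) ≤ frobNorm A * frobNorm B := by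
  simp only [fro_eq_norm]; exact Matrix.frobenius_norm_mul A B

open scoped Matrix.Norms.Frobenius in
lemma fro_add (A B : Mat m) : frobNorm (A + B) ≤ frobNorm A + frobNorm B := by
  simp only [fro_eq_norm]; exact norm_add_le A B

open scoped Matrix.Norms.Frobenius in
lemma fro_sub (A B : Mat m) : frobNorm (A - B) ≤ frobNorm A + frobNorm B := by
  simp only [fro_eq_norm]; exact norm_sub_le A B

lemma fro_transpose (A : Mat m) : frobNorm Aᵀ = frobNorm A := by
  rw [frobNorm, frobNorm, Finset.sum_comm]; rfl

lemma fro_smul {c : ℝ} (hc : 0 ≤ c) (A : Mat m) : frobNorm (c • A) = c * frobNorm A := by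
  have : frobNorm (c • A) ^ 2 = (c * frobNorm A) ^ 2 := by
    rw [mul_pow, fro_sq, fro_sq]; simp; ring
  exact (pow_left_inj₀ (fro_nonneg _) (mul_nonneg hc (fro_nonneg _)) two_ne_zero).1 this

lemma fro_neg (A : Mat m) : frobNorm (-A) = frobNorm A := by simp [frobNorm]

/-- Cauchy–Schwarz for the trace pairing. -/
lemma abs_trace_mul_le (A B : Mat m) : |(A * B).trace| ≤ frobNorm A * frobNorm B := by
  rw [← fro_transpose A]
  have h : ∀ A B : Mat m, (A * B).trace ≤ frobNorm Aᵀ * frobNorm B := by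
    intro A B
    have := Real.sum_mul_le_sqrt_mul_sqrt (Finset.univ : Finset (Fin m × Fin m))
      (fun p => Aᵀ p.1 p.2) (fun p => B p.1 p.2)
    simp only [Fintype.sum_prod_type] at this
    refine le_trans (le_of_eq ?_) this
    simp only [Matrix.trace, Matrix.diag_apply, Matrix.mul_apply, Matrix.transpose_apply]
    rw [Finset.sum_comm]
  rw [abs_le]
  refine ⟨?_, h A B⟩
  have := h (-A) B
  rw [Matrix.transpose_neg, fro_neg] at this
  simp at this
  linarith

/-- Orthogonal projection matrices. -/
def IsProj (X : Mat m) : Prop := Xᵀ = X ∧ X * X = X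

lemma IsProj.compl {X : Mat m} (h : IsProj X) : IsProj (1 - X) :=
  ⟨by simp [h.1], by simp [mul_sub, sub_mul, h.2]⟩

lemma IsProj.mul_cancel {X : Mat m} (h : IsProj X) (Z : Mat m) : X * (X * Z) = X * Z := by
  rw [← Matrix.mul_assoc, h.2]

lemma IsProj.fro_mul_le {X : Mat m} (h : IsProj X) (Z : Mat m) :
    frobNorm (X * Z) ≤ frobNorm Z := by
  have h1 := fro_sq (X * Z)
  have h2 := fro_sq ((1 - X) * Z)
  have h3 := fro_sq Z
  have h4 := sq_nonneg (frobNorm ((1 - X) * Z))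
  simp only [Matrix.transpose_mul, h.1, h.compl.1, Matrix.mul_assoc, h.mul_cancel,
    h.compl.mul_cancel] at h1 h2
  rw [h2, Matrix.sub_mul, Matrix.mul_sub, Matrix.one_mul, Matrix.trace_sub] at h4
  exact (pow_le_pow_iff_left₀ (fro_nonneg _) (fro_nonneg _) two_ne_zero).1 (by linarith)

lemma IsProj.fro_mul_le' {X : Mat m} (h : IsProj X) (Z : Mat m) :
    frobNorm (Z * X) ≤ frobNorm Z := by
  rw [← fro_transpose, Matrix.transpose_mul, h.1, ← fro_transpose Z]
  exact h.fro_mul_le _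

lemma IsProj.fro_sq_compl {X Y : Mat m} (hX : IsProj X) (hY : IsProj Y) :
    frobNorm (X * (1 - Y)) ^ 2 = X.trace - (X * Y).trace := by
  rw [fro_sq, Matrix.transpose_mul, hX.1, hY.compl.1, Matrix.mul_assoc, hX.mul_cancel,
    Matrix.trace_mul_comm, Matrix.mul_assoc, hY.compl.2, Matrix.mul_sub, Matrix.mul_one,
    Matrix.trace_sub]

lemma IsProj.fro_sq_compl' {X Y : Mat m} (hX : IsProj X) (hY : IsProj Y) :
    frobNorm ((1 - Y) * X) ^ 2 = X.trace - (X * Y).trace := by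
  rw [← hX.fro_sq_compl hY, ← fro_transpose, Matrix.transpose_mul, hX.1, hY.compl.1]

lemma IsProj.fro_sq_sub {X Y : Mat m} (hX : IsProj X) (hY : IsProj Y) :
    frobNorm (X - Y) ^ 2 = X.trace + Y.trace - 2 * (X * Y).trace := by
  rw [fro_sq, Matrix.transpose_sub, hX.1, hY.1, Matrix.sub_mul, Matrix.mul_sub, Matrix.mul_sub,
    hX.2, hY.2]
  simp only [Matrix.trace_sub]
  rw [Matrix.trace_mul_comm Y X]
  ring

/-- `|⟨g, Z Zᵀ⟩| ≤ G ‖Z‖²` when `G` bounds the operator norm of `g`. -/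
lemma abs_trace_gram_le {g : Mat m} {G : ℝ} (hg : ∀ Z : Mat m, frobNorm (g * Z) ≤ G * frobNorm Z)
    (Z : Mat m) : |(g * (Z * Zᵀ)).trace| ≤ G * frobNorm Z ^ 2 := by
  rw [← Matrix.mul_assoc]
  refine (abs_trace_mul_le _ _).trans ?_
  rw [fro_transpose]
  nlinarith [hg Z, fro_nonneg Z]

end Frobenius

/-! ### Block expansions for a pair of projections -/

section Core

variable {m : ℕ}

local notation "Mat" m => Matrix (Fin m) (Fin m) ℝ

/-- Since `R` contains the range of `(1 - ηg) X`, the linear term of the step is purely second order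
in `R - X`. -/
lemma trace_step_eq {X R g : Mat m} {η : ℝ} (hX : IsProj X) (hR : IsProj R) (hg : gᵀ = g)
    (htr : X.trace = R.trace)
    (hstep : R * ((1 - η • g) * X) = (1 - η • g) * X) :
    η * (g * (R - X)).trace = -((1 - η • g) * ((R - X) * (R - X))).trace := by
  set M := 1 - η • g with hM
  have hMt : Mᵀ = M := by simp [hM, hg]
  have h1 : (M * (X * R)).trace = (M * X).trace := by
    rw [← Matrix.mul_assoc, Matrix.trace_mul_comm, hstep]
  have h2 : (M * (R * X)).trace = (M * X).trace := by
    rw [← h1, ← Matrix.trace_transpose, Matrix.transpose_mul, Matrix.transpose_mul, hX.1, hR.1, hMt,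
      Matrix.trace_mul_comm]
  have h3 : η * (g * (R - X)).trace = (R - X).trace - (M * (R - X)).trace := by
    simp only [hM, Matrix.sub_mul, Matrix.one_mul, Matrix.smul_mul, Matrix.trace_sub,
      Matrix.trace_smul, smul_eq_mul]
    ring
  rw [h3]
  simp only [Matrix.mul_sub, Matrix.sub_mul, Matrix.trace_sub, hX.2, hR.2, h1, h2, htr]
  ring

lemma abs_trace_mul_gram_le {g Z : Mat m} {c : ℝ} (hg : frobNorm g ≤ c) :
    |(g * (Z * Zᵀ)).trace| ≤ c * frobNorm Z ^ 2 := by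
  refine (abs_trace_mul_le _ _).trans ?_
  have h1 := fro_mul Z Zᵀ
  rw [fro_transpose, ← sq] at h1
  exact mul_le_mul hg h1 (fro_nonneg _) ((fro_nonneg _).trans hg)

lemma trace_gram_proj {P g Z : Mat m} (hP : IsProj P) (hPc : g * P = P * g) :
    (g * ((P * Z) * (P * Z)ᵀ)).trace = (P * (g * (Z * Zᵀ))).trace := by
  rw [Matrix.transpose_mul, hP.1]
  calc (g * ((P * Z) * (Zᵀ * P))).trace = ((g * P * (Z * Zᵀ)) * P).trace := by
        simp only [Matrix.mul_assoc]
    _ = (P * (g * P * (Z * Zᵀ))).trace := Matrix.trace_mul_comm _ _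
    _ = _ := by rw [hPc]; simp only [Matrix.mul_assoc, hP.mul_cancel]

/-- A matrix that commutes with the projection `Y` is block diagonal, so its pairing with a Gram
matrix splits along `Y` and `1 - Y`. -/
lemma trace_gram_split {Y g Z : Mat m} (hY : IsProj Y) (hc : g * Y = Y * g) :
    (g * (Z * Zᵀ)).trace = (g * ((Y * Z) * (Y * Z)ᵀ)).trace
      + (g * (((1 - Y) * Z) * ((1 - Y) * Z)ᵀ)).trace := by
  have hc' : g * (1 - Y) = (1 - Y) * g := by
    rw [Matrix.mul_sub, Matrix.sub_mul, hc, Matrix.mul_one, Matrix.one_mul]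
  rw [trace_gram_proj hY hc, trace_gram_proj hY.compl hc', Matrix.sub_mul, Matrix.one_mul, Matrix.trace_sub]
  ring

lemma fro_sq_split {Y : Mat m} (hY : IsProj Y) (Z : Mat m) :
    frobNorm Z ^ 2 = frobNorm (Y * Z) ^ 2 + frobNorm ((1 - Y) * Z) ^ 2 := by
  simp only [fro_sq, Matrix.transpose_mul, hY.1, hY.compl.1, Matrix.mul_assoc, hY.mul_cancel,
    hY.compl.mul_cancel]
  simp only [Matrix.sub_mul, Matrix.mul_sub, Matrix.one_mul, Matrix.trace_sub]
  ring

/-- If `gs` commutes with `Xs` and is at most `a` on `range Xs`, its compression to `range X`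
exceeds `a` only to second order in the angle between `X` and `Xs`. -/
lemma trace_upper {X Xs gs : Mat m} {G a : ℝ} (hX : IsProj X) (hXs : IsProj Xs)
    (hc : gs * Xs = Xs * gs)
    (hop : ∀ Z : Mat m, frobNorm (gs * Z) ≤ G * frobNorm Z)
    (ha : a ≤ G)
    (hlow : ∀ Z : Mat m, Xs * Z = Z → (gs * (Z * Zᵀ)).trace ≤ a * frobNorm Z ^ 2) :
    (gs * ((X * (1 - Xs)) * (X * (1 - Xs))ᵀ)).trace ≤
      a * frobNorm (X * (1 - Xs)) ^ 2 + (G - a) * (frobNorm (X * (1 - Xs)) ^ 2) ^ 2 := by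
  set Z := X * (1 - Xs) with hZ
  have h1 := hlow (Xs * Z) (hXs.mul_cancel Z)
  have h2 := (abs_le.1 (abs_trace_gram_le hop ((1 - Xs) * Z))).2
  have h3 := fro_sq_split hXs Z
  have h4 : frobNorm ((1 - Xs) * Z) ≤ frobNorm Z ^ 2 := by
    have : (1 - Xs) * Z = Zᵀ * Z := by
      rw [hZ, Matrix.transpose_mul, hX.1, hXs.compl.1]
      simp only [Matrix.mul_assoc, hX.mul_cancel]
    rw [this, sq, ← fro_transpose Z]
    conv_rhs => rw [fro_transpose, ← fro_transpose Z]
    refine (fro_mul _ _).trans (le_of_eq ?_)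
    simp only [fro_transpose]
  have h5 : frobNorm ((1 - Xs) * Z) ^ 2 ≤ (frobNorm Z ^ 2) ^ 2 :=
    pow_le_pow_left₀ (fro_nonneg _) h4 2
  have h6 : a * frobNorm Z ^ 2
      = a * frobNorm (Xs * Z) ^ 2 + a * frobNorm ((1 - Xs) * Z) ^ 2 := by rw [h3]; ring
  have h7 := mul_le_mul_of_nonneg_left h5 (sub_nonneg.2 ha)
  rw [trace_gram_split hXs hc]
  linarith

/-- The spectral gap at `Xs` survives, up to perturbation terms, at a nearby projection `X`. -/
lemma gap_pairing {X Xs g gs : Mat m} {G a b β δ : ℝ} (hX : IsProj X) (hXs : IsProj Xs)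
    (htr : X.trace = Xs.trace)
    (hc : gs * Xs = Xs * gs)
    (hop : ∀ Z : Mat m, frobNorm (gs * Z) ≤ G * frobNorm Z)
    (ha : |a| ≤ G) (hb : |b| ≤ G) (hab : δ ≤ b - a)
    (hlow : ∀ Z : Mat m, Xs * Z = Z → (gs * (Z * Zᵀ)).trace ≤ a * frobNorm Z ^ 2)
    (hup : ∀ Z : Mat m, (1 - Xs) * Z = Z → b * frobNorm Z ^ 2 ≤ (gs * (Z * Zᵀ)).trace)
    (hgd : frobNorm (g - gs) ≤ β * frobNorm (X - Xs)) :
    (g * ((X * (1 - Xs)) * (X * (1 - Xs))ᵀ)).trace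
      - (g * (((1 - X) * Xs) * ((1 - X) * Xs)ᵀ)).trace ≤
      -(δ - 2 * β * frobNorm (X - Xs) - 4 * G * frobNorm (X * (1 - Xs)) ^ 2)
        * frobNorm (X * (1 - Xs)) ^ 2 := by
  have hτ : frobNorm ((1 - X) * Xs) ^ 2 = frobNorm (X * (1 - Xs)) ^ 2 := by
    rw [hX.fro_sq_compl hXs, hXs.fro_sq_compl' hX, htr, Matrix.trace_mul_comm]
  have h1 := trace_upper hX hXs hc hop (abs_le.1 ha).2 hlow
  have h2 := trace_upper (X := 1 - X) (Xs := 1 - Xs) (gs := -gs) (G := G) (a := -b)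
    hX.compl hXs.compl (by simp [Matrix.mul_sub, Matrix.sub_mul, hc])
    (fun Z => by rw [Matrix.neg_mul, fro_neg]; exact hop Z)
    (by linarith [(abs_le.1 hb).1])
    (fun Z hZ => by
      have := hup Z hZ
      rw [Matrix.neg_mul, Matrix.trace_neg]; linarith)
  rw [sub_sub_cancel, hτ, Matrix.neg_mul, Matrix.trace_neg] at h2
  have h3 := (abs_le.1 (abs_trace_mul_gram_le (Z := X * (1 - Xs)) hgd)).2
  have h4 := (abs_le.1 (abs_trace_mul_gram_le (Z := (1 - X) * Xs) hgd)).1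
  rw [hτ] at h4
  rw [Matrix.sub_mul, Matrix.trace_sub] at h3 h4
  set τ := frobNorm (X * (1 - Xs)) ^ 2 with hτd
  have hτ0 : 0 ≤ τ := sq_nonneg _
  have ha' := abs_le.1 ha
  have hb' := abs_le.1 hb
  nlinarith [mul_le_mul_of_nonneg_right hab hτ0, sq_nonneg τ,
    mul_le_mul_of_nonneg_right ha'.1 (sq_nonneg τ), mul_le_mul_of_nonneg_right hb'.2 (sq_nonneg τ)]

/-- Block expansion of `⟨g, X - Xs⟩` relative to `X`. -/
lemma trace_sub_expand {X Xs g : Mat m} (hX : IsProj X) (hXs : IsProj Xs) (hg : gᵀ = g) (η : ℝ) :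
    η * (g * (X - Xs)).trace = η * ((g * ((X * (1 - Xs)) * (X * (1 - Xs))ᵀ)).trace
      - (g * (((1 - X) * Xs) * ((1 - X) * Xs)ᵀ)).trace)
      + 2 * (Xs * ((1 - X) * ((1 - η • g) * X))).trace := by
  have e1 : (Xs * ((1 - X) * ((1 - η • g) * X))).trace = -(η * (g * (X * Xs * (1 - X))).trace) := by
    have : (1 - X) * ((1 - η • g) * X) = -(η • ((1 - X) * (g * X))) := by
      rw [Matrix.sub_mul 1 (η • g), Matrix.one_mul, Matrix.mul_sub]
      rw [show (1 - X) * X = 0 by rw [Matrix.sub_mul, hX.2, Matrix.one_mul, sub_self]]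
      simp
    rw [this]
    simp only [Matrix.mul_neg, Matrix.mul_smul, Matrix.trace_neg, Matrix.trace_smul, smul_eq_mul]
    rw [← Matrix.trace_mul_comm]
    have := Matrix.trace_mul_comm (Xs * (1 - X)) (g * X)
    simp only [Matrix.mul_assoc] at this ⊢
    rw [Matrix.trace_mul_comm]
    simp only [Matrix.mul_assoc]
  have e2 : (g * (X * Xs * (1 - X))).trace = (g * ((1 - X) * Xs * X)).trace := by
    rw [← Matrix.trace_transpose]
    simp only [Matrix.transpose_mul, hX.1, hXs.1, hX.compl.1, hg]
    rw [Matrix.trace_mul_comm, Matrix.mul_assoc]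
  have e3 : X - Xs = (X * (1 - Xs)) * (X * (1 - Xs))ᵀ - ((1 - X) * Xs) * ((1 - X) * Xs)ᵀ
      - X * Xs * (1 - X) - (1 - X) * Xs * X := by
    simp only [Matrix.transpose_mul, hX.1, hXs.1, hX.compl.1, hXs.compl.1]
    simp only [Matrix.mul_sub, Matrix.sub_mul, Matrix.mul_one, Matrix.one_mul, Matrix.mul_assoc,
      hX.2, hXs.2, hXs.mul_cancel]
    abel
  rw [e1]
  have e4 : (g * (X - Xs)).trace = _ := congrArg (fun Z => (g * Z).trace) e3
  rw [e4]
  simp only [Matrix.mul_sub g, Matrix.trace_sub]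
  simp only [← Matrix.mul_assoc] at e2 ⊢
  rw [← e2]
  ring

/-- Pairing of the potential matrix `(1 - η gs) Xs` with the step `R - X`. -/
lemma potential_expand {X R Xs gs : Mat m} {η : ℝ} (hX : IsProj X) (hR : IsProj R)
    (hXs : IsProj Xs) (hgs : gsᵀ = gs) (hc : gs * Xs = Xs * gs) :
    ((1 - η • gs) * Xs * (R - X)).trace =
      -((1 - η • gs) * Xs * ((X * (1 - R)) * (X * (1 - R))ᵀ)).trace
      + ((1 - η • gs) * Xs * (((1 - X) * R) * ((1 - X) * R)ᵀ)).trace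
      + 2 * ((1 - η • gs) * Xs * ((1 - X) * R * X)).trace := by
  set P := (1 - η • gs) * Xs with hP
  have hPt : Pᵀ = P := by
    simp [hP, hXs.1, hgs, Matrix.sub_mul, hc]
  clear_value P
  have e2 : (P * (X * R * (1 - X))).trace = (P * ((1 - X) * R * X)).trace := by
    rw [← Matrix.trace_transpose]
    simp only [Matrix.transpose_mul, hX.1, hR.1, hX.compl.1, hPt]
    rw [Matrix.trace_mul_comm, Matrix.mul_assoc]
  have e3 : R - X = -((X * (1 - R)) * (X * (1 - R))ᵀ) + ((1 - X) * R) * ((1 - X) * R)ᵀ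
      + X * R * (1 - X) + (1 - X) * R * X := by
    simp only [Matrix.transpose_mul, hX.1, hR.1, hX.compl.1, hR.compl.1]
    simp only [Matrix.mul_sub, Matrix.sub_mul, Matrix.mul_one, Matrix.one_mul, Matrix.mul_assoc,
      hX.2, hR.2, hR.mul_cancel]
    abel
  have e4 : (P * (R - X)).trace = _ := congrArg (fun Z => (P * Z).trace) e3
  rw [e4]
  simp only [Matrix.mul_add P, Matrix.trace_add, Matrix.mul_neg, Matrix.trace_neg]
  rw [e2]
  ring

/-- The cross term of `potential_expand`, with the error terms separated. -/
lemma cross_term {X R Xs g gs : Mat m} {η : ℝ} (hX : IsProj X) (hR : IsProj R)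
    (hXs : IsProj Xs)
    (hstep : R * ((1 - η • g) * X) = (1 - η • g) * X) :
    ((1 - η • gs) * Xs * ((1 - X) * R * X)).trace =
      (Xs * ((1 - X) * ((1 - η • g) * X))).trace
      - ((X * Xs * (1 - X) * R) * (R * ((1 - X) * ((1 - η • g) * X)))).trace
      + η * (((g - gs) * (Xs * (1 - X))) * ((1 - X) * R * X)).trace
      + η * ((g * ((X - Xs) * (Xs * (1 - X)))) * ((1 - X) * R * X)).trace := by
  set M := 1 - η • g with hM
  set K := (1 - X) * R * X with hK
  have hXc : X * (1 - X) = 0 := by rw [Matrix.mul_sub, hX.2, Matrix.mul_one, sub_self]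
  have hcX : (1 - X) * X = 0 := by rw [Matrix.sub_mul, hX.2, Matrix.one_mul, sub_self]
  have hKc : (1 - X) * K = K := by rw [hK]; simp only [Matrix.mul_assoc, hX.compl.mul_cancel]
  have hKX : K * X = K := by rw [hK]; simp only [Matrix.mul_assoc, hX.2]
  -- `K M X = V - (1 - X) R V` with `V = (1 - X) M X`.
  have h1 : K * (M * X) = (1 - X) * (M * X) - (1 - X) * (R * ((1 - X) * (M * X))) := by
    have : R * ((1 - X) * (M * X)) = M * X - R * (X * (M * X)) := by
      rw [Matrix.sub_mul, Matrix.one_mul, Matrix.mul_sub, hstep]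
    rw [this, Matrix.mul_sub, sub_sub_cancel, hK]
    simp only [Matrix.mul_assoc]
  have h2 : X * ((1 - η • gs) * Xs) = X * M * X * Xs
      + η • (X * ((g - gs) * Xs + g * ((X - Xs) * Xs))) := by
    simp only [hM, Matrix.mul_sub, Matrix.sub_mul, Matrix.mul_add, Matrix.mul_one, Matrix.one_mul,
      Matrix.mul_smul, Matrix.smul_mul, smul_sub, smul_add, Matrix.mul_assoc, hX.2, hXs.2]
    abel
  have h3 : ((1 - η • gs) * Xs * K).trace = (Xs * (K * (M * X))).trace
      + η * (((g - gs) * Xs + g * ((X - Xs) * Xs)) * K).trace := by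
    calc ((1 - η • gs) * Xs * K).trace = ((1 - η • gs) * Xs * (K * X)).trace := by rw [hKX]
      _ = (X * ((1 - η • gs) * Xs) * K).trace := by
          rw [← Matrix.mul_assoc, Matrix.trace_mul_comm, Matrix.mul_assoc, Matrix.mul_assoc,
            Matrix.mul_assoc]
      _ = (X * M * X * Xs * K).trace
          + η * (X * (((g - gs) * Xs + g * ((X - Xs) * Xs)) * K)).trace := by
          rw [h2, Matrix.add_mul, Matrix.trace_add, Matrix.smul_mul, Matrix.trace_smul,
            smul_eq_mul, Matrix.mul_assoc X (_ + _) K]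
      _ = _ := by
          congr 1
          · calc (X * M * X * Xs * K).trace = ((X * M * X) * (Xs * K)).trace := by
                  rw [Matrix.mul_assoc]
              _ = ((Xs * K) * (X * M * X)).trace := Matrix.trace_mul_comm _ _
              _ = (Xs * ((K * X) * (M * X))).trace := by simp only [Matrix.mul_assoc]
              _ = _ := by rw [hKX]
          · congr 1
            rw [Matrix.trace_mul_comm, Matrix.mul_assoc, hKX]
  have h4 : (Xs * ((1 - X) * (R * ((1 - X) * (M * X))))).trace
      = ((X * Xs * (1 - X) * R) * (R * ((1 - X) * (M * X)))).trace := by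
    calc (Xs * ((1 - X) * (R * ((1 - X) * (M * X))))).trace
        = ((Xs * ((1 - X) * (R * ((1 - X) * M)))) * X).trace := by simp only [Matrix.mul_assoc]
      _ = ((X * (Xs * ((1 - X) * (R * ((1 - X) * M))))) * X).trace := by
          rw [Matrix.trace_mul_comm, Matrix.trace_mul_comm _ X, hX.mul_cancel]
      _ = _ := by simp only [Matrix.mul_assoc, hR.mul_cancel]
  rw [h3, h1, Matrix.mul_sub, Matrix.trace_sub, h4, Matrix.add_mul, Matrix.trace_add, mul_add,
    ← add_assoc]
  simp only [Matrix.mul_assoc, hKc]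

/-! ### One step of the iteration near the optimum -/

/-- The data of one iteration near the optimum: `R` is the successor of the projection `X`, the
optimum `Xs` is a projection, `g` and `gs` are the gradients at `X` and `Xs`, and `G` bounds their
operator norms. The field `gap` says that `gs`, which commutes with `Xs`, is at most `a` on the range
of `Xs` and at least `b ≥ a + δ` on its complement. The constant in `hregion` is what the potential
argument preserves. -/
structure NearOpt (X R Xs g gs : Mat m) (η β G δ : ℝ) : Prop where
  hX : IsProj X
  hR : IsProj R
  hXs : IsProj Xs
  htX : X.trace = Xs.trace
  htR : R.trace = Xs.trace
  hg : gᵀ = g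
  hgs : gsᵀ = gs
  hc : gs * Xs = Xs * gs
  hop : ∀ Z : Mat m, frobNorm (g * Z) ≤ G * frobNorm Z
  hops : ∀ Z : Mat m, frobNorm (gs * Z) ≤ G * frobNorm Z
  hη : 0 < η
  hδ : 0 < δ
  hG : 0 ≤ G
  hβ : 0 ≤ β
  hηG : η * G ≤ 1 / 5
  hηβ : η * β ≤ 1 / 5
  gap : ∃ a b : ℝ, |a| ≤ G ∧ |b| ≤ G ∧ δ ≤ b - a ∧
    (∀ Z : Mat m, Xs * Z = Z → (gs * (Z * Zᵀ)).trace ≤ a * frobNorm Z ^ 2) ∧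
    (∀ Z : Mat m, (1 - Xs) * Z = Z → b * frobNorm Z ^ 2 ≤ (gs * (Z * Zᵀ)).trace)
  hgd : frobNorm (g - gs) ≤ β * frobNorm (X - Xs)
  hstep : R * ((1 - η • g) * X) = (1 - η • g) * X
  hregion : frobNorm (X * (1 - Xs)) ^ 2 ≤ 3 / 16 * (η * δ) ^ 2

lemma fro_sq' (A : Mat m) : frobNorm A ^ 2 = (A * Aᵀ).trace := by
  rw [fro_sq, Matrix.trace_mul_comm]

lemma trace_one_sub_smul (η : ℝ) (g Z : Mat m) :
    ((1 - η • g) * (Z * Zᵀ)).trace = frobNorm Z ^ 2 - η * (g * (Z * Zᵀ)).trace := by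
  rw [Matrix.sub_mul, Matrix.one_mul, Matrix.smul_mul, Matrix.trace_sub, Matrix.trace_smul,
    smul_eq_mul, fro_sq']

/-- `1 - η g` lies between `4/5` and `6/5` as a quadratic form. -/
lemma one_sub_smul_bounds {η G : ℝ} {g : Mat m} (hη : 0 < η) (hηG : η * G ≤ 1 / 5)
    (hop : ∀ Z : Mat m, frobNorm (g * Z) ≤ G * frobNorm Z) (Z : Mat m) :
    4 / 5 * frobNorm Z ^ 2 ≤ ((1 - η • g) * (Z * Zᵀ)).trace ∧
    ((1 - η • g) * (Z * Zᵀ)).trace ≤ 6 / 5 * frobNorm Z ^ 2 := by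
  have h := abs_le.1 (abs_trace_gram_le hop Z)
  have h1 := mul_le_mul_of_nonneg_left h.1 hη.le
  have h2 := mul_le_mul_of_nonneg_left h.2 hη.le
  have h3 := mul_le_mul_of_nonneg_right hηG (sq_nonneg (frobNorm Z))
  rw [trace_one_sub_smul]
  constructor <;> linarith

lemma fro_compl_eq {X Y : Mat m} (hX : IsProj X) (hY : IsProj Y) (htr : X.trace = Y.trace) :
    frobNorm ((1 - X) * Y) = frobNorm (X * (1 - Y)) := by
  have : frobNorm ((1 - X) * Y) ^ 2 = frobNorm (X * (1 - Y)) ^ 2 := by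
    rw [hX.fro_sq_compl hY, hY.fro_sq_compl' hX, htr, Matrix.trace_mul_comm]
  exact (pow_left_inj₀ (fro_nonneg _) (fro_nonneg _) two_ne_zero).1 this

lemma fro_sub_sq_eq {X Y : Mat m} (hX : IsProj X) (hY : IsProj Y) (htr : X.trace = Y.trace) :
    frobNorm (X - Y) ^ 2 = 2 * frobNorm (X * (1 - Y)) ^ 2 := by
  rw [hX.fro_sq_sub hY, hX.fro_sq_compl hY, htr]; ring

namespace NearOpt

variable {X R Xs g gs : Mat m} {η β G δ : ℝ}

lemma delta_le (D : NearOpt X R Xs g gs η β G δ) : η * δ ≤ 2 / 5 := by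
  obtain ⟨a, b, ha, hb, hab, -, -⟩ := D.gap
  have := (abs_le.1 ha).1
  have := (abs_le.1 hb).2
  nlinarith [D.hη, D.hηG]

lemma fro_sub_le (D : NearOpt X R Xs g gs η β G δ) : frobNorm (X - Xs) ≤ 31 / 50 * (η * δ) := by
  have h1 := fro_sub_sq_eq D.hX D.hXs D.htX
  have h2 := D.hregion
  have h3 := mul_pos D.hη D.hδ
  refine (pow_le_pow_iff_left₀ (fro_nonneg _) (by positivity) two_ne_zero).1 ?_
  nlinarith [sq_nonneg (η * δ)]

/-- Convexity and the persisting gap bound the objective gap, plus a multiple of the squared distance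
to `Xs`, by the pairing of `Xs` with the off-diagonal block of the step. -/
lemma gap_bound (D : NearOpt X R Xs g gs η β G δ) {h : ℝ} (hh : h ≤ (g * (X - Xs)).trace) :
    η * h + 3 / 5 * (η * δ) * frobNorm (X * (1 - Xs)) ^ 2 ≤
      2 * (Xs * ((1 - X) * ((1 - η • g) * X))).trace := by
  obtain ⟨a, b, ha, hb, hab, hlow, hup⟩ := D.gap
  have h1 := gap_pairing D.hX D.hXs D.htX D.hc D.hops ha hb hab hlow hup D.hgd
  have h2 := trace_sub_expand D.hX D.hXs D.hg η
  have h3 := mul_le_mul_of_nonneg_left hh D.hη.le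
  have h4 := D.fro_sub_le
  have h5 := D.hregion
  have h6 := D.delta_le
  have hp := mul_pos D.hη D.hδ
  have hδ := D.hδ
  -- the perturbed gap is still at least `3/5 δ`
  have h7 : 3 / 5 * δ ≤
      δ - 2 * β * frobNorm (X - Xs) - 4 * G * frobNorm (X * (1 - Xs)) ^ 2 := by
    have e1 : β * frobNorm (X - Xs) ≤ 31 / 250 * δ := by
      calc β * frobNorm (X - Xs) ≤ β * (31 / 50 * (η * δ)) := mul_le_mul_of_nonneg_left h4 D.hβ
        _ = 31 / 50 * δ * (η * β) := by ring
        _ ≤ 31 / 50 * δ * (1 / 5) := mul_le_mul_of_nonneg_left D.hηβ (by positivity)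
        _ = _ := by ring
    have e2 : G * frobNorm (X * (1 - Xs)) ^ 2 ≤ 3 / 200 * δ := by
      calc G * frobNorm (X * (1 - Xs)) ^ 2 ≤ G * (3 / 16 * (η * δ) ^ 2) :=
            mul_le_mul_of_nonneg_left h5 D.hG
        _ = 3 / 16 * δ * ((η * G) * (η * δ)) := by ring
        _ ≤ 3 / 16 * δ * (1 / 5 * (2 / 5)) := by
            refine mul_le_mul_of_nonneg_left ?_ (by positivity)
            exact mul_le_mul D.hηG h6 hp.le (by norm_num)
        _ = _ := by ring
    linarith
  have h8 := mul_le_mul_of_nonneg_right h7 (sq_nonneg (frobNorm (X * (1 - Xs))))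
  have h8' : (g * ((X * (1 - Xs)) * (X * (1 - Xs))ᵀ)).trace
      - (g * (((1 - X) * Xs) * ((1 - X) * Xs)ᵀ)).trace ≤
      -(3 / 5 * δ * frobNorm (X * (1 - Xs)) ^ 2) :=
    h1.trans (by rw [neg_mul]; exact neg_le_neg h8)
  have h9 := mul_le_mul_of_nonneg_left h8' D.hη.le
  linarith

/-- Sufficient decrease: a step lowers `η h` by at least `(4/5 + 2/5) ‖X (1 - R)‖²`, the first term
being kept as a quadratic form in `1 - η g`. -/
lemma descent (D : NearOpt X R Xs g gs η β G δ) {h h' : ℝ}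
    (hh : h' ≤ h + (g * (R - X)).trace + β * frobNorm (R - X) ^ 2) :
    ((1 - η • g) * ((X * (1 - R)) * (X * (1 - R))ᵀ)).trace
      + 2 / 5 * frobNorm (X * (1 - R)) ^ 2 ≤ η * (h - h') := by
  have htr : X.trace = R.trace := D.htX.trans D.htR.symm
  have h1 := trace_step_eq D.hX D.hR D.hg htr D.hstep
  have h2 := fro_sub_sq_eq D.hR D.hX htr.symm
  have h2' : frobNorm (R * (1 - X)) = frobNorm (X * (1 - R)) := by
    rw [← fro_transpose, Matrix.transpose_mul, D.hR.1, D.hX.compl.1]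
    exact fro_compl_eq D.hX D.hR htr
  have h3 := (one_sub_smul_bounds D.hη D.hηG D.hop ((1 - X) * R)).1
  rw [fro_compl_eq D.hX D.hR htr] at h3
  have h4 : (R - X) * (R - X) = (X * (1 - R)) * (X * (1 - R))ᵀ + ((1 - X) * R) * ((1 - X) * R)ᵀ := by
    simp only [Matrix.transpose_mul, D.hX.1, D.hR.1, D.hX.compl.1, D.hR.compl.1]
    simp only [Matrix.mul_sub, Matrix.sub_mul, Matrix.mul_one, Matrix.one_mul, Matrix.mul_assoc,
      D.hX.2, D.hR.2, D.hR.mul_cancel]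
    abel
  rw [h4, Matrix.mul_add, Matrix.trace_add] at h1
  have h5 := mul_le_mul_of_nonneg_left hh D.hη.le
  rw [h2, h2'] at h5
  have h6 := mul_le_mul_of_nonneg_right D.hηβ (sq_nonneg (frobNorm (X * (1 - R))))
  linarith

lemma fro_RV_le (D : NearOpt X R Xs g gs η β G δ) :
    frobNorm (R * ((1 - X) * ((1 - η • g) * X))) ≤ 1 / 5 * frobNorm (X * (1 - R)) := by
  have hq : frobNorm (R * (1 - X)) = frobNorm (X * (1 - R)) := by
    rw [← fro_transpose, Matrix.transpose_mul, D.hR.1, D.hX.compl.1]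
    exact fro_compl_eq D.hX D.hR (D.htX.trans D.htR.symm)
  have hcX : (1 - X) * X = 0 := by rw [Matrix.sub_mul, D.hX.2, Matrix.one_mul, sub_self]
  have e : R * ((1 - X) * ((1 - η • g) * X)) = -(η • (((g * (R * (1 - X))ᵀ)ᵀ) * X)) := by
    rw [Matrix.sub_mul 1 (η • g), Matrix.one_mul, Matrix.mul_sub (1 - X), hcX]
    simp only [Matrix.transpose_mul, D.hR.1, D.hX.compl.1, D.hg, zero_sub, Matrix.mul_neg,
      Matrix.mul_smul, Matrix.smul_mul, Matrix.mul_assoc]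
  rw [e, fro_neg, fro_smul D.hη.le]
  have h1 := D.hX.fro_mul_le' ((g * (R * (1 - X))ᵀ)ᵀ)
  rw [fro_transpose] at h1
  have h2 := D.hop ((R * (1 - X))ᵀ)
  rw [fro_transpose, hq] at h2
  have h3 := mul_le_mul_of_nonneg_left (h1.trans h2) D.hη.le
  have h4 := mul_le_mul_of_nonneg_right D.hηG (fro_nonneg (X * (1 - R)))
  linarith

lemma fro_V_le (D : NearOpt X R Xs g gs η β G δ) :
    frobNorm ((1 - X) * ((1 - η • g) * X)) ≤ 7 / 5 * frobNorm (X * (1 - R)) := by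
  set q := frobNorm (X * (1 - R)) with hq
  have hq' : frobNorm ((1 - R) * X) = q := by
    rw [hq, ← fro_transpose, Matrix.transpose_mul, D.hX.1, D.hR.compl.1]
  set V := (1 - X) * ((1 - η • g) * X) with hV
  have h1 : (1 - R) * V = -(((1 - R) * X * (1 - η • g)) * X) := by
    have : (1 - R) * ((1 - η • g) * X) = 0 := by
      rw [Matrix.sub_mul 1 R, Matrix.one_mul, D.hstep, sub_self]
    rw [hV, Matrix.sub_mul 1 X, Matrix.one_mul, Matrix.mul_sub, this, zero_sub]
    simp only [Matrix.mul_assoc]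
  have h2 : frobNorm ((1 - R) * V) ≤ 6 / 5 * q := by
    rw [h1, fro_neg]
    refine (D.hX.fro_mul_le' _).trans ?_
    rw [Matrix.mul_sub, Matrix.mul_one, Matrix.mul_smul]
    refine (fro_sub _ _).trans ?_
    rw [fro_smul D.hη.le, hq']
    have h3 := D.hop ((1 - R) * X)ᵀ
    rw [← fro_transpose, Matrix.transpose_mul, Matrix.transpose_transpose, D.hg, fro_transpose,
      hq'] at h3
    have h4 := mul_le_mul_of_nonneg_left h3 D.hη.le
    have h5 := mul_le_mul_of_nonneg_right D.hηG (fro_nonneg (X * (1 - R)))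
    linarith
  have h3 := D.fro_RV_le
  have h4 : V = R * V + (1 - R) * V := by rw [Matrix.sub_mul, Matrix.one_mul]; abel
  have h5 := fro_add (R * V) ((1 - R) * V)
  rw [← h4] at h5
  linarith

/-- Linear contraction of the objective gap in one step. -/
lemma contraction (D : NearOpt X R Xs g gs η β G δ) {h h' : ℝ} (h0 : 0 ≤ h)
    (hh : h ≤ (g * (X - Xs)).trace)
    (hd : h' ≤ h + (g * (R - X)).trace + β * frobNorm (R - X) ^ 2) :
    h' ≤ (1 - η * δ / 8) * h := by
  have h1 := D.gap_bound hh
  have h2 := D.descent hd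
  have h3 := (one_sub_smul_bounds D.hη D.hηG D.hop (X * (1 - R))).1
  have h4 := D.fro_V_le
  set V := (1 - X) * ((1 - η • g) * X) with hV
  have h5 : (Xs * V).trace ≤ frobNorm (X * (1 - Xs)) * frobNorm V := by
    have e : Xs * V = (Xs * (1 - X)) * V := by
      rw [hV]; simp only [Matrix.mul_assoc, D.hX.compl.mul_cancel]
    have e' : frobNorm (Xs * (1 - X)) = frobNorm (X * (1 - Xs)) := by
      rw [← fro_transpose, Matrix.transpose_mul, D.hXs.1, D.hX.compl.1]
      exact fro_compl_eq D.hX D.hXs D.htX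
    rw [e, ← e']
    exact (le_abs_self _).trans (abs_trace_mul_le _ _)
  set p := frobNorm (X * (1 - Xs))
  set q := frobNorm (X * (1 - R))
  have hp : 0 ≤ p := fro_nonneg _
  have hq : 0 ≤ q := fro_nonneg _
  have hc := mul_pos D.hη D.hδ
  have hη := D.hη
  -- complete the square in `p`
  have h6 : 3 / 5 * (η * δ) * (η * h) ≤ (7 / 5 * q) ^ 2 := by
    have e1 : η * h + 3 / 5 * (η * δ) * p ^ 2 ≤ 2 * (p * (7 / 5 * q)) := by
      have := mul_le_mul_of_nonneg_left h4 hp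
      linarith
    have e2 := mul_le_mul_of_nonneg_left e1 (by positivity : 0 ≤ 3 / 5 * (η * δ))
    nlinarith [sq_nonneg (3 / 5 * (η * δ) * p - 7 / 5 * q)]
  have h7 : 6 / 5 * q ^ 2 ≤ η * (h - h') := by linarith
  have h8 : η * h' ≤ η * ((1 - η * δ / 8) * h) := by
    have : 0 ≤ η * δ * (η * h) := by positivity
    nlinarith
  exact le_of_mul_le_mul_left h8 hη

set_option maxHeartbeats 1000000 in
/-- The step does not decrease `⟨(1 - η gs) Xs, ·⟩`: the only negative block is compensated by the
decrease of the objective, and the cross terms by `gap_bound`. -/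
lemma potential (D : NearOpt X R Xs g gs η β G δ) {h h' : ℝ} (h'0 : 0 ≤ h')
    (hh : h ≤ (g * (X - Xs)).trace)
    (hd : h' ≤ h + (g * (R - X)).trace + β * frobNorm (R - X) ^ 2) :
    0 ≤ ((1 - η • gs) * Xs * (R - X)).trace := by
  have h1 := D.gap_bound hh
  have h2 := D.descent hd
  have h3 := potential_expand (η := η) D.hX D.hR D.hXs D.hgs D.hc
  have h4 := cross_term (gs := gs) D.hX D.hR D.hXs D.hstep
  have hη := D.hη
  have hc := mul_pos D.hη D.hδ
  have hdl := D.delta_le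
  have hd1 := D.fro_sub_le
  have hd0 := fro_nonneg (X - Xs)
  have hd2 := fro_sub_sq_eq D.hX D.hXs D.htX
  have hXsc : frobNorm (Xs * (1 - X)) = frobNorm (X * (1 - Xs)) := by
    rw [← fro_transpose, Matrix.transpose_mul, D.hXs.1, D.hX.compl.1]
    exact fro_compl_eq D.hX D.hXs D.htX
  have hXcR : frobNorm ((1 - X) * R) = frobNorm (X * (1 - R)) :=
    fro_compl_eq D.hX D.hR (D.htX.trans D.htR.symm)
  have hcomm : (1 - η • gs) * Xs = Xs * (1 - η • gs) := by
    simp [Matrix.mul_sub, Matrix.sub_mul, D.hc]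
  have key : ∀ P Z : Mat m, IsProj P → (1 - η • gs) * P = P * (1 - η • gs) →
      ((1 - η • gs) * P * (Z * Zᵀ)).trace = ((1 - η • gs) * ((P * Z) * (P * Z)ᵀ)).trace := by
    intro P Z hP hPc
    rw [trace_gram_proj hP hPc, hPc, Matrix.mul_assoc]
  -- the `(2,2)` block contributes nonnegatively
  have hF : 0 ≤ ((1 - η • gs) * Xs * (((1 - X) * R) * ((1 - X) * R)ᵀ)).trace := by
    rw [key _ _ D.hXs hcomm]
    exact le_trans (by positivity) (one_sub_smul_bounds D.hη D.hηG D.hops _).1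
  -- the `(1,1)` block
  have hS : ((1 - η • gs) * Xs * ((X * (1 - R)) * (X * (1 - R))ᵀ)).trace ≤
      ((1 - η • g) * ((X * (1 - R)) * (X * (1 - R))ᵀ)).trace
        + 1 / 5 * frobNorm (X - Xs) * frobNorm (X * (1 - R)) ^ 2 := by
    have e1 := trace_gram_split (Z := X * (1 - R)) D.hXs hcomm
    have e2 := (one_sub_smul_bounds D.hη D.hηG D.hops ((1 - Xs) * (X * (1 - R)))).1
    have e3 := (abs_le.1 (abs_trace_mul_gram_le (Z := X * (1 - R)) D.hgd)).2
    rw [Matrix.sub_mul, Matrix.trace_sub] at e3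
    have e4 := trace_one_sub_smul η g (X * (1 - R))
    have e5 := trace_one_sub_smul η gs (X * (1 - R))
    have e6 := mul_le_mul_of_nonneg_left e3 hη.le
    have e7 := mul_le_mul_of_nonneg_right D.hηβ
      (mul_nonneg hd0 (sq_nonneg (frobNorm (X * (1 - R)))))
    have e8 := sq_nonneg (frobNorm ((1 - Xs) * (X * (1 - R))))
    rw [key _ _ D.hXs hcomm]
    linarith
  have hK : frobNorm ((1 - X) * R * X) ≤ frobNorm (X * (1 - R)) := by
    rw [← hXcR]; exact D.hX.fro_mul_le' _
  -- the three error terms of the cross block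
  have hE1 : ((X * Xs * (1 - X) * R) * (R * ((1 - X) * ((1 - η • g) * X)))).trace ≤
      frobNorm (X * (1 - Xs)) * frobNorm (X * (1 - R)) * (1 / 5 * frobNorm (X * (1 - R))) := by
    refine (le_abs_self _).trans ((abs_trace_mul_le _ _).trans ?_)
    refine mul_le_mul ?_ D.fro_RV_le (fro_nonneg _) (mul_nonneg (fro_nonneg _) (fro_nonneg _))
    have e : X * Xs * (1 - X) * R = X * ((Xs * (1 - X)) * ((1 - X) * R)) := by
      simp only [Matrix.mul_assoc, D.hX.compl.mul_cancel]
    rw [e]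
    refine (D.hX.fro_mul_le _).trans ((fro_mul _ _).trans ?_)
    rw [hXsc, hXcR]
  have hE2 : -(frobNorm (X - Xs) * frobNorm (X * (1 - Xs)) * frobNorm (X * (1 - R))) * β ≤
      (((g - gs) * (Xs * (1 - X))) * ((1 - X) * R * X)).trace := by
    have e1 := abs_trace_mul_le ((g - gs) * (Xs * (1 - X))) ((1 - X) * R * X)
    have e2 : frobNorm ((g - gs) * (Xs * (1 - X))) * frobNorm ((1 - X) * R * X) ≤
        (β * frobNorm (X - Xs) * frobNorm (X * (1 - Xs))) * frobNorm (X * (1 - R)) := by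
      refine mul_le_mul ?_ hK (fro_nonneg _)
        (mul_nonneg (mul_nonneg D.hβ (fro_nonneg _)) (fro_nonneg _))
      refine (fro_mul _ _).trans ?_
      rw [hXsc]
      exact mul_le_mul_of_nonneg_right D.hgd (fro_nonneg _)
    have := (abs_le.1 (e1.trans e2)).1
    linarith
  have hE3 : -(frobNorm (X - Xs) * frobNorm (X * (1 - Xs)) * frobNorm (X * (1 - R))) * G ≤
      ((g * ((X - Xs) * (Xs * (1 - X)))) * ((1 - X) * R * X)).trace := by
    have e1 := abs_trace_mul_le (g * ((X - Xs) * (Xs * (1 - X)))) ((1 - X) * R * X)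
    have e2 : frobNorm (g * ((X - Xs) * (Xs * (1 - X)))) * frobNorm ((1 - X) * R * X) ≤
        (G * (frobNorm (X - Xs) * frobNorm (X * (1 - Xs)))) * frobNorm (X * (1 - R)) := by
      refine mul_le_mul ?_ hK (fro_nonneg _)
        (mul_nonneg D.hG (mul_nonneg (fro_nonneg _) (fro_nonneg _)))
      refine (D.hop _).trans (mul_le_mul_of_nonneg_left ?_ D.hG)
      refine (fro_mul _ _).trans ?_
      rw [hXsc]
    have := (abs_le.1 (e1.trans e2)).1
    linarith
  set p := frobNorm (X * (1 - Xs)) with hpd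
  set q := frobNorm (X * (1 - R)) with hqd
  set d := frobNorm (X - Xs) with hdd
  have hp : 0 ≤ p := fro_nonneg _
  have hq : 0 ≤ q := fro_nonneg _
  have hpd' : p ≤ d := by nlinarith
  have hη2 := mul_le_mul_of_nonneg_left hE2 hη.le
  have hη3 := mul_le_mul_of_nonneg_left hE3 hη.le
  have hdpq : 0 ≤ d * p * q := by positivity
  have hb2 := mul_le_mul_of_nonneg_left D.hηβ hdpq
  have hb3 := mul_le_mul_of_nonneg_left D.hηG hdpq
  have hηh' : 0 ≤ η * h' := by positivity
  have hd3 : d ≤ 1 / 4 := by linarith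
  have f1 : d * q ^ 2 ≤ 1 / 4 * q ^ 2 := mul_le_mul_of_nonneg_right hd3 (sq_nonneg _)
  have f2 : p * q * (1 / 5 * q) ≤ 1 / 20 * q ^ 2 := by
    have := mul_le_mul_of_nonneg_right (hpd'.trans hd3) (sq_nonneg q)
    linarith
  -- complete the square in `q`, with `d ≤ 1/4` and `d ≲ η δ`
  have f3 : 4 / 5 * (d * p * q) ≤ 1 / 4 * q ^ 2 + 3 / 5 * (η * δ) * p ^ 2 := by
    have g1 : d ^ 2 ≤ 1 / 4 * (31 / 50 * (η * δ)) := by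
      rw [sq]; exact mul_le_mul hd3 hd1 hd0 (by norm_num)
    have g2 := mul_le_mul_of_nonneg_right g1 (sq_nonneg p)
    have g3 : 0 ≤ η * δ * p ^ 2 := by positivity
    linarith [sq_nonneg (1 / 2 * q - 4 / 5 * (d * p))]
  rw [h3, h4]
  linarith

end NearOpt

end Core

/-! ### Eigenvalues, spectral norm and the bottom eigenprojection -/

section Spectral

variable {m : ℕ}

local notation "Mat" m => Matrix (Fin m) (Fin m) ℝ

/-- Spectral theorem for a real symmetric matrix, with the eigenvalues in increasing order. -/
lemma exists_sorted_diag {A : Mat m} (hA : A.IsHermitian) :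
    ∃ (U : Mat m) (μ : Fin m → ℝ), Uᵀ * U = 1 ∧ U * Uᵀ = 1 ∧ Monotone μ ∧
      A = U * Matrix.diagonal μ * Uᵀ ∧
      ∀ (j : ℕ) (hj : m - j < m), eigval A j = μ ⟨m - j, hj⟩ := by
  set σ := Tuple.sort hA.eigenvalues with hσ
  set V : Mat m := (hA.eigenvectorUnitary : Mat m) with hV
  have hV1 : V * Vᵀ = 1 := by
    have := Matrix.mem_unitaryGroup_iff.1 hA.eigenvectorUnitary.2
    rwa [Matrix.star_eq_conjTranspose, Matrix.conjTranspose_eq_transpose_of_trivial] at this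
  have hV2 : Vᵀ * V = 1 := mul_eq_one_comm.1 hV1
  have hdec : A = V * Matrix.diagonal hA.eigenvalues * Vᵀ := by
    have := hA.spectral_theorem
    rw [Unitary.conjStarAlgAut_apply, Matrix.star_eq_conjTranspose,
      Matrix.conjTranspose_eq_transpose_of_trivial] at this
    exact this
  refine ⟨V.submatrix id σ, hA.eigenvalues ∘ σ, ?_, ?_, Tuple.monotone_sort _, ?_, ?_⟩
  · ext i j
    have := congrFun (congrFun hV2 (σ i)) (σ j)
    simp only [Matrix.mul_apply, Matrix.transpose_apply, Matrix.submatrix_apply, id,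
      Matrix.one_apply, EmbeddingLike.apply_eq_iff_eq] at this ⊢
    exact this
  · rw [Matrix.transpose_submatrix, Matrix.submatrix_mul_equiv, hV1]; rfl
  · have : Matrix.diagonal (hA.eigenvalues ∘ σ) = (Matrix.diagonal hA.eigenvalues).submatrix σ σ :=
      (Matrix.submatrix_diagonal_equiv _ σ).symm
    rw [this, Matrix.transpose_submatrix, Matrix.submatrix_mul_equiv, Matrix.submatrix_mul_equiv,
      ← hdec]
    rfl
  · intro j hj
    rw [eigval, dif_pos hA, dif_pos hj]

lemma trace_diag_gram {U g : Mat m} {μ : Fin m → ℝ} (hg : g = U * Matrix.diagonal μ * Uᵀ)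
    (Z : Mat m) : (g * (Z * Zᵀ)).trace = ∑ i, μ i * ∑ j, (Uᵀ * Z) i j ^ 2 := by
  have h1 : (g * (Z * Zᵀ)).trace = (Matrix.diagonal μ * ((Uᵀ * Z) * (Uᵀ * Z)ᵀ)).trace := by
    rw [hg, Matrix.transpose_mul, Matrix.transpose_transpose, Matrix.mul_assoc, Matrix.mul_assoc,
      Matrix.trace_mul_comm]
    simp only [Matrix.mul_assoc]
  rw [h1, Matrix.trace]
  refine Finset.sum_congr rfl fun i _ => ?_
  rw [Matrix.diag_apply, Matrix.diagonal_mul, Matrix.mul_apply]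
  simp only [Matrix.transpose_apply, sq]

lemma fro_sq_orth {U : Mat m} (hU : U * Uᵀ = 1) (Z : Mat m) :
    frobNorm Z ^ 2 = ∑ i, ∑ j, (Uᵀ * Z) i j ^ 2 := by
  have := trace_diag_gram (U := U) (μ := fun _ => 1) (g := 1)
    (by rw [Matrix.diagonal_one, Matrix.mul_one, hU]) Z
  rw [Matrix.one_mul, ← fro_sq'] at this
  simpa using this

/-- The spectral norm bounds left multiplication in the Frobenius norm. -/
lemma fro_mul_le_of_specNorm {g : Mat m} {G : ℝ} (hm : 0 < m) (hG : specNorm g ≤ G) (Z : Mat m) :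
    frobNorm (g * Z) ≤ G * frobNorm Z := by
  have hG0 : 0 ≤ G := (Real.sqrt_nonneg _).trans hG
  have hA : (gᵀ * g).IsHermitian := by
    rw [Matrix.IsHermitian, Matrix.conjTranspose_eq_transpose_of_trivial]; simp
  obtain ⟨U, μ, -, hU, hμ, hdec, heig⟩ := exists_sorted_diag hA
  have h1 : ∀ i, μ i ≤ G ^ 2 := by
    intro i
    have h2 : eigval (gᵀ * g) 1 ≤ G ^ 2 := (Real.sqrt_le_left hG0).1 hG
    rw [heig 1 (by omega)] at h2
    refine (hμ ?_).trans h2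
    rw [Fin.le_def]
    simp only
    omega
  have h2 : frobNorm (g * Z) ^ 2 ≤ (G * frobNorm Z) ^ 2 := by
    have : frobNorm (g * Z) ^ 2 = ((gᵀ * g) * (Z * Zᵀ)).trace := by
      rw [fro_sq, Matrix.transpose_mul, Matrix.mul_assoc, Matrix.trace_mul_comm]
      simp only [Matrix.mul_assoc]
    rw [this, trace_diag_gram hdec, mul_pow, fro_sq_orth hU, Finset.mul_sum]
    exact Finset.sum_le_sum fun i _ => mul_le_mul_of_nonneg_right (h1 i)
      (Finset.sum_nonneg fun j _ => sq_nonneg _)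
  exact (pow_le_pow_iff_left₀ (fro_nonneg _) (mul_nonneg hG0 (fro_nonneg _)) two_ne_zero).1 h2

/-- The projection `Y` onto the span of eigenvectors of the `k` smallest eigenvalues of `g`, with
`a`, `b` the eigenvalues on either side of the cut. -/
lemma exists_bottom_proj {g : Mat m} (hg : gᵀ = g) {k : ℕ} (hk : 0 < k) (hkm : k < m) :
    ∃ (Y : Mat m) (a b : ℝ), IsProj Y ∧ Y.trace = k ∧ g * Y = Y * g ∧
      a = eigval g (m - k + 1) ∧ b = eigval g (m - k) ∧
      (∀ Z : Mat m, Y * Z = Z → (g * (Z * Zᵀ)).trace ≤ a * frobNorm Z ^ 2) ∧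
      (∀ Z : Mat m, (1 - Y) * Z = Z → b * frobNorm Z ^ 2 ≤ (g * (Z * Zᵀ)).trace) ∧
      (∀ G : ℝ, (∀ Z : Mat m, frobNorm (g * Z) ≤ G * frobNorm Z) → |a| ≤ G ∧ |b| ≤ G) := by
  have hA : g.IsHermitian := by
    rw [Matrix.IsHermitian, Matrix.conjTranspose_eq_transpose_of_trivial, hg]
  obtain ⟨U, μ, hU', hU, hμ, hdec, heig⟩ := exists_sorted_diag hA
  set d : Fin m → ℝ := fun i => if (i : ℕ) < k then 1 else 0 with hd
  have hdd : Matrix.diagonal d * Matrix.diagonal d = Matrix.diagonal d := by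
    rw [Matrix.diagonal_mul_diagonal]
    congr 1; ext i; simp [hd]
  have hc : ∀ Z : Mat m, Uᵀ * (U * Z) = Z := fun Z => by
    rw [← Matrix.mul_assoc, hU', Matrix.one_mul]
  have hbound : ∀ G : ℝ, (∀ Z : Mat m, frobNorm (g * Z) ≤ G * frobNorm Z) → ∀ i, |μ i| ≤ G := by
    intro G hop i
    have h := abs_trace_gram_le hop (U * Matrix.single i i 1)
    rw [trace_diag_gram hdec, fro_sq_orth hU, hc] at h
    have e : ∀ i', ∑ j, (Matrix.single i i (1 : ℝ) : Mat m) i' j ^ 2 = if i = i' then 1 else 0 := by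
      intro i'
      by_cases hi : i = i' <;> simp [Matrix.single_apply, hi, ite_pow]
    simpa [e] using h
  refine ⟨U * Matrix.diagonal d * Uᵀ, μ ⟨k - 1, by omega⟩, μ ⟨k, hkm⟩, ⟨?_, ?_⟩, ?_, ?_, ?_, ?_,
    ?_, ?_, ?_⟩
  · simp [Matrix.mul_assoc]
  · simp only [Matrix.mul_assoc, hc]
    rw [← Matrix.mul_assoc (Matrix.diagonal d), hdd]
  · rw [Matrix.trace_mul_comm, hc, Matrix.trace_diagonal]
    simp only [hd, Finset.sum_boole, Fin.card_filter_val_lt, Nat.cast_inj]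
    omega
  · rw [hdec]
    simp only [Matrix.mul_assoc, hc]
    rw [← Matrix.mul_assoc (Matrix.diagonal d), ← Matrix.mul_assoc (Matrix.diagonal μ),
      Matrix.diagonal_mul_diagonal, Matrix.diagonal_mul_diagonal]
    simp only [mul_comm]
  · rw [heig _ (by omega)]
    congr 2; omega
  · rw [heig _ (by omega)]
    congr 2; omega
  · intro Z hZ
    have hW : ∀ i j, (Uᵀ * Z) i j = d i * (Uᵀ * Z) i j := by
      intro i j
      conv_lhs => rw [← hZ]
      rw [Matrix.mul_assoc, Matrix.mul_assoc, hc, Matrix.diagonal_mul]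
    rw [trace_diag_gram hdec, fro_sq_orth hU, Finset.mul_sum]
    refine Finset.sum_le_sum fun i _ => ?_
    by_cases hi : (i : ℕ) < k
    · refine mul_le_mul_of_nonneg_right (hμ ?_) (Finset.sum_nonneg fun j _ => sq_nonneg _)
      rw [Fin.le_def]; simp only; omega
    · have : ∀ j, (Uᵀ * Z) i j = 0 := fun j => by rw [hW]; simp [hd, hi]
      simp [this]
  · intro Z hZ
    have hW : ∀ i j, d i * (Uᵀ * Z) i j = 0 := by
      intro i j
      have : (U * Matrix.diagonal d * Uᵀ) * Z = 0 := by
        rw [Matrix.sub_mul, Matrix.one_mul] at hZ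
        exact sub_eq_self.1 hZ
      rw [← Matrix.diagonal_mul, ← hc (Matrix.diagonal d * (Uᵀ * Z)), ← Matrix.mul_assoc U,
        ← Matrix.mul_assoc (U * _), this, Matrix.mul_zero, Matrix.zero_apply]
    rw [trace_diag_gram hdec, fro_sq_orth hU, Finset.mul_sum]
    refine Finset.sum_le_sum fun i _ => ?_
    by_cases hi : (i : ℕ) < k
    · have : ∀ j, (Uᵀ * Z) i j = 0 := fun j => by simpa [hd, hi] using hW i j
      simp [this]
    · refine mul_le_mul_of_nonneg_right (hμ ?_) (Finset.sum_nonneg fun j _ => sq_nonneg _)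
      rw [Fin.le_def]; simp only; omega
  · intro G hop
    exact ⟨hbound G hop _, hbound G hop _⟩

lemma exists_gram {X : Mat m} (hX : X.PosSemidef) : ∃ B : Mat m, X = B * Bᵀ := by
  have hdec := hX.1.spectral_theorem
  rw [Unitary.conjStarAlgAut_apply, Matrix.star_eq_conjTranspose,
    Matrix.conjTranspose_eq_transpose_of_trivial] at hdec
  refine ⟨(hX.1.eigenvectorUnitary : Mat m) *
    Matrix.diagonal (fun i => Real.sqrt (hX.1.eigenvalues i)), ?_⟩
  rw [Matrix.transpose_mul, Matrix.diagonal_transpose, Matrix.mul_assoc,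
    ← Matrix.mul_assoc (Matrix.diagonal _) (Matrix.diagonal _), Matrix.diagonal_mul_diagonal,
    ← Matrix.mul_assoc]
  simp only [Real.mul_self_sqrt (hX.eigenvalues_nonneg _)]
  exact hdec

/-- The linear functional `⟨g, ·⟩` is minimized over the Fantope at the bottom eigenprojection, with
a growth rate given by the eigengap. -/
lemma gap_growth {g X Y : Mat m} {a b : ℝ} (hY : IsProj Y) (hX : X.PosSemidef)
    (hX1 : (1 - X).PosSemidef) (htr : X.trace = Y.trace) (hc : g * Y = Y * g)
    (hlow : ∀ Z : Mat m, Y * Z = Z → (g * (Z * Zᵀ)).trace ≤ a * frobNorm Z ^ 2)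
    (hup : ∀ Z : Mat m, (1 - Y) * Z = Z → b * frobNorm Z ^ 2 ≤ (g * (Z * Zᵀ)).trace) :
    (b - a) * (X * (1 - Y)).trace ≤ (g * (X - Y)).trace := by
  obtain ⟨B, hB⟩ := exists_gram hX
  obtain ⟨C, hC⟩ := exists_gram hX1
  have hn : ∀ P W : Mat m, IsProj P → frobNorm (P * W) ^ 2 = (P * (W * Wᵀ)).trace := by
    intro P W hP
    rw [fro_sq', Matrix.transpose_mul, hP.1, ← Matrix.mul_assoc, Matrix.trace_mul_comm]
    simp only [Matrix.mul_assoc, hP.mul_cancel]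
  have h1 := trace_gram_split (Z := B) hY hc
  have h2 := hup _ (hY.compl.mul_cancel B)
  have h3 := hlow _ (hY.mul_cancel C)
  rw [trace_gram_proj hY hc, ← hC] at h3
  rw [trace_gram_proj hY hc, ← hB] at h1
  rw [hn _ _ hY.compl, ← hB] at h2
  rw [hn _ _ hY, ← hC] at h3
  have h4 : (Y * (1 - X)).trace = (X * (1 - Y)).trace := by
    rw [Matrix.mul_sub, Matrix.mul_sub, Matrix.trace_sub, Matrix.trace_sub, Matrix.mul_one,
      Matrix.mul_one, htr, Matrix.trace_mul_comm]
  have h5 : (Y * (g * (1 - X))).trace = (g * Y).trace - (Y * (g * X)).trace := by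
    rw [Matrix.mul_sub, Matrix.mul_one, Matrix.mul_sub, Matrix.trace_sub, Matrix.trace_mul_comm Y]
  rw [Matrix.trace_mul_comm (1 - Y)] at h2
  rw [h4, h5] at h3
  rw [Matrix.mul_sub g, Matrix.trace_sub]
  linarith

/-- The only element of the Fantope contained in the range of a rank-`k` projection is that
projection. -/
lemma eq_proj_of_trace_le {X Y : Mat m} (hY : IsProj Y) (hXt : Xᵀ = X) (hX : X.PosSemidef)
    (hX1 : (1 - X).PosSemidef) (htr : X.trace = Y.trace) (h : (X * (1 - Y)).trace ≤ 0) :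
    X = Y := by
  obtain ⟨B, hB⟩ := exists_gram hX
  have h1 : 0 ≤ (X * (1 - X)).trace := by
    have := (hX1.conjTranspose_mul_mul_same B).trace_nonneg
    rw [Matrix.conjTranspose_eq_transpose_of_trivial, Matrix.trace_mul_comm, ← Matrix.mul_assoc,
      ← hB] at this
    exact this
  have h2 : frobNorm (X - Y) ^ 2 ≤ 0 := by
    rw [fro_sq, Matrix.transpose_sub, hXt, hY.1, Matrix.sub_mul, Matrix.mul_sub, Matrix.mul_sub,
      hY.2]
    simp only [Matrix.mul_sub, Matrix.mul_one, Matrix.trace_sub] at h h1 ⊢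
    rw [Matrix.trace_mul_comm Y X]
    linarith
  have h3 : frobNorm (X - Y) = 0 := by
    have := sq_nonneg (frobNorm (X - Y))
    exact pow_eq_zero_iff two_ne_zero |>.1 (le_antisymm h2 this)
  open scoped Matrix.Norms.Frobenius in
  rw [fro_eq_norm, norm_eq_zero, sub_eq_zero] at h3
  exact h3

end Spectral

/-! ### Optimality over the Fantope and the convergence rate -/

section Iteration

variable {n k : ℕ}

local notation "Mat" m => Matrix (Fin m) (Fin m) ℝ

lemma IsProj.posSemidef {X : Mat n} (h : IsProj X) : X.PosSemidef := by
  have := Matrix.posSemidef_conjTranspose_mul_self X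
  rwa [Matrix.conjTranspose_eq_transpose_of_trivial, h.1, h.2] at this

lemma IsProj.mem_Fantope {X : Mat n} (h : IsProj X) (htr : X.trace = k) : X ∈ Fantope n k :=
  ⟨h.1, h.posSemidef, h.compl.posSemidef, htr⟩

lemma isProj_of_orth {Q : Matrix (Fin n) (Fin k) ℝ} (hQ : Qᵀ * Q = 1) : IsProj (Q * Qᵀ) := by
  refine ⟨by simp, ?_⟩
  rw [Matrix.mul_assoc, ← Matrix.mul_assoc Qᵀ, hQ, Matrix.one_mul]

lemma trace_of_orth {Q : Matrix (Fin n) (Fin k) ℝ} (hQ : Qᵀ * Q = 1) : (Q * Qᵀ).trace = k := by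
  rw [Matrix.trace_mul_comm, hQ, Matrix.trace_one, Fintype.card_fin]

/-- First-order optimality over the Fantope. -/
lemma first_order {f : (Mat n) → ℝ} {grad : (Mat n) → Mat n} {β : ℝ}
    (hconv : ∀ X Y : Mat n, X.IsSymm → Y.IsSymm → f X + (grad X * (Y - X)).trace ≤ f Y)
    (hsmooth : ∀ X Y : Mat n, X.IsSymm → Y.IsSymm →
      frobNorm (grad X - grad Y) ≤ β * frobNorm (X - Y))
    {Xs Y : Mat n} (hXs : Xs ∈ Fantope n k) (hopt : ∀ X ∈ Fantope n k, f Xs ≤ f X)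
    (hY : Y ∈ Fantope n k) : 0 ≤ (grad Xs * (Y - Xs)).trace := by
  -- along the segment, `0 ≤ f (Xs + s (Y - Xs)) - f Xs ≤ s ⟨∇f Xs, Y - Xs⟩ + O(s²)`
  have key : ∀ s : ℝ, 0 < s → s ≤ 1 →
      -(s * (β * frobNorm (Y - Xs) ^ 2)) ≤ (grad Xs * (Y - Xs)).trace := by
    intro s hs hs1
    set W := Xs + s • (Y - Xs) with hW
    have hWs : W = (1 - s) • Xs + s • Y := by
      rw [hW, smul_sub, sub_smul, one_smul]; abel
    have hWF : W ∈ Fantope n k := by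
      refine ⟨?_, ?_, ?_, ?_⟩
      · rw [hWs, Matrix.IsSymm]; simp [hXs.1.eq, hY.1.eq]
      · rw [hWs]
        exact (hXs.2.1.smul (by linarith)).add (hY.2.1.smul hs.le)
      · have : 1 - W = (1 - s) • (1 - Xs) + s • (1 - Y) := by
          rw [hWs]; simp only [smul_sub, sub_smul, one_smul]; abel
        rw [this]
        exact (hXs.2.2.1.smul (by linarith)).add (hY.2.2.1.smul hs.le)
      · rw [hWs]
        simp only [Matrix.trace_add, Matrix.trace_smul, hXs.2.2.2, hY.2.2.2, smul_eq_mul]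
        ring
    have h1 := hconv W Xs hWF.1 hXs.1
    have h2 := hopt W hWF
    have hWX : W - Xs = s • (Y - Xs) := by rw [hW]; abel
    have hXW : Xs - W = -(s • (Y - Xs)) := by rw [hW]; abel
    have h3 := hsmooth W Xs hWF.1 hXs.1
    rw [hWX, fro_smul hs.le] at h3
    have h4 := (abs_le.1 (abs_trace_mul_le (grad W - grad Xs) (Y - Xs))).2
    have h5 := mul_le_mul_of_nonneg_right h3 (fro_nonneg (Y - Xs))
    rw [Matrix.sub_mul, Matrix.trace_sub] at h4
    rw [hXW, Matrix.mul_neg, Matrix.mul_smul, Matrix.trace_neg, Matrix.trace_smul,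
      smul_eq_mul] at h1
    have h6 : 0 ≤ (grad W * (Y - Xs)).trace := by
      have : s * 0 ≤ s * (grad W * (Y - Xs)).trace := by linarith
      exact le_of_mul_le_mul_left this hs
    linarith
  by_contra hneg
  push Not at hneg
  set c := β * frobNorm (Y - Xs) ^ 2 with hc
  set T := (grad Xs * (Y - Xs)).trace with hT
  have hcpos : 0 < c := by
    have := key 1 one_pos le_rfl
    linarith
  have hs : 0 < min 1 (-T / (2 * c)) := lt_min one_pos (div_pos (by linarith) (by linarith))
  have h1 := key _ hs (min_le_left _ _)
  have h2 : min 1 (-T / (2 * c)) * c ≤ -T / 2 := by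
    calc min 1 (-T / (2 * c)) * c ≤ -T / (2 * c) * c :=
          mul_le_mul_of_nonneg_right (min_le_right _ _) hcpos.le
      _ = -T / 2 := by field_simp
  linarith

end Iteration

theorem stmt2 {n k : ℕ} (hk : 0 < k) (hkn : k < n)
    (f : Matrix (Fin n) (Fin n) ℝ → ℝ)
    (grad : Matrix (Fin n) (Fin n) ℝ → Matrix (Fin n) (Fin n) ℝ)
    (β : ℝ) (hβ : 0 < β)
    (hgradSymm : ∀ X : Matrix (Fin n) (Fin n) ℝ, (grad X).IsSymm)
    (hconv : ∀ X Y : Matrix (Fin n) (Fin n) ℝ, X.IsSymm → Y.IsSymm →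
      f X + (grad X * (Y - X)).trace ≤ f Y)
    (hsmooth : ∀ X Y : Matrix (Fin n) (Fin n) ℝ, X.IsSymm → Y.IsSymm →
      frobNorm (grad X - grad Y) ≤ β * frobNorm (X - Y))
    (Xstar : Matrix (Fin n) (Fin n) ℝ)
    (hXstarMem : Xstar ∈ Fantope n k)
    (hXstarOpt : ∀ X ∈ Fantope n k, f Xstar ≤ f X)
    (δ : ℝ) (hδ : 0 < δ)
    (hgap : δ ≤ eigval (grad Xstar) (n - k) - eigval (grad Xstar) (n - k + 1))
    (G : ℝ) (hG : ∀ X ∈ Fantope n k, specNorm (grad X) ≤ G)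
    (η : ℝ) (hη : η = 1 / (5 * max β G))
    (Q : ℕ → Matrix (Fin n) (Fin k) ℝ)
    (hQorth : ∀ t : ℕ, (Q t)ᵀ * Q t = 1)
    (hQrec : ∀ t : ℕ, ∃ R : Matrix (Fin k) (Fin k) ℝ,
      R.BlockTriangular (id : Fin k → Fin k) ∧
      Q (t + 1) * R = (Q t * (Q t)ᵀ - η • grad (Q t * (Q t)ᵀ)) * Q t)
    (hinit : frobNorm (Q 0 * (Q 0)ᵀ - Xstar) ≤
      min 1 (Real.sqrt (δ / 2)) * (η * δ / (2 * (1 + η * β)))) :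
    ∀ t : ℕ, f (Q t * (Q t)ᵀ) - f Xstar ≤
      (f (Q 0 * (Q 0)ᵀ) - f Xstar) * Real.exp (-(δ * (t : ℝ)) / (40 * max β G)) := by
  have hn : 0 < n := hk.trans hkn
  -- `Xstar` is the bottom eigenprojection of its own gradient
  obtain ⟨Y, a, b, hY, hYtr, hc, ha, hb, hlow, hup, hab⟩ :=
    exists_bottom_proj (hgradSymm Xstar) hk hkn
  have hgap' : δ ≤ b - a := by rw [ha, hb]; exact hgap
  have htrY : Xstar.trace = Y.trace := hXstarMem.2.2.2.trans hYtr.symm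
  have hXY : Xstar = Y := by
    refine eq_proj_of_trace_le hY hXstarMem.1 hXstarMem.2.1 hXstarMem.2.2.1 htrY ?_
    have h1 := gap_growth hY hXstarMem.2.1 hXstarMem.2.2.1 htrY hc hlow hup
    have h2 := first_order hconv hsmooth hXstarMem hXstarOpt (hY.mem_Fantope hYtr)
    rw [Matrix.mul_sub (grad Xstar), Matrix.trace_sub] at h1 h2
    have h3 : (b - a) * (Xstar * (1 - Y)).trace ≤ (b - a) * 0 := by
      rw [mul_zero]; linarith
    exact le_of_mul_le_mul_left h3 (hδ.trans_le hgap')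
  rw [← hXY] at hY hYtr hc hlow hup
  clear hXY htrY
  -- the step size
  set M := max β G with hM
  have hMpos : 0 < M := hβ.trans_le (le_max_left _ _)
  have hηpos : 0 < η := by rw [hη]; positivity
  have hηM : η * M = 1 / 5 := by rw [hη]; field_simp
  have hηβ : η * β ≤ 1 / 5 := by
    rw [← hηM]; exact mul_le_mul_of_nonneg_left (le_max_left _ _) hηpos.le
  have hηG : η * G ≤ 1 / 5 := by
    rw [← hηM]; exact mul_le_mul_of_nonneg_left (le_max_right _ _) hηpos.le
  have hG0 : 0 ≤ G := (Real.sqrt_nonneg _).trans (hG Xstar hXstarMem)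
  have hops : ∀ Z, frobNorm (grad Xstar * Z) ≤ G * frobNorm Z :=
    fro_mul_le_of_specNorm hn (hG _ hXstarMem)
  -- the iterates
  set X : ℕ → Matrix (Fin n) (Fin n) ℝ := fun t => Q t * (Q t)ᵀ with hXdef
  have hX : ∀ t, IsProj (X t) := fun t => isProj_of_orth (hQorth t)
  have hXtr : ∀ t, (X t).trace = Xstar.trace := fun t => (trace_of_orth (hQorth t)).trans hYtr.symm
  have hXF : ∀ t, X t ∈ Fantope n k := fun t => (hX t).mem_Fantope (trace_of_orth (hQorth t))
  -- the range of `X (t + 1)` contains that of `(X t - η ∇f (X t)) Q t`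
  have hstep : ∀ t, X (t + 1) * ((1 - η • grad (X t)) * X t) = (1 - η • grad (X t)) * X t := by
    intro t
    obtain ⟨R, -, hR⟩ := hQrec t
    have e1 : (1 - η • grad (X t)) * X t = Q (t + 1) * (R * (Q t)ᵀ) := by
      rw [← Matrix.mul_assoc (Q (t + 1)), hR, Matrix.mul_assoc]
      change _ = (X t - η • grad (X t)) * X t
      simp only [Matrix.sub_mul, (hX t).2, Matrix.one_mul]
    rw [e1]
    change Q (t + 1) * (Q (t + 1))ᵀ * _ = _
    rw [Matrix.mul_assoc, ← Matrix.mul_assoc (Q (t + 1))ᵀ, hQorth, Matrix.one_mul]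
  have hnear : ∀ t, frobNorm (X t * (1 - Xstar)) ^ 2 ≤ 3 / 16 * (η * δ) ^ 2 →
      NearOpt (X t) (X (t + 1)) Xstar (grad (X t)) (grad Xstar) η β G δ := fun t ht =>
    { hX := hX t, hR := hX _, hXs := hY, htX := hXtr t, htR := hXtr _
      hg := hgradSymm _, hgs := hgradSymm _, hc := hc
      hop := fro_mul_le_of_specNorm hn (hG _ (hXF t)), hops := hops
      hη := hηpos, hδ := hδ, hG := hG0, hβ := hβ.le, hηG := hηG, hηβ := hηβ
      gap := ⟨a, b, (hab G hops).1, (hab G hops).2, hgap', hlow, hup⟩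
      hgd := hsmooth _ _ (hX t).1 hXstarMem.1
      hstep := hstep t, hregion := ht }
  have hh0 : ∀ t, 0 ≤ f (X t) - f Xstar := fun t => sub_nonneg.2 (hXstarOpt _ (hXF t))
  have hh : ∀ t, f (X t) - f Xstar ≤ (grad (X t) * (X t - Xstar)).trace := by
    intro t
    have h1 := hconv (X t) Xstar (hX t).1 hXstarMem.1
    rw [← neg_sub, Matrix.mul_neg, Matrix.trace_neg] at h1
    linarith
  -- convexity at the new point and smoothness give a descent inequality, with `β` instead of `β / 2`
  have hd : ∀ t, f (X (t + 1)) - f Xstar ≤ f (X t) - f Xstar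
      + (grad (X t) * (X (t + 1) - X t)).trace + β * frobNorm (X (t + 1) - X t) ^ 2 := by
    intro t
    have h1 := hconv (X (t + 1)) (X t) (hX _).1 (hX t).1
    rw [← neg_sub, Matrix.mul_neg, Matrix.trace_neg] at h1
    have h2 := (abs_le.1 (abs_trace_mul_le (grad (X (t + 1)) - grad (X t)) (X (t + 1) - X t))).2
    have h3 := mul_le_mul_of_nonneg_right (hsmooth (X (t + 1)) (X t) (hX _).1 (hX t).1)
      (fro_nonneg (X (t + 1) - X t))
    rw [Matrix.sub_mul, Matrix.trace_sub] at h2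
    linarith
  -- the potential `⟨(1 - η ∇f(Xstar)) Xstar, 1 - X t⟩` is comparable to `‖X t (1 - Xstar)‖²`
  have hcomm : (1 - η • grad Xstar) * Xstar = Xstar * (1 - η • grad Xstar) := by
    simp [Matrix.mul_sub, Matrix.sub_mul, hc]
  have hΦ : ∀ t, 4 / 5 * frobNorm (X t * (1 - Xstar)) ^ 2 ≤
        ((1 - η • grad Xstar) * Xstar * (1 - X t)).trace ∧
      ((1 - η • grad Xstar) * Xstar * (1 - X t)).trace ≤
        6 / 5 * frobNorm (X t * (1 - Xstar)) ^ 2 := by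
    intro t
    have h1 := one_sub_smul_bounds hηpos hηG hops (Xstar * (1 - X t))
    rw [trace_gram_proj hY hcomm, (hX t).compl.1, (hX t).compl.2, ← Matrix.mul_assoc,
      ← hcomm] at h1
    have h2 : frobNorm (Xstar * (1 - X t)) = frobNorm (X t * (1 - Xstar)) := by
      rw [← fro_transpose, Matrix.transpose_mul, hY.1, (hX t).compl.1]
      exact fro_compl_eq (hX t) hY (hXtr t)
    rwa [h2] at h1
  have hηδ := mul_pos hηpos hδ
  have hΦ0 : ((1 - η • grad Xstar) * Xstar * (1 - X 0)).trace ≤ 3 / 20 * (η * δ) ^ 2 := by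
    have h1 : frobNorm (X 0 - Xstar) ≤ η * δ / 2 := by
      have hβη : 0 ≤ η * β := by positivity
      calc frobNorm (X 0 - Xstar) ≤ _ := hinit
        _ ≤ 1 * (η * δ / (2 * (1 + η * β))) :=
            mul_le_mul_of_nonneg_right (min_le_left _ _) (by positivity)
        _ ≤ η * δ / 2 := by
            rw [one_mul]
            exact div_le_div_of_nonneg_left hηδ.le two_pos (by linarith)
    have h2 := pow_le_pow_left₀ (fro_nonneg _) h1 2
    rw [fro_sub_sq_eq (hX 0) hY (hXtr 0)] at h2
    have h3 := (hΦ 0).2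
    linarith
  have hregion : ∀ t, ((1 - η • grad Xstar) * Xstar * (1 - X t)).trace ≤ 3 / 20 * (η * δ) ^ 2 →
      frobNorm (X t * (1 - Xstar)) ^ 2 ≤ 3 / 16 * (η * δ) ^ 2 := by
    intro t ht
    have := (hΦ t).1
    linarith
  -- the region where `NearOpt` holds is never left, since the potential does not increase
  have hinv : ∀ t, ((1 - η • grad Xstar) * Xstar * (1 - X t)).trace ≤ 3 / 20 * (η * δ) ^ 2 := by
    intro t
    induction t with
    | zero => exact hΦ0
    | succ t ih =>
      have h1 := (hnear t (hregion t ih)).potential (hh0 (t + 1)) (hh t) (hd t)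
      have h2 : X (t + 1) - X t = (1 - X t) - (1 - X (t + 1)) := by abel
      rw [h2, Matrix.mul_sub, Matrix.trace_sub] at h1
      linarith
  intro t
  change f (X t) - f Xstar ≤ (f (X 0) - f Xstar) * _
  have hexp : ∀ t : ℕ, f (X t) - f Xstar ≤
      (f (X 0) - f Xstar) * Real.exp (-(η * δ / 8) * t) := by
    intro t
    induction t with
    | zero => simp
    | succ t ih =>
      have h1 := (hnear t (hregion t (hinv t))).contraction (hh0 t) (hh t) (hd t)
      have h2 : 1 - η * δ / 8 ≤ Real.exp (-(η * δ / 8)) := by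
        have := Real.add_one_le_exp (-(η * δ / 8))
        linarith
      calc f (X (t + 1)) - f Xstar ≤ (1 - η * δ / 8) * (f (X t) - f Xstar) := h1
        _ ≤ Real.exp (-(η * δ / 8)) * (f (X t) - f Xstar) :=
            mul_le_mul_of_nonneg_right h2 (hh0 t)
        _ ≤ Real.exp (-(η * δ / 8)) *
              ((f (X 0) - f Xstar) * Real.exp (-(η * δ / 8) * t)) :=
            mul_le_mul_of_nonneg_left ih (Real.exp_pos _).le
        _ = (f (X 0) - f Xstar) * Real.exp (-(η * δ / 8) * (t + 1 : ℕ)) := by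
            rw [mul_left_comm, ← Real.exp_add]
            push_cast
            ring_nf
  refine (hexp t).trans (le_of_eq ?_)
  congr 2
  rw [hη]
  field_simp
  ring
end

section
/- Suppose X* is an optimal solution of min_{X∈F_{n,k}} f(X) satisfying the eigen-gap assumption with parameter δ > 0. Let {(X_t, V_t)}_{t≥1} be generated by the Frank-Wolfe method with line search: X₁ ∈ F_{n,k}, V_t ∈ argmin_{V∈P_{n,k}} ⟨V, ∇f(X_t)⟩, η_t ∈ argmin_{η∈[0,1]} f((1−η)X_t + ηV_t), and X_{t+1} = (1−η_t)X_t + η_tV_t. Then there exists a universal constant C > 0 and an iteration index T₀ ≤ C·k·(β/δ)³ such that for all t ≥ T₀: f(X_{t+1}) − f(X*) ≤ (f(X_t) − f(X*))·(1 − min{δ/(12β), 1/2}). -/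
/-!
Write `h_t = f (X t) - f X*`. The first-order optimality condition and the eigen-gap show that `X*`
is the projection onto the `k` bottom eigenvectors of `∇f(X*)`, and that
`⟨X - X*, ∇f(X*)⟩ ≥ (δ / 2) ‖X - X*‖²` on the Fantope (`optimum_growth`); by convexity `f` then has
quadratic growth with the same constant.

The standard `O(β k / t)` rate of Frank–Wolfe (`sublinear_rate`) together with quadratic growth
forces `‖∇f(X_t) - ∇f(X*)‖ ≤ δ / 15` after `O(k (β / δ)³)` iterations. From then on the gradient at
`X_t` itself has a spectral gap (`gap_stable`), so the dual gap `g_t = ⟨X_t - V_t, ∇f(X_t)⟩`, which is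
at least `h_t`, also dominates `(δ / 3) ‖X_t - V_t‖²`. This absorbs the quadratic term in the descent
inequality `h_{t+1} ≤ h_t - s g_t + s² β ‖X_t - V_t‖²` for `s` of order `δ / β`, which gives the linear
rate (`linear_step`).

If `10 β ≤ δ`, the bound on the burn-in may be smaller than `1`, so the contraction is needed from
the first iteration. There the perturbation bound `dist_le_of_perturbation` gives
`‖V_t - X*‖ ≤ ‖X_t - X*‖ / 5`, and a full step already halves `h_t`.
-/

open Matrix

section
variable {n k : ℕ}

/-! ### Frobenius norm and trace pairing -/

theorem frobNorm_nonneg (A : Matrix (Fin n) (Fin n) ℝ) : 0 ≤ frobNorm A := Real.sqrt_nonneg _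

theorem frobNorm_sq (A : Matrix (Fin n) (Fin n) ℝ) :
    frobNorm A ^ 2 = ∑ i, ∑ j, (A i j) ^ 2 :=
  Real.sq_sqrt (Finset.sum_nonneg fun _ _ => Finset.sum_nonneg fun _ _ => sq_nonneg _)

theorem trace_mul_eq_sum {A B : Matrix (Fin n) (Fin n) ℝ} (hB : B.IsSymm) :
    (A * B).trace = ∑ i, ∑ j, A i j * B i j := by
  simp only [Matrix.trace, Matrix.diag, Matrix.mul_apply]
  refine Finset.sum_congr rfl fun i _ => Finset.sum_congr rfl fun j _ => ?_
  rw [hB.apply]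

theorem frobNorm_sq_eq_trace {A : Matrix (Fin n) (Fin n) ℝ} (hA : A.IsSymm) :
    frobNorm A ^ 2 = (A * A).trace := by
  rw [frobNorm_sq, trace_mul_eq_sum hA]
  simp only [sq]

/-- Cauchy–Schwarz for the trace inner product. -/
theorem abs_trace_mul_le_s4 {A B : Matrix (Fin n) (Fin n) ℝ} (hB : B.IsSymm) :
    |(A * B).trace| ≤ frobNorm A * frobNorm B := by
  refine abs_le_of_sq_le_sq ?_ (mul_nonneg (frobNorm_nonneg _) (frobNorm_nonneg _))
  rw [mul_pow, frobNorm_sq, frobNorm_sq, trace_mul_eq_sum hB]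
  simp only [← Finset.sum_product']
  exact Finset.sum_mul_sq_le_sq_mul_sq _ _ _

theorem eq_of_frobNorm_sub_sq_nonpos {A B : Matrix (Fin n) (Fin n) ℝ}
    (h : frobNorm (A - B) ^ 2 ≤ 0) : A = B := by
  rw [frobNorm_sq] at h
  ext i j
  have h1 : ((A - B) i j) ^ 2 ≤ ∑ j, ((A - B) i j) ^ 2 :=
    Finset.single_le_sum (f := fun j => ((A - B) i j) ^ 2) (fun _ _ => sq_nonneg _)
      (Finset.mem_univ j)
  have h2 : ∑ j, ((A - B) i j) ^ 2 ≤ ∑ i, ∑ j, ((A - B) i j) ^ 2 :=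
    Finset.single_le_sum (f := fun i => ∑ j, ((A - B) i j) ^ 2)
      (fun _ _ => Finset.sum_nonneg fun _ _ => sq_nonneg _) (Finset.mem_univ i)
  have h3 : (A - B) i j = 0 := pow_eq_zero_iff two_ne_zero |>.1
    (le_antisymm (by linarith) (sq_nonneg _))
  simpa [sub_eq_zero] using h3

theorem frobNorm_sub_comm (A B : Matrix (Fin n) (Fin n) ℝ) :
    frobNorm (A - B) = frobNorm (B - A) := by
  unfold frobNorm
  congr 1
  refine Finset.sum_congr rfl fun i _ => Finset.sum_congr rfl fun j _ => ?_
  simp only [Matrix.sub_apply]; ring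

theorem trace_mul_nonneg_of_posSemidef {A B : Matrix (Fin n) (Fin n) ℝ}
    (hA : A.PosSemidef) (hB : B.PosSemidef) : 0 ≤ (A * B).trace := by
  open scoped MatrixOrder in
  obtain ⟨C, rfl⟩ := CStarAlgebra.nonneg_iff_eq_star_mul_self.mp hA.nonneg
  rw [Matrix.star_eq_conjTranspose]
  rw [Matrix.mul_assoc, Matrix.trace_mul_comm, Matrix.mul_assoc, ← Matrix.mul_assoc]
  exact (hB.mul_mul_conjTranspose_same C).trace_nonneg

/-! ### Geometry of the Fantope -/

theorem ProjSet.mem_fantope {P : Matrix (Fin n) (Fin n) ℝ} (h : P ∈ ProjSet n k) :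
    P ∈ Fantope n k := by
  obtain ⟨Q, hQ, rfl⟩ := h
  have hS : (Q * Qᵀ).IsSymm := by simp [Matrix.IsSymm, Matrix.transpose_mul]
  have hI : (Q * Qᵀ) * (Q * Qᵀ) = Q * Qᵀ := by
    rw [Matrix.mul_assoc, ← Matrix.mul_assoc Qᵀ, hQ, Matrix.one_mul]
  refine ⟨hS, ?_, ?_, ?_⟩
  · simpa using Matrix.posSemidef_self_mul_conjTranspose Q
  · have h1 : (1 - Q * Qᵀ) = (1 - Q * Qᵀ) * (1 - Q * Qᵀ)ᴴ := by
      rw [Matrix.conjTranspose_eq_transpose_of_trivial, Matrix.transpose_sub,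
        Matrix.transpose_one, hS.eq, Matrix.sub_mul, Matrix.mul_sub, Matrix.mul_sub, hI]
      simp
    rw [h1]
    exact Matrix.posSemidef_self_mul_conjTranspose _
  · rw [Matrix.trace_mul_comm, hQ]; simp

theorem Fantope.trace_sq_le {X : Matrix (Fin n) (Fin n) ℝ} (h : X ∈ Fantope n k) :
    (X * X).trace ≤ k := by
  have := trace_mul_nonneg_of_posSemidef h.2.1 h.2.2.1
  rw [Matrix.mul_sub, Matrix.mul_one, Matrix.trace_sub, h.2.2.2] at this
  linarith

/-- Points of the Fantope have squared norm at most `k`, so the defect `k - ⟨X, Y⟩` controls the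
distance; for projections this is an equality. -/
theorem Fantope.dist_sq_le {X Y : Matrix (Fin n) (Fin n) ℝ} (hX : X ∈ Fantope n k)
    (hY : Y ∈ Fantope n k) : frobNorm (X - Y) ^ 2 ≤ 2 * (k - (X * Y).trace) := by
  rw [frobNorm_sq_eq_trace (hX.1.sub hY.1)]
  have h1 := Fantope.trace_sq_le hX
  have h2 := Fantope.trace_sq_le hY
  have h3 := Matrix.trace_mul_comm Y X
  simp only [Matrix.sub_mul, Matrix.mul_sub, Matrix.trace_sub]
  linarith

theorem Fantope.dist_sq_le_two_mul {X Y : Matrix (Fin n) (Fin n) ℝ} (hX : X ∈ Fantope n k)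
    (hY : Y ∈ Fantope n k) : frobNorm (X - Y) ^ 2 ≤ 2 * k := by
  have h1 := Fantope.dist_sq_le hX hY
  have h2 := trace_mul_nonneg_of_posSemidef hX.2.1 hY.2.1
  linarith

theorem Fantope.segment_mem {X Y : Matrix (Fin n) (Fin n) ℝ} (hX : X ∈ Fantope n k)
    (hY : Y ∈ Fantope n k) {s : ℝ} (h0 : 0 ≤ s) (h1 : s ≤ 1) :
    (1 - s) • X + s • Y ∈ Fantope n k := by
  have h1' : 0 ≤ 1 - s := by linarith
  refine ⟨(hX.1.smul _).add (hY.1.smul _), (hX.2.1.smul h1').add (hY.2.1.smul h0), ?_, ?_⟩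
  · have : 1 - ((1 - s) • X + s • Y) = (1 - s) • (1 - X) + s • (1 - Y) := by
      module
    rw [this]
    exact (hX.2.2.1.smul h1').add (hY.2.2.1.smul h0)
  · rw [Matrix.trace_add, Matrix.trace_smul, Matrix.trace_smul, hX.2.2.2, hY.2.2.2]
    simp only [smul_eq_mul]; ring

/-! ### Spectral gap and quadratic growth -/

/-- Spectral theorem with the eigenvalues in increasing order, matched with `eigval`: the `j`-th
largest eigenvalue has (zero-based) index `n - j`. -/
theorem exists_sorted_diagonalization (B : Matrix (Fin n) (Fin n) ℝ) (hB : B.IsSymm) :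
    ∃ (b : Fin n → ℝ) (W : Matrix (Fin n) (Fin n) ℝ), Monotone b ∧ Wᵀ * W = 1 ∧
      B = W * diagonal b * Wᵀ ∧ ∀ (j : ℕ) (hj : n - j < n), eigval B j = b ⟨n - j, hj⟩ := by
  have hH : B.IsHermitian := by
    rwa [Matrix.IsHermitian, Matrix.conjTranspose_eq_transpose_of_trivial]
  set σ := Tuple.sort hH.eigenvalues with hσ
  set U : Matrix (Fin n) (Fin n) ℝ := (hH.eigenvectorUnitary).1 with hU
  have hUU : Uᵀ * U = 1 := by
    have := Matrix.mem_unitaryGroup_iff'.1 hH.eigenvectorUnitary.2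
    simpa [Matrix.star_eq_conjTranspose] using this
  have hspec : B = U * diagonal hH.eigenvalues * Uᵀ := by
    have := hH.spectral_theorem
    simpa [Unitary.conjStarAlgAut_apply, Matrix.star_eq_conjTranspose, Function.comp_def] using this
  refine ⟨hH.eigenvalues ∘ σ, U.submatrix id σ, Tuple.monotone_sort _, ?_, ?_, ?_⟩
  · rw [Matrix.transpose_submatrix, ← Matrix.submatrix_mul _ _ _ _ _ Function.bijective_id, hUU]
    simp
  · have : diagonal (hH.eigenvalues ∘ σ) = (diagonal hH.eigenvalues).submatrix σ σ := by
      rw [Matrix.submatrix_diagonal_equiv]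
    rw [this, Matrix.transpose_submatrix, Matrix.submatrix_mul_equiv,
      Matrix.submatrix_mul_equiv, ← hspec]
    simp
  · intro j hj
    rw [eigval, dif_pos hH, dif_pos hj]

/-- Pairing `X` with a matrix diagonal in the basis `W` only sees the diagonal of `X` in `W`. -/
theorem trace_mul_conj_diagonal (X W : Matrix (Fin n) (Fin n) ℝ) (c : Fin n → ℝ) :
    (X * (W * diagonal c * Wᵀ)).trace = ∑ i, (Wᵀ * X * W) i i * c i := by
  rw [← Matrix.mul_assoc, Matrix.trace_mul_comm, ← Matrix.mul_assoc, ← Matrix.mul_assoc]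
  simp [Matrix.trace, Matrix.mul_diagonal]

/-- The orthogonal projection onto the span of the `k` columns of `W` indexed by `S`. -/
theorem conj_indicator_mem_projSet {W : Matrix (Fin n) (Fin n) ℝ} (hW : Wᵀ * W = 1)
    (S : Finset (Fin n)) (hS : S.card = k) :
    W * diagonal (fun i => if i ∈ S then (1 : ℝ) else 0) * Wᵀ ∈ ProjSet n k := by
  refine ⟨W.submatrix id (S.orderEmbOfFin hS), ?_, ?_⟩
  · rw [Matrix.transpose_submatrix, ← Matrix.submatrix_mul _ _ _ _ _ Function.bijective_id, hW]
    exact Matrix.submatrix_one _ (S.orderEmbOfFin hS).injective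
  · ext i j
    rw [Matrix.mul_apply, Matrix.mul_apply]
    simp only [Matrix.mul_diagonal, Matrix.transpose_apply, Matrix.submatrix_apply, id]
    have : S = Finset.univ.map (S.orderEmbOfFin hS).toEmbedding := by
      simp
    have h2 : ∀ g : Fin n → ℝ, ∑ x ∈ S, g x = ∑ x, g (S.orderEmbOfFin hS x) := by
      intro g
      conv_lhs => rw [this]
      rw [Finset.sum_map]; rfl
    rw [← h2 fun x => W i x * W j x, ← Finset.sum_filter_add_sum_filter_not Finset.univ (· ∈ S)]
    rw [Finset.sum_eq_zero (s := Finset.univ.filter (· ∉ S)), add_zero]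
    · simp only [Finset.filter_mem_eq_inter, Finset.univ_inter]
      refine Finset.sum_congr rfl fun x hx => by simp [hx]
    · intro x hx
      simp [(Finset.mem_filter.1 hx).2]


/-- For a symmetric `B` with gap `d` between its `k`-th and `(k+1)`-st smallest eigenvalues, `P` is
the projection onto the `k` bottom eigenvectors, and `P'` is obtained from `P` by exchanging the
`k`-th eigenvector for the `(k+1)`-st. `P` minimizes `⟨·, B⟩` on the Fantope with linear growth in
the defect `k - ⟨X, P⟩`, whereas `P'` is a projection at distance `√2` from `P` which is worse
by exactly `d`. -/
theorem exists_gap_projection (B : Matrix (Fin n) (Fin n) ℝ) (hB : B.IsSymm) (hk : 0 < k)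
    (hkn : k < n) :
    ∃ d : ℝ, d = eigval B (n - k) - eigval B (n - k + 1) ∧ 0 ≤ d ∧
      ∃ P ∈ ProjSet n k, ∃ P' ∈ ProjSet n k,
        (∀ X ∈ Fantope n k, d * (k - (X * P).trace) ≤ ((X - P) * B).trace) ∧
        frobNorm (P' - P) ^ 2 = 2 ∧ ((P' - P) * B).trace = d := by
  obtain ⟨b, W, hb, hW, hBW, hev⟩ := exists_sorted_diagonalization B hB
  have hdiag : ∀ c : Fin n → ℝ, Wᵀ * (W * diagonal c * Wᵀ) * W = diagonal c := by
    intro c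
    calc Wᵀ * (W * diagonal c * Wᵀ) * W = (Wᵀ * W) * diagonal c * (Wᵀ * W) := by
          simp only [Matrix.mul_assoc]
      _ = diagonal c := by rw [hW, Matrix.one_mul, Matrix.mul_one]
  have hWW : W * Wᵀ = 1 := mul_eq_one_comm.1 hW
  set a : Fin n := ⟨k - 1, by omega⟩ with ha
  set z : Fin n := ⟨k, hkn⟩ with hz
  have haz : a ≠ z := by simp only [ha, hz, ne_eq, Fin.mk.injEq]; omega
  have e1 : eigval B (n - k) = b z := by
    rw [hev (n - k) (by omega)]; congr 1; simp only [hz, Fin.mk.injEq]; omega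
  have e2 : eigval B (n - k + 1) = b a := by
    rw [hev (n - k + 1) (by omega)]; congr 1; simp only [ha, Fin.mk.injEq]; omega
  set S : Finset (Fin n) := Finset.univ.filter fun i => i.val < k with hS
  have hScard : S.card = k := by
    rw [hS, Fin.card_filter_val_lt]; omega
  have haS : a ∈ S := by simp only [hS, ha, Finset.mem_filter, Finset.mem_univ, true_and]; omega
  have hzS : z ∉ S := by simp [hS, hz]
  set S' : Finset (Fin n) := insert z (S.erase a) with hS'
  have hS'card : S'.card = k := by
    rw [hS', Finset.card_insert_of_notMem (by simp [hzS]), Finset.card_erase_of_mem haS]; omega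
  have hdiff : W * diagonal (fun i => if i ∈ S' then (1 : ℝ) else 0) * Wᵀ -
      W * diagonal (fun i => if i ∈ S then (1 : ℝ) else 0) * Wᵀ =
      W * diagonal (fun i => (if i = z then (1 : ℝ) else 0) - (if i = a then 1 else 0)) * Wᵀ := by
    rw [← Matrix.sub_mul, ← Matrix.mul_sub, Matrix.diagonal_sub]
    congr 3
    funext i
    by_cases hiz : i = z
    · subst hiz; simp [hS', hzS, haz.symm]
    · by_cases hia : i = a
      · subst hia; simp [hS', haS, haz]
      · simp [hS', hiz, hia]
  have hba : b a ≤ b z := hb (by simp only [ha, hz, Fin.mk_le_mk]; omega)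
  refine ⟨b z - b a, by rw [e1, e2], by linarith, _, conj_indicator_mem_projSet hW S hScard,
    _, conj_indicator_mem_projSet hW S' hS'card, ?_, ?_, ?_⟩
  · intro X hX
    -- The diagonal entries of `X` in the eigenbasis lie in `[0, 1]` and sum to `k`.
    have x0 : ∀ i, 0 ≤ (Wᵀ * X * W) i i := fun i =>
      (hX.2.1.conjTranspose_mul_mul_same W).diag_nonneg
    have x1 : ∀ i, (Wᵀ * X * W) i i ≤ 1 := by
      intro i
      have h := (hX.2.2.1.conjTranspose_mul_mul_same W).diag_nonneg (i := i)
      rw [Matrix.conjTranspose_eq_transpose_of_trivial, Matrix.mul_sub, Matrix.mul_one,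
        Matrix.sub_mul, hW, Matrix.sub_apply, Matrix.one_apply_eq] at h
      linarith
    have xs : ∑ i, (Wᵀ * X * W) i i = k := by
      rw [← hX.2.2.2]
      change (Wᵀ * X * W).trace = _
      rw [Matrix.trace_mul_comm, ← Matrix.mul_assoc, hWW, Matrix.one_mul]
    have hSsum : ∑ i, (if i ∈ S then (1 : ℝ) else 0) = k := by
      simp [hScard]
    rw [hBW, Matrix.sub_mul, Matrix.trace_sub, trace_mul_conj_diagonal, trace_mul_conj_diagonal,
      trace_mul_conj_diagonal, hdiag]
    simp only [Matrix.diagonal_apply_eq]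
    generalize hx : (fun i => (Wᵀ * X * W) i i) = x at *
    have hx' : ∀ i, (Wᵀ * X * W) i i = x i := fun i => congrFun hx i
    simp only [hx'] at *
    have key : ∀ i, b z * (x i - x i * (if i ∈ S then 1 else 0)) -
        b a * ((if i ∈ S then 1 else 0) - x i * (if i ∈ S then 1 else 0)) ≤
        x i * b i - (if i ∈ S then 1 else 0) * b i := by
      intro i
      by_cases hi : i ∈ S
      · simp only [hi, if_true]
        have : b i ≤ b a := hb (by
          simp only [hS, Finset.mem_filter, Finset.mem_univ, true_and] at hi
          rw [Fin.le_def]; simp only [ha]; omega)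
        nlinarith [x1 i]
      · simp only [hi, if_false]
        have : b z ≤ b i := hb (by
          simp only [hS, Finset.mem_filter, Finset.mem_univ, true_and] at hi
          rw [Fin.le_def]; simp only [hz]; omega)
        nlinarith [x0 i]
    have hsum := Finset.sum_le_sum fun i (_ : i ∈ Finset.univ) => key i
    simp only [Finset.sum_sub_distrib, ← Finset.mul_sum] at hsum
    rw [xs, hSsum] at hsum
    linarith
  · rw [frobNorm_sq_eq_trace, hdiff, trace_mul_conj_diagonal, hdiag]
    · simp only [Matrix.diagonal_apply_eq]
      have : ∀ i, ((if i = z then (1 : ℝ) else 0) - (if i = a then 1 else 0)) *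
          ((if i = z then (1 : ℝ) else 0) - (if i = a then 1 else 0)) =
          (if i = z then (1 : ℝ) else 0) + (if i = a then 1 else 0) := by
        intro i
        by_cases hiz : i = z
        · subst hiz; simp [haz.symm]
        · by_cases hia : i = a
          · simp [hia, haz]
          · simp [hiz, hia]
      simp only [this, Finset.sum_add_distrib]
      simp; norm_num
    · exact (ProjSet.mem_fantope (conj_indicator_mem_projSet hW S' hS'card)).1.sub
        (ProjSet.mem_fantope (conj_indicator_mem_projSet hW S hScard)).1
  · rw [hdiff, hBW, trace_mul_conj_diagonal, hdiag]
    simp [sub_mul, Finset.sum_sub_distrib]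

/-- Linear growth in the defect implies quadratic growth in the Frobenius distance. -/
theorem half_gap_mul_dist_sq_le {P B : Matrix (Fin n) (Fin n) ℝ} {d : ℝ} (hd : 0 ≤ d)
    (hP : P ∈ ProjSet n k)
    (h : ∀ X ∈ Fantope n k, d * (k - (X * P).trace) ≤ ((X - P) * B).trace) :
    ∀ X ∈ Fantope n k, d / 2 * frobNorm (X - P) ^ 2 ≤ ((X - P) * B).trace := by
  intro X hX
  have h1 := h X hX
  have h2 := mul_le_mul_of_nonneg_left (Fantope.dist_sq_le hX (ProjSet.mem_fantope hP)) hd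
  linarith

/-- A Davis–Kahan type bound: if `P` is worse than `Q` for `A` by at least `(δ / 2) ‖P - Q‖²`, but no
worse than `Q` for a perturbation `B` of `A`, then `P` is close to `Q` and only slightly worse for
`A`. -/
theorem dist_le_of_perturbation {P Q A B : Matrix (Fin n) (Fin n) ℝ} {δ ε : ℝ}
    (hA : A.IsSymm) (hB : B.IsSymm) (hε : frobNorm (B - A) ≤ ε)
    (hgrow : δ / 2 * frobNorm (P - Q) ^ 2 ≤ ((P - Q) * A).trace)
    (hmin : ((P - Q) * B).trace ≤ 0) :
    ((P - Q) * A).trace ≤ frobNorm (P - Q) * ε ∧ δ / 2 * frobNorm (P - Q) ≤ ε := by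
  have h1 := (abs_le.1 (abs_trace_mul_le_s4 (A := P - Q) (hB.sub hA))).1
  rw [Matrix.mul_sub, Matrix.trace_sub] at h1
  have h2 := mul_le_mul_of_nonneg_left hε (frobNorm_nonneg (P - Q))
  have h3 : ((P - Q) * A).trace ≤ frobNorm (P - Q) * ε := by linarith
  refine ⟨h3, ?_⟩
  rcases (frobNorm_nonneg (P - Q)).eq_or_lt with h0 | h0
  · rw [← h0, mul_zero]; exact (frobNorm_nonneg _).trans hε
  · exact le_of_mul_le_mul_left (by nlinarith) h0

/-- Stability of the gap. If `⟨·, A⟩` grows quadratically away from `Q` with constant `δ / 2` and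
`B` is within `δ / 15` of `A` in Frobenius norm, then `⟨·, B⟩` grows quadratically away from its
minimizer `V` with constant `δ / 3`. In place of Weyl's inequality, the gap of `B` is bounded below
by comparing the bottom projection `P` of `B` with its exchange `P'`: `P` is close to `Q`, hence
`P'` is far from `Q`, and so `P'` is much worse than `P` for `A`, and therefore also for `B`. -/
theorem gap_stable {A B Q V : Matrix (Fin n) (Fin n) ℝ} {δ ε : ℝ} (hk : 0 < k) (hkn : k < n)
    (hA : A.IsSymm) (hB : B.IsSymm) (hQ : Q ∈ Fantope n k) (hδ : 0 < δ)
    (hgrow : ∀ X ∈ Fantope n k, δ / 2 * frobNorm (X - Q) ^ 2 ≤ ((X - Q) * A).trace)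
    (hε : frobNorm (B - A) ≤ ε) (hεδ : ε ≤ δ / 15)
    (hV : V ∈ ProjSet n k) (hVmin : ∀ P ∈ ProjSet n k, (V * B).trace ≤ (P * B).trace) :
    ∀ X ∈ Fantope n k, δ / 3 * frobNorm (X - V) ^ 2 ≤ ((X - V) * B).trace := by
  obtain ⟨d, -, hd0, P, hP, P', hP', hgap, hr2, hswap⟩ := exists_gap_projection B hB hk hkn
  have hPg := half_gap_mul_dist_sq_le hd0 hP hgap
  have hPQ : ((P - Q) * B).trace ≤ 0 := by
    have h1 := hPg Q hQ
    have h2 := mul_nonneg (div_nonneg hd0 zero_le_two) (sq_nonneg (frobNorm (Q - P)))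
    simp only [Matrix.sub_mul, Matrix.trace_sub] at *
    linarith
  obtain ⟨hm1, hm2⟩ := dist_le_of_perturbation hA hB hε (hgrow P (ProjSet.mem_fantope hP)) hPQ
  have hε0 : 0 ≤ ε := (frobNorm_nonneg _).trans hε
  have hm0 := frobNorm_nonneg (P - Q)
  have hr0 := frobNorm_nonneg (P' - P)
  have hsymm1 := (ProjSet.mem_fantope hP').1.sub (ProjSet.mem_fantope hP).1
  have hsymm2 := (ProjSet.mem_fantope hP).1.sub hQ.1
  have hfar : 2 - 2 * (frobNorm (P' - P) * frobNorm (P - Q)) ≤ frobNorm (P' - Q) ^ 2 := by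
    have h1 := (abs_le.1 (abs_trace_mul_le_s4 (A := P' - P) hsymm2)).1
    have h2 : frobNorm (P' - Q) ^ 2 = frobNorm (P' - P) ^ 2 +
        2 * ((P' - P) * (P - Q)).trace + frobNorm (P - Q) ^ 2 := by
      rw [frobNorm_sq_eq_trace hsymm1, frobNorm_sq_eq_trace hsymm2,
        frobNorm_sq_eq_trace ((ProjSet.mem_fantope hP').1.sub hQ.1)]
      have h3 := Matrix.trace_mul_comm (P' - P) (P - Q)
      have h4 : P' - Q = (P' - P) + (P - Q) := by abel
      rw [h4]
      simp only [Matrix.add_mul, Matrix.mul_add, Matrix.trace_add]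
      linarith
    rw [h2, hr2]
    nlinarith [sq_nonneg (frobNorm (P - Q))]
  have hE := (abs_le.1 (abs_trace_mul_le_s4 (A := P' - P) (hB.sub hA))).1
  have hE2 := mul_le_mul_of_nonneg_left hε hr0
  have hg' := hgrow P' (ProjSet.mem_fantope hP')
  have hdlow : δ / 2 * frobNorm (P' - Q) ^ 2 - frobNorm (P - Q) * ε - frobNorm (P' - P) * ε ≤ d := by
    rw [← hswap]
    simp only [Matrix.mul_sub, Matrix.sub_mul, Matrix.trace_sub] at *
    linarith
  have hd : 2 * δ / 3 ≤ d := by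
    generalize frobNorm (P - Q) = m at *
    generalize frobNorm (P' - P) = r at *
    have hr : r ≤ 3 / 2 := by nlinarith
    have hm3 : m ≤ 2 / 15 := by
      by_contra hcon
      push Not at hcon
      nlinarith
    have h1 : δ / 2 * (2 - 2 * (r * m)) ≤ δ / 2 * frobNorm (P' - Q) ^ 2 :=
      mul_le_mul_of_nonneg_left hfar (by linarith)
    have h2 : r * (δ / 2 * m) ≤ 3 / 2 * (δ / 15) :=
      mul_le_mul hr (hm2.trans hεδ) (by positivity) (by norm_num)
    have h3 : m * ε ≤ 2 / 15 * (δ / 15) := mul_le_mul hm3 hεδ hε0 (by norm_num)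
    have h4 : r * ε ≤ 3 / 2 * (δ / 15) := mul_le_mul hr hεδ hε0 (by norm_num)
    nlinarith
  -- The gap of `B` is positive, so its minimizer is unique.
  have hVP : V = P := by
    apply eq_of_frobNorm_sub_sq_nonpos
    have h1 := hPg V (ProjSet.mem_fantope hV)
    have h2 := hVmin P hP
    rw [Matrix.sub_mul, Matrix.trace_sub] at h1
    have h3 : 0 < d := by linarith
    by_contra hcon
    push Not at hcon
    have := mul_pos (half_pos h3) hcon
    linarith
  subst hVP
  intro X hX
  have h1 := hPg X hX
  nlinarith [sq_nonneg (frobNorm (X - V))]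

/-! ### Descent estimates -/

/-- The usual `O(1 / t)` rate of Frank–Wolfe, obtained from the steps `s = 2 / (t + 1)`. -/
theorem sublinear_rate {h : ℕ → ℝ} {c : ℝ} (hc : 0 ≤ c)
    (hstep : ∀ t, ∀ s ∈ Set.Icc (0 : ℝ) 1, h (t + 1) ≤ (1 - s) * h t + c * s ^ 2) :
    ∀ t : ℕ, 1 ≤ t → h t ≤ 4 * c / (t + 1) := by
  intro t ht
  induction t, ht using Nat.le_induction with
  | base =>
    have := hstep 0 1 ⟨zero_le_one, le_rfl⟩
    norm_num at this ⊢
    linarith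
  | succ t ht ih =>
    have ht' : (1 : ℝ) ≤ t := by exact_mod_cast ht
    have hs1 : 2 / ((t : ℝ) + 1) ≤ 1 := by rw [div_le_one (by linarith)]; linarith
    have h1 := hstep t (2 / (t + 1)) ⟨by positivity, hs1⟩
    have h2 := mul_le_mul_of_nonneg_left ih (sub_nonneg.2 hs1)
    have h3 : (1 - 2 / ((t : ℝ) + 1)) * (4 * c / (t + 1)) + c * (2 / ((t : ℝ) + 1)) ^ 2
        ≤ 4 * c / ((t + 1 : ℕ) + 1) := by
      have h4 : (1 - 2 / ((t : ℝ) + 1)) * (4 * c / (t + 1)) + c * (2 / ((t : ℝ) + 1)) ^ 2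
        = 4 * c * (t / (t + 1) ^ 2) := by field_simp; ring
      have hc4 : 0 ≤ 4 * c := by linarith
      rw [h4, div_eq_mul_one_div (4 * c)]
      refine mul_le_mul_of_nonneg_left ?_ hc4
      rw [div_le_div_iff₀ (by positivity) (by positivity)]
      push_cast
      nlinarith
    linarith

/-- Descent lemma with constant `β` rather than `β / 2`; this weaker form follows from the
first-order convexity inequality at `Y` and Cauchy–Schwarz, without integration. -/
theorem smooth_upper_bound {f : Matrix (Fin n) (Fin n) ℝ → ℝ}
    {grad : Matrix (Fin n) (Fin n) ℝ → Matrix (Fin n) (Fin n) ℝ} {β : ℝ}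
    (hconv : ∀ X Y : Matrix (Fin n) (Fin n) ℝ, X.IsSymm → Y.IsSymm →
      f X + (grad X * (Y - X)).trace ≤ f Y)
    (hsmooth : ∀ X Y : Matrix (Fin n) (Fin n) ℝ, X.IsSymm → Y.IsSymm →
      frobNorm (grad X - grad Y) ≤ β * frobNorm (X - Y))
    {X Y : Matrix (Fin n) (Fin n) ℝ} (hX : X.IsSymm) (hY : Y.IsSymm) :
    f Y ≤ f X + (grad X * (Y - X)).trace + β * frobNorm (Y - X) ^ 2 := by
  have h1 := hconv Y X hY hX
  have h2 := (abs_le.1 (abs_trace_mul_le_s4 (A := grad Y - grad X) (hY.sub hX))).2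
  have h3 := mul_le_mul_of_nonneg_right (hsmooth Y X hY hX) (frobNorm_nonneg (Y - X))
  simp only [Matrix.mul_sub, Matrix.sub_mul, Matrix.trace_sub] at *
  nlinarith

theorem frobNorm_smul_sq (s : ℝ) (A : Matrix (Fin n) (Fin n) ℝ) :
    frobNorm (s • A) ^ 2 = s ^ 2 * frobNorm A ^ 2 := by
  simp only [frobNorm_sq, Matrix.smul_apply, smul_eq_mul, mul_pow, Finset.mul_sum]

theorem segment_upper_bound {f : Matrix (Fin n) (Fin n) ℝ → ℝ}
    {grad : Matrix (Fin n) (Fin n) ℝ → Matrix (Fin n) (Fin n) ℝ} {β : ℝ}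
    (hconv : ∀ X Y : Matrix (Fin n) (Fin n) ℝ, X.IsSymm → Y.IsSymm →
      f X + (grad X * (Y - X)).trace ≤ f Y)
    (hsmooth : ∀ X Y : Matrix (Fin n) (Fin n) ℝ, X.IsSymm → Y.IsSymm →
      frobNorm (grad X - grad Y) ≤ β * frobNorm (X - Y))
    {X V : Matrix (Fin n) (Fin n) ℝ} (hX : X.IsSymm) (hV : V.IsSymm) (s : ℝ) :
    f ((1 - s) • X + s • V) ≤
      f X - s * ((X - V) * grad X).trace + s ^ 2 * (β * frobNorm (X - V) ^ 2) := by
  have h := smooth_upper_bound hconv hsmooth hX ((hX.smul (1 - s)).add (hV.smul s))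
  have h1 : (1 - s) • X + s • V - X = s • (V - X) := by module
  have h2 := Matrix.trace_mul_comm (X - V) (grad X)
  rw [h1, frobNorm_smul_sq, Matrix.mul_smul, Matrix.trace_smul, smul_eq_mul] at h
  rw [frobNorm_sub_comm X V, h2]
  simp only [Matrix.mul_sub, Matrix.trace_sub] at *
  linarith

theorem first_order_optimality {f : Matrix (Fin n) (Fin n) ℝ → ℝ}
    {grad : Matrix (Fin n) (Fin n) ℝ → Matrix (Fin n) (Fin n) ℝ} {β : ℝ} (hβ : 0 < β)
    (hconv : ∀ X Y : Matrix (Fin n) (Fin n) ℝ, X.IsSymm → Y.IsSymm →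
      f X + (grad X * (Y - X)).trace ≤ f Y)
    (hsmooth : ∀ X Y : Matrix (Fin n) (Fin n) ℝ, X.IsSymm → Y.IsSymm →
      frobNorm (grad X - grad Y) ≤ β * frobNorm (X - Y))
    {Q : Matrix (Fin n) (Fin n) ℝ} (hQ : Q ∈ Fantope n k)
    (hopt : ∀ X ∈ Fantope n k, f Q ≤ f X) {P : Matrix (Fin n) (Fin n) ℝ}
    (hP : P ∈ Fantope n k) : ((Q - P) * grad Q).trace ≤ 0 := by
  by_contra hcon
  push Not at hcon
  have hstep : ∀ s : ℝ, 0 ≤ s → s ≤ 1 →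
      s * ((Q - P) * grad Q).trace ≤ s ^ 2 * (β * frobNorm (Q - P) ^ 2) := by
    intro s h0 h1
    have h2 := hopt _ (Fantope.segment_mem hQ hP h0 h1)
    have h3 := segment_upper_bound hconv hsmooth hQ.1 hP.1 s
    linarith
  generalize ((Q - P) * grad Q).trace = g at *
  have hD : 0 ≤ β * frobNorm (Q - P) ^ 2 := by positivity
  generalize β * frobNorm (Q - P) ^ 2 = D at *
  -- The step `g / (g + D)` is small enough for the linear term to dominate.
  have h := hstep (g / (g + D)) (by positivity) (by rw [div_le_one (by linarith)]; linarith)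
  have hs : 0 < g / (g + D) := by positivity
  have h5 : g ≤ g / (g + D) * D := by
    refine le_of_mul_le_mul_left ?_ hs
    nlinarith
  rw [div_mul_eq_mul_div, le_div_iff₀ (by linarith)] at h5
  nlinarith

/-- Under the eigen-gap assumption a first-order stationary point is the bottom projection of its
gradient, and the linearized objective grows quadratically away from it. -/
theorem optimum_growth {A Q : Matrix (Fin n) (Fin n) ℝ} {δ : ℝ} (hk : 0 < k) (hkn : k < n)
    (hA : A.IsSymm) (hQ : Q ∈ Fantope n k) (hδ : 0 < δ)
    (hgap : δ ≤ eigval A (n - k) - eigval A (n - k + 1))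
    (hopt : ∀ P ∈ Fantope n k, ((Q - P) * A).trace ≤ 0) :
    Q ∈ ProjSet n k ∧
      ∀ X ∈ Fantope n k, δ / 2 * frobNorm (X - Q) ^ 2 ≤ ((X - Q) * A).trace := by
  obtain ⟨d, hd, hd0, P, hP, -, -, hg, -, -⟩ := exists_gap_projection A hA hk hkn
  have hPg := half_gap_mul_dist_sq_le hd0 hP hg
  rw [← hd] at hgap
  have hQP : Q = P := by
    apply eq_of_frobNorm_sub_sq_nonpos
    have h1 := hPg Q hQ
    have h2 := hopt P (ProjSet.mem_fantope hP)
    by_contra hcon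
    push Not at hcon
    have := mul_pos (half_pos (hδ.trans_le hgap)) hcon
    linarith
  subst hQP
  refine ⟨hP, fun X hX => ?_⟩
  have h1 := hPg X hX
  nlinarith [sq_nonneg (frobNorm (X - Q))]

/-- One step in the regime where the dual gap `g` dominates `δ / 3` times the squared distance `D`
between the iterate and the oracle point. The step `s = δ / (6 * β)`, or `s = 1` if that exceeds
`1`, yields the contraction. -/
theorem linear_step {h h' g D β δ : ℝ} (hβ : 0 < β) (hδ : 0 < δ) (h0 : 0 ≤ h)
    (hhg : h ≤ g) (hDg : δ / 3 * D ≤ g)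
    (hstep : ∀ s ∈ Set.Icc (0 : ℝ) 1, h' ≤ h - s * g + s ^ 2 * (β * D)) :
    h' ≤ h * (1 - min (δ / (12 * β)) (1 / 2)) := by
  have hbD : β * D ≤ 3 * β / δ * g := by
    rw [div_mul_eq_mul_div, le_div_iff₀ hδ]; nlinarith
  rcases le_total (δ / (6 * β)) 1 with hs | hs
  · have h1 := hstep (δ / (6 * β)) ⟨by positivity, hs⟩
    have h2 := mul_le_mul_of_nonneg_left hbD (sq_nonneg (δ / (6 * β)))
    have h3 : (δ / (6 * β)) ^ 2 * (3 * β / δ * g) = δ / (12 * β) * g := by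
      field_simp; ring
    have h4 : δ / (6 * β) * g = 2 * (δ / (12 * β) * g) := by field_simp; ring
    have h5 := min_le_left (δ / (12 * β)) (1 / 2)
    have h6 : δ / (12 * β) * h ≤ δ / (12 * β) * g :=
      mul_le_mul_of_nonneg_left hhg (by positivity)
    nlinarith
  · have h1 := hstep 1 ⟨by norm_num, le_refl _⟩
    have h2 := min_le_right (δ / (12 * β)) (1 / 2)
    have h3 : 3 * β / δ ≤ 1 / 2 := by
      rw [le_div_iff₀ (by positivity)] at hs
      rw [div_le_iff₀ hδ]; linarith
    have h4 : 3 * β / δ * g ≤ 1 / 2 * g := mul_le_mul_of_nonneg_right h3 (h0.trans hhg)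
    nlinarith

theorem frobNorm_sub_sq_le (X V Q : Matrix (Fin n) (Fin n) ℝ) :
    frobNorm (X - V) ^ 2 ≤ 2 * frobNorm (X - Q) ^ 2 + 2 * frobNorm (V - Q) ^ 2 := by
  simp only [frobNorm_sq, Finset.mul_sum, ← Finset.sum_add_distrib, Matrix.sub_apply]
  refine Finset.sum_le_sum fun i _ => Finset.sum_le_sum fun j _ => ?_
  nlinarith [sq_nonneg (X i j - Q i j + (V i j - Q i j))]

end

theorem stmt4 : ∃ C : ℝ, 0 < C ∧
    ∀ (n k : ℕ) (hk : 0 < k) (hkn : k < n)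
    (f : Matrix (Fin n) (Fin n) ℝ → ℝ)
    (grad : Matrix (Fin n) (Fin n) ℝ → Matrix (Fin n) (Fin n) ℝ)
    (β : ℝ) (hβ : 0 < β)
    (hgradSymm : ∀ X : Matrix (Fin n) (Fin n) ℝ, (grad X).IsSymm)
    (hconv : ∀ X Y : Matrix (Fin n) (Fin n) ℝ, X.IsSymm → Y.IsSymm →
      f X + (grad X * (Y - X)).trace ≤ f Y)
    (hsmooth : ∀ X Y : Matrix (Fin n) (Fin n) ℝ, X.IsSymm → Y.IsSymm →
      frobNorm (grad X - grad Y) ≤ β * frobNorm (X - Y))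
    (Xstar : Matrix (Fin n) (Fin n) ℝ)
    (hXstarMem : Xstar ∈ Fantope n k)
    (hXstarOpt : ∀ X ∈ Fantope n k, f Xstar ≤ f X)
    (δ : ℝ) (hδ : 0 < δ)
    (hgap : δ ≤ eigval (grad Xstar) (n - k) - eigval (grad Xstar) (n - k + 1))
    (X V : ℕ → Matrix (Fin n) (Fin n) ℝ) (η : ℕ → ℝ)
    (hX0mem : X 0 ∈ Fantope n k)
    (hV : ∀ t : ℕ, V t ∈ ProjSet n k ∧
      ∀ P ∈ ProjSet n k, (V t * grad (X t)).trace ≤ (P * grad (X t)).trace)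
    (hητ : ∀ t : ℕ, η t ∈ Set.Icc (0 : ℝ) 1 ∧
      ∀ s ∈ Set.Icc (0 : ℝ) 1,
        f ((1 - η t) • X t + η t • V t) ≤ f ((1 - s) • X t + s • V t))
    (hXrec : ∀ t : ℕ, X (t + 1) = (1 - η t) • X t + η t • V t),
    ∃ T0 : ℕ, (T0 : ℝ) ≤ C * k * (β / δ) ^ 3 ∧
      ∀ t : ℕ, T0 ≤ t →
        f (X (t + 1)) - f Xstar ≤
          (f (X t) - f Xstar) * (1 - min (δ / (12 * β)) (1 / 2)) := by
  refine ⟨5000, by norm_num, ?_⟩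
  intro n k hk hkn f grad β hβ hgradSymm hconv hsmooth Q hQ hopt δ hδ hgap X V η hX0 hV hη hrec
  obtain ⟨hQP, hgrow⟩ := optimum_growth hk hkn (hgradSymm Q) hQ hδ hgap fun P hP =>
    first_order_optimality hβ hconv hsmooth hQ hopt hP
  have hVF : ∀ t, V t ∈ Fantope n k := fun t => ProjSet.mem_fantope (hV t).1
  have hXF : ∀ t, X t ∈ Fantope n k := by
    intro t
    induction t with
    | zero => exact hX0
    | succ t ih =>
      rw [hrec]
      exact Fantope.segment_mem ih (hVF t) (hη t).1.1 (hη t).1.2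
  have hnn : ∀ t, 0 ≤ f (X t) - f Q := fun t => sub_nonneg.2 (hopt _ (hXF t))
  -- The dual gap bounds the primal gap; this uses that `Q` itself is a projection.
  have hdual : ∀ t, f (X t) - f Q ≤ ((X t - V t) * grad (X t)).trace := by
    intro t
    have h1 := hconv (X t) Q (hXF t).1 hQ.1
    have h2 := (hV t).2 Q hQP
    have h3 := Matrix.trace_mul_comm (grad (X t)) Q
    have h4 := Matrix.trace_mul_comm (grad (X t)) (X t)
    simp only [Matrix.mul_sub, Matrix.sub_mul, Matrix.trace_sub] at *
    linarith
  have hstep : ∀ t, ∀ s ∈ Set.Icc (0 : ℝ) 1, f (X (t + 1)) - f Q ≤ (f (X t) - f Q) -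
      s * ((X t - V t) * grad (X t)).trace + s ^ 2 * (β * frobNorm (X t - V t) ^ 2) := by
    intro t s hs
    have h1 := (hη t).2 s hs
    rw [← hrec] at h1
    have h2 := segment_upper_bound hconv hsmooth (hXF t).1 (hVF t).1 s
    linarith
  have hquad : ∀ t, δ / 2 * frobNorm (X t - Q) ^ 2 ≤ f (X t) - f Q := by
    intro t
    have h1 := hconv Q (X t) hQ.1 (hXF t).1
    rw [Matrix.trace_mul_comm] at h1
    linarith [hgrow _ (hXF t)]
  have hκ : 0 < β / δ := by positivity
  have hk1 : (1 : ℝ) ≤ k := by exact_mod_cast hk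
  rcases le_or_gt (10 * β) δ with hsmall | hlarge
  · -- Well-conditioned case: `V t` is so close to `Q` that every full step `η = 1` halves the gap.
    refine ⟨0, by push_cast; positivity, fun t _ => ?_⟩
    have hVQ : ((V t - Q) * grad (X t)).trace ≤ 0 := by
      rw [Matrix.sub_mul, Matrix.trace_sub]
      linarith [(hV t).2 Q hQP]
    have h1 := (dist_le_of_perturbation (hgradSymm Q) (hgradSymm (X t))
      (hsmooth _ _ (hXF t).1 hQ.1) (hgrow _ (hVF t)) hVQ).2
    have h2 := frobNorm_sub_sq_le (X t) (V t) Q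
    have h3 := hstep t 1 ⟨zero_le_one, le_rfl⟩
    have h4 := hdual t
    have h5 := hquad t
    have hx := frobNorm_nonneg (X t - Q)
    have hv := frobNorm_nonneg (V t - Q)
    have h6 : frobNorm (V t - Q) ≤ frobNorm (X t - Q) / 5 := by
      refine le_of_mul_le_mul_left ?_ (half_pos hδ)
      nlinarith
    have h7 : frobNorm (V t - Q) ^ 2 ≤ frobNorm (X t - Q) ^ 2 / 25 := by nlinarith
    have h8 : β * frobNorm (X t - V t) ^ 2 ≤ β * (52 / 25 * frobNorm (X t - Q) ^ 2) :=
      mul_le_mul_of_nonneg_left (by linarith) hβ.le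
    have h9 : 10 * β * frobNorm (X t - Q) ^ 2 ≤ δ * frobNorm (X t - Q) ^ 2 :=
      mul_le_mul_of_nonneg_right hsmall (sq_nonneg _)
    have h10 := mul_le_mul_of_nonneg_left (min_le_right (δ / (12 * β)) (1 / 2)) (hnn t)
    nlinarith [hnn t]
  · refine ⟨⌈3600 * k * (β / δ) ^ 3⌉₊, ?_, fun t ht => ?_⟩
    · -- Here `β / δ > 1 / 10`, so rounding up costs at most `1000 * k * (β / δ) ^ 3`.
      have h1 := Nat.ceil_lt_add_one (a := 3600 * k * (β / δ) ^ 3) (by positivity)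
      have h2 : 1 / 10 < β / δ := by rw [lt_div_iff₀ hδ]; linarith
      have h3 : (1 / 10) ^ 3 ≤ (β / δ) ^ 3 := pow_le_pow_left₀ (by norm_num) h2.le 3
      have h4 : 1 * (β / δ) ^ 3 ≤ k * (β / δ) ^ 3 := mul_le_mul_of_nonneg_right hk1 (by positivity)
      nlinarith
    · have ht1 : 3600 * k * (β / δ) ^ 3 ≤ t := Nat.ceil_le.1 ht
      have ht0 : 1 ≤ t := by
        have : (0 : ℝ) < t := lt_of_lt_of_le (by positivity) ht1
        exact_mod_cast this
      have hrate := sublinear_rate (h := fun t => f (X t) - f Q) (c := β * (2 * k))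
        (by positivity) (fun t s hs => by
          have h1 := hstep t s hs
          have h2 := mul_le_mul_of_nonneg_left (hdual t) hs.1
          have h3 := mul_le_mul_of_nonneg_left (mul_le_mul_of_nonneg_left
            (Fantope.dist_sq_le_two_mul (hXF t) (hVF t)) hβ.le) (sq_nonneg s)
          linarith) t ht0
      -- `h_t ≤ 8 * β * k / t` and quadratic growth bring the gradient within `δ / 15` of its limit.
      have hclose : β * frobNorm (X t - Q) ≤ δ / 15 := by
        rw [le_div_iff₀ (by positivity)] at hrate
        have h1 : 3600 * k * β ^ 3 ≤ t * δ ^ 3 := by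
          rwa [div_pow, ← mul_div_assoc, div_le_iff₀ (by positivity)] at ht1
        have h2 := hquad t
        refine abs_le_of_sq_le_sq' ?_ (by positivity) |>.2
        have h3 : δ / 2 * frobNorm (X t - Q) ^ 2 * t ≤ 8 * β * k := by
          have := mul_le_mul_of_nonneg_right h2 (Nat.cast_nonneg (α := ℝ) t)
          nlinarith [hnn t]
        have htpos : (0 : ℝ) < t := by exact_mod_cast ht0
        have h4 : δ * t * (β * frobNorm (X t - Q)) ^ 2 ≤ 16 * β ^ 3 * k := by
          have := mul_le_mul_of_nonneg_right h3 (sq_nonneg β)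
          nlinarith
        have h5 : 225 * (16 * β ^ 3 * k) ≤ δ * t * δ ^ 2 := by nlinarith
        refine le_of_mul_le_mul_left ?_ (mul_pos hδ htpos)
        nlinarith
      exact linear_step hβ hδ (hnn t) (hdual t)
        (gap_stable hk hkn (hgradSymm Q) (hgradSymm (X t)) hQ hδ hgrow
          (hsmooth _ _ (hXF t).1 hQ.1) hclose (hV t).1 (hV t).2 _ (hXF t)) (hstep t)
end

section
/- Let Q be an n×k real matrix with orthonormal columns, set Y = QQᵀ and W = Y − η∇f(Y), and let X⁺ = Π_{F_{n,k}}[W] be the Euclidean projection of W onto the Fantope. Let G ≥ ‖∇f(Y)‖₂ and suppose η < 1/G, X⁺ ∈ P_{n,k}, and ‖X⁺ − Y‖_F < √2. Let Q⁺ be an n×k matrix with orthonormal columns for which there exists an upper triangular k×k matrix R with Q⁺R = WQ (a QR factorization of WQ), and set Y⁺ = Q⁺(Q⁺)ᵀ. Then ‖X⁺ − Y⁺‖_F² ≤ (1/(1 − ½‖X⁺ − Y‖_F²))·(ηG/(1−ηG))²·‖X⁺ − Y‖_F². -/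
/-!
Write `X` for the projection of `W` onto the Fantope, an orthogonal projection of rank `k`, and put
`g = η G < 1`.

* Exchanging a unit vector `x ∈ range X` for a unit vector of `span x + ker X` keeps one in the
  Fantope (`exchange_mem_Fantope`). Testing the variational inequality of the projection (`variational`) on
  such exchanges shows that `xᵀWu = 0` and `xᵀWx ≥ 1 + uᵀWu` for unit `x ∈ range X`, `u ∈ ker X`
  (`spectral_gap`). In particular `X` commutes with `W`.
* Since `0 ⪯ Y ⪯ 1`, one has `-g ⪯ W ⪯ 1 + g`. Combined with the gap, this gives `W ⪰ 1 - g` on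
  `range X` and `|W| ⪯ g` on `ker X`, so Weyl's inequalities are not needed.
* For an orthonormal frame `Q`, `‖X - QQᵀ‖_F² = 2 ‖(1 - X)Q‖_F²` (`dist_sq`). As
  `(1 - X) Q⁺ R = W (1 - X) Q`, where `‖R y‖ ≥ ‖W X Q y‖ ≥ (1 - g) √(1 - ‖(1 - X)Q‖_F²) ‖y‖`, the
  component `(1 - X) Q⁺` is controlled by `(1 - X) Q` (`subspace_step`), which is the claim.
-/

open Matrix

/-! ### Euclidean and Frobenius norms through dot products and traces -/

lemma dot_mulVec_adj {m p : ℕ} (A : Matrix (Fin m) (Fin p) ℝ) (x : Fin m → ℝ) (y : Fin p → ℝ) :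
    x ⬝ᵥ A *ᵥ y = (Aᵀ *ᵥ x) ⬝ᵥ y := by
  rw [dotProduct_mulVec, mulVec_transpose]

lemma dot_self_nonneg {m : ℕ} (x : Fin m → ℝ) : 0 ≤ x ⬝ᵥ x :=
  Finset.sum_nonneg fun i _ => mul_self_nonneg (x i)

lemma exists_unit {m : ℕ} (v : Fin m → ℝ) (hv : v ≠ 0) :
    ∃ (r : ℝ) (e : Fin m → ℝ), e ⬝ᵥ e = 1 ∧ v = r • e ∧ e = r⁻¹ • v := by
  have h0 : 0 < v ⬝ᵥ v := lt_of_le_of_ne (dot_self_nonneg v)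
    (fun h => hv (dotProduct_self_eq_zero.mp h.symm))
  have hr : √(v ⬝ᵥ v) ≠ 0 := (Real.sqrt_pos.mpr h0).ne'
  have hr2 : √(v ⬝ᵥ v) * √(v ⬝ᵥ v) = v ⬝ᵥ v := Real.mul_self_sqrt h0.le
  refine ⟨√(v ⬝ᵥ v), (√(v ⬝ᵥ v))⁻¹ • v, ?_, ?_, rfl⟩
  · rw [smul_dotProduct, dotProduct_smul, smul_eq_mul, smul_eq_mul]
    nth_rw 3 [← hr2]
    field_simp
  · rw [smul_smul, mul_inv_cancel₀ hr, one_smul]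

lemma trace_transpose_mul_self {m p : ℕ} (A : Matrix (Fin m) (Fin p) ℝ) :
    (Aᵀ * A).trace = ∑ j, A.col j ⬝ᵥ A.col j := by
  simp [trace, mul_apply, dotProduct]

lemma trace_transpose_mul_self_row {m p : ℕ} (A : Matrix (Fin m) (Fin p) ℝ) :
    (Aᵀ * A).trace = ∑ i, A.row i ⬝ᵥ A.row i := by
  rw [trace_mul_comm]
  simp [trace, mul_apply, dotProduct]

lemma trace_transpose_mul_self_nonneg {m p : ℕ} (A : Matrix (Fin m) (Fin p) ℝ) :
    0 ≤ (Aᵀ * A).trace := by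
  rw [trace_transpose_mul_self]
  exact Finset.sum_nonneg fun j _ => dot_self_nonneg _

lemma frobNorm_sq_s10 {m : ℕ} (A : Matrix (Fin m) (Fin m) ℝ) :
    frobNorm A ^ 2 = (Aᵀ * A).trace := by
  rw [frobNorm, Real.sq_sqrt (by positivity), trace_transpose_mul_self_row]
  simp [dotProduct, sq]

/-- `‖Av‖ ≤ ‖A‖_F ‖v‖`, in squared form. -/
lemma mulVec_sq_le_trace {m p : ℕ} (A : Matrix (Fin m) (Fin p) ℝ) (v : Fin p → ℝ) :
    (A *ᵥ v) ⬝ᵥ (A *ᵥ v) ≤ (Aᵀ * A).trace * (v ⬝ᵥ v) := by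
  rw [trace_transpose_mul_self_row, Finset.sum_mul]
  refine Finset.sum_le_sum fun i _ => ?_
  have := Finset.sum_mul_sq_le_sq_mul_sq Finset.univ (A.row i) v
  simpa [mulVec, dotProduct, sq] using this

/-! ### Spectral norm and quadratic forms -/

lemma rayleigh_le {m : ℕ} {H : Matrix (Fin m) (Fin m) ℝ} (hH : H.IsHermitian) (c : ℝ)
    (hc : ∀ i, hH.eigenvalues i ≤ c) (v : Fin m → ℝ) : v ⬝ᵥ H *ᵥ v ≤ c * (v ⬝ᵥ v) := by
  have hpsd : (c • (1 : Matrix (Fin m) (Fin m) ℝ) - H).PosSemidef := by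
    have hd : (diagonal (fun i => c - hH.eigenvalues i)).PosSemidef :=
      PosSemidef.diagonal fun i => sub_nonneg.mpr (hc i)
    have h := hd.mul_mul_conjTranspose_same (hH.eigenvectorUnitary : Matrix (Fin m) (Fin m) ℝ)
    convert h using 1
    have hu : (hH.eigenvectorUnitary : Matrix (Fin m) (Fin m) ℝ) *
        (hH.eigenvectorUnitary : Matrix (Fin m) (Fin m) ℝ)ᴴ = 1 :=
      Unitary.mul_star_self_of_mem hH.eigenvectorUnitary.2
    have hsp := hH.spectral_theorem
    rw [Unitary.conjStarAlgAut_apply] at hsp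
    have hdiag : diagonal (fun i => c - hH.eigenvalues i) =
        c • (1 : Matrix (Fin m) (Fin m) ℝ) - diagonal (RCLike.ofReal ∘ hH.eigenvalues) := by
      ext i j
      by_cases hij : i = j <;> simp [diagonal, hij]
    rw [hdiag, mul_sub, sub_mul, mul_smul_comm, smul_mul_assoc, mul_one, hu]
    congr 1
  have h := hpsd.dotProduct_mulVec_nonneg v
  simp only [sub_mulVec, smul_mulVec, one_mulVec, dotProduct_sub, dotProduct_smul, smul_eq_mul,
    star_trivial] at h
  linarith

lemma mulVec_sq_le_of_specNorm_le {m : ℕ} (M : Matrix (Fin m) (Fin m) ℝ) (G : ℝ) (hG : 0 ≤ G)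
    (h : specNorm M ≤ G) (v : Fin m → ℝ) : (M *ᵥ v) ⬝ᵥ (M *ᵥ v) ≤ G ^ 2 * (v ⬝ᵥ v) := by
  have hH : (Mᵀ * M).IsHermitian := by
    simpa using isHermitian_conjTranspose_mul_self M
  have he : eigval (Mᵀ * M) 1 ≤ G ^ 2 := (Real.sqrt_le_left hG).mp h
  have hr := rayleigh_le hH (G ^ 2) (fun i => ?_) v
  · rwa [← mulVec_mulVec, dot_mulVec_adj, transpose_transpose] at hr
  · have hm : m - 1 < m := by have := i.2; omega
    rw [eigval, dif_pos hH, dif_pos hm] at he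
    refine le_trans ?_ he
    obtain ⟨j, rfl⟩ := (Tuple.sort hH.eigenvalues).surjective i
    refine Tuple.monotone_sort hH.eigenvalues ?_
    rw [Fin.le_def]
    have := j.2
    simp only
    omega

/-- For a symmetric matrix, a two-sided bound `g` on the quadratic form bounds the operator norm;
the proof is polarization against `E u / g`. -/
lemma mulVec_sq_le_of_form {m : ℕ} (E : Matrix (Fin m) (Fin m) ℝ) (hE : Eᵀ = E) (g : ℝ)
    (hg : 0 < g) (hq : ∀ v, |v ⬝ᵥ E *ᵥ v| ≤ g * (v ⬝ᵥ v)) (u : Fin m → ℝ) :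
    (E *ᵥ u) ⬝ᵥ (E *ᵥ u) ≤ g ^ 2 * (u ⬝ᵥ u) := by
  set y := g⁻¹ • (E *ᵥ u) with hy
  have h1 := (abs_le.mp (hq (u + y))).2
  have h2 := (abs_le.mp (hq (u - y))).1
  have hs : u ⬝ᵥ E *ᵥ y = y ⬝ᵥ E *ᵥ u := by
    rw [dot_mulVec_adj, hE, dotProduct_comm]
  have hyE : y ⬝ᵥ E *ᵥ u = g⁻¹ * ((E *ᵥ u) ⬝ᵥ (E *ᵥ u)) := by
    rw [hy, smul_dotProduct, smul_eq_mul]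
  have hyy : y ⬝ᵥ y = g⁻¹ * (g⁻¹ * ((E *ᵥ u) ⬝ᵥ (E *ᵥ u))) := by
    rw [hy, smul_dotProduct, dotProduct_smul, smul_eq_mul, smul_eq_mul]
  simp only [mulVec_add, mulVec_sub, add_dotProduct, sub_dotProduct, dotProduct_add,
    dotProduct_sub, dotProduct_comm u y, hs, hyE, hyy] at h1 h2
  generalize (E *ᵥ u) ⬝ᵥ (E *ᵥ u) = a at *
  have h3 : g * (g⁻¹ * (g⁻¹ * a)) = g⁻¹ * a := by field_simp
  have h4 : g⁻¹ * a ≤ g * (u ⬝ᵥ u) := by nlinarith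
  have h5 : g * (g⁻¹ * a) = a := by field_simp
  nlinarith

/-! ### Optimality conditions for the projection onto the Fantope -/

lemma posSemidef_of_idem {m : ℕ} (X : Matrix (Fin m) (Fin m) ℝ) (hs : Xᵀ = X) (hi : X * X = X) :
    X.PosSemidef := by
  have h := posSemidef_conjTranspose_mul_self X
  rwa [conjTranspose_eq_transpose_of_trivial, hs, hi] at h

lemma mem_Fantope_of_idem {n k : ℕ} (X : Matrix (Fin n) (Fin n) ℝ) (hs : Xᵀ = X)
    (hi : X * X = X) (ht : X.trace = k) : X ∈ Fantope n k := by
  refine ⟨hs, posSemidef_of_idem X hs hi, posSemidef_of_idem _ ?_ ?_, ht⟩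
  · simp [hs]
  · simp [sub_mul, mul_sub, hi]

/-- Replacing a unit vector `x` in the range of the orthogonal projection `X` by a unit vector `z`
in the span of `x` and a vector `u` of the kernel again gives an orthogonal projection. -/
lemma exchange_mem_Fantope {n k : ℕ} (X : Matrix (Fin n) (Fin n) ℝ) (hs : Xᵀ = X)
    (hi : X * X = X) (ht : X.trace = k) (x z : Fin n → ℝ) (hx : X *ᵥ x = x) (hxx : x ⬝ᵥ x = 1)
    (hz : X *ᵥ z = (x ⬝ᵥ z) • x) (hzz : z ⬝ᵥ z = 1) :
    X - vecMulVec x x + vecMulVec z z ∈ Fantope n k := by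
  have hx' : x ᵥ* X = x := by rw [← mulVec_transpose, hs, hx]
  have hz' : z ᵥ* X = (x ⬝ᵥ z) • x := by rw [← mulVec_transpose, hs, hz]
  refine mem_Fantope_of_idem _ ?_ ?_ ?_
  · simp [hs]
  · simp only [add_mul, sub_mul, mul_add, mul_sub, hi, mul_vecMulVec, vecMulVec_mul, hx, hx', hz,
      hz', vecMulVec_mulVec, op_smul_eq_smul, hxx, hzz, one_smul, dotProduct_comm z x, vecMulVec_smul,
      smul_vecMulVec]
    abel
  · simp [trace_sub, trace_add, ht, hxx, hzz]

lemma Fantope_segment {n k : ℕ} (X Z : Matrix (Fin n) (Fin n) ℝ) (hX : X ∈ Fantope n k)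
    (hZ : Z ∈ Fantope n k) (t : ℝ) (h0 : 0 ≤ t) (h1 : t ≤ 1) :
    X + t • (Z - X) ∈ Fantope n k := by
  obtain ⟨a1, a2, a3, a4⟩ := hX
  obtain ⟨b1, b2, b3, b4⟩ := hZ
  have e : X + t • (Z - X) = (1 - t) • X + t • Z := by
    rw [smul_sub, sub_smul, one_smul]; abel
  have e2 : 1 - (X + t • (Z - X)) = (1 - t) • (1 - X) + t • (1 - Z) := by
    simp only [smul_sub, sub_smul, one_smul]; abel
  refine ⟨?_, ?_, ?_, ?_⟩
  · rw [e]
    exact (a1.smul _).add (b1.smul _)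
  · rw [e]
    exact (a2.smul (sub_nonneg.mpr h1)).add (b2.smul h0)
  · rw [e2]
    exact (a3.smul (sub_nonneg.mpr h1)).add (b3.smul h0)
  · simp [trace_add, trace_smul, trace_sub, a4, b4]

/-- First-order optimality of the projection, obtained by comparing `X` with points of the segment
from `X` to `Z`. -/
lemma variational {n k : ℕ} (X W Z : Matrix (Fin n) (Fin n) ℝ) (hX : X ∈ Fantope n k)
    (hproj : ∀ Z ∈ Fantope n k, frobNorm (X - W) ≤ frobNorm (Z - W))
    (hZ : Z ∈ Fantope n k) : 0 ≤ ((X - W)ᵀ * (Z - X)).trace := by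
  by_contra! hneg
  set b := ((X - W)ᵀ * (Z - X)).trace with hb
  set c := ((Z - X)ᵀ * (Z - X)).trace with hc
  have hc0 : 0 ≤ c := trace_transpose_mul_self_nonneg _
  have key : ∀ t : ℝ, 0 ≤ t → t ≤ 1 → 0 ≤ 2 * t * b + t ^ 2 * c := by
    intro t h0 h1
    have h := hproj _ (Fantope_segment X Z hX hZ t h0 h1)
    have h' : frobNorm (X - W) ^ 2 ≤ frobNorm (X + t • (Z - X) - W) ^ 2 :=
      pow_le_pow_left₀ (Real.sqrt_nonneg _) h 2
    rw [frobNorm_sq_s10, frobNorm_sq_s10] at h'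
    have e : X + t • (Z - X) - W = (X - W) + t • (Z - X) := by abel
    have hsym : ((Z - X)ᵀ * (X - W)).trace = b := by
      rw [← trace_transpose, transpose_mul, transpose_transpose]
    rw [e, transpose_add, transpose_smul, add_mul, mul_add, mul_add, trace_add, trace_add,
      trace_add] at h'
    simp only [smul_mul_assoc, mul_smul_comm, trace_smul, smul_eq_mul, hsym] at h'
    rw [← hb, ← hc] at h'
    linarith
  -- The first-order decrease beats the quadratic term at `t = -b / (c - b) ≤ 1`.
  have hd : 0 < c - b := by linarith
  have h := key (-b / (c - b)) (by apply div_nonneg <;> linarith)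
    (by rw [div_le_one hd]; linarith)
  have e : 2 * (-b / (c - b)) * b + (-b / (c - b)) ^ 2 * c =
      b ^ 2 * (2 * b - c) / (c - b) ^ 2 := by
    field_simp; ring
  rw [e] at h
  have : b ^ 2 * (2 * b - c) / (c - b) ^ 2 < 0 :=
    div_neg_of_neg_of_pos (mul_neg_of_pos_of_neg (sq_pos_of_neg hneg) (by linarith))
      (by positivity)
  linarith

/-- If the projection `X` of `W` onto the Fantope is itself an orthogonal projection, then its range
and kernel are orthogonal for the quadratic form of `W`, with a gap of at least one. -/
lemma spectral_gap {n k : ℕ} (X W : Matrix (Fin n) (Fin n) ℝ) (hX : X ∈ Fantope n k)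
    (hi : X * X = X) (hW : Wᵀ = W)
    (hproj : ∀ Z ∈ Fantope n k, frobNorm (X - W) ≤ frobNorm (Z - W))
    (x u : Fin n → ℝ) (hx : X *ᵥ x = x) (hxx : x ⬝ᵥ x = 1) (hu : X *ᵥ u = 0)
    (huu : u ⬝ᵥ u = 1) : x ⬝ᵥ W *ᵥ u = 0 ∧ u ⬝ᵥ W *ᵥ u + 1 ≤ x ⬝ᵥ W *ᵥ x := by
  have hs : Xᵀ = X := hX.1
  have hxu : x ⬝ᵥ u = 0 := by
    rw [← hx, dotProduct_comm, dot_mulVec_adj, hs, hu, zero_dotProduct]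
  have hWs : u ⬝ᵥ W *ᵥ x = x ⬝ᵥ W *ᵥ u := by
    rw [dot_mulVec_adj, hW, dotProduct_comm]
  have key : ∀ c s : ℝ, c ^ 2 + s ^ 2 = 1 →
      2 * c * s * (x ⬝ᵥ W *ᵥ u) ≤ s ^ 2 * (x ⬝ᵥ W *ᵥ x - 1 - u ⬝ᵥ W *ᵥ u) := by
    intro c s hcs
    have hux : u ⬝ᵥ x = 0 := by rw [dotProduct_comm, hxu]
    have hm := exchange_mem_Fantope (k := k) X hs hi hX.2.2.2 x (c • x + s • u) hx hxx
      (by simp [mulVec_add, mulVec_smul, hx, hu, hxx, hxu])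
      (by simp [hxx, hxu, hux, huu]; linarith)
    have h := variational X W _ hX hproj hm
    have e : X - vecMulVec x x + vecMulVec (c • x + s • u) (c • x + s • u) - X =
      vecMulVec (c • x + s • u) (c • x + s • u) - vecMulVec x x := by abel
    rw [e, mul_sub, mul_vecMulVec, mul_vecMulVec, trace_sub, trace_vecMulVec, trace_vecMulVec,
      transpose_sub, hs, hW] at h
    simp only [sub_mulVec, mulVec_add, mulVec_smul, hx, hu, sub_dotProduct, add_dotProduct,
      dotProduct_add, smul_dotProduct, dotProduct_smul, smul_eq_mul, hxx, hxu,
      dotProduct_comm (W *ᵥ _), hWs, zero_dotProduct] at h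
    generalize x ⬝ᵥ W *ᵥ x = a at *
    generalize x ⬝ᵥ W *ᵥ u = b at *
    generalize u ⬝ᵥ W *ᵥ u = d at *
    linear_combination h + (1 - a) * hcs
  have hD : u ⬝ᵥ W *ᵥ u + 1 ≤ x ⬝ᵥ W *ᵥ x := by
    have := key 0 1 (by norm_num)
    linarith
  refine ⟨?_, hD⟩
  generalize x ⬝ᵥ W *ᵥ u = b at *
  set D := x ⬝ᵥ W *ᵥ x - 1 - u ⬝ᵥ W *ᵥ u with hDdef
  have hD0 : 0 ≤ D := by rw [hDdef]; linarith
  -- The direction `(c, s)` proportional to `(D + 1, b)`.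
  have hpos : 0 < (D + 1) ^ 2 + b ^ 2 := by positivity
  have hr2 : √((D + 1) ^ 2 + b ^ 2) ^ 2 = (D + 1) ^ 2 + b ^ 2 := Real.sq_sqrt hpos.le
  have hr0 : √((D + 1) ^ 2 + b ^ 2) ≠ 0 := (Real.sqrt_pos.mpr hpos).ne'
  generalize √((D + 1) ^ 2 + b ^ 2) = r at *
  have h := key ((D + 1) / r) (b / r) (by field_simp; linarith)
  have h' : 2 * (D + 1) * b * b ≤ b ^ 2 * D := by
    have hr : 0 < r ^ 2 := by positivity
    have e1 : 2 * ((D + 1) / r) * (b / r) * b = (2 * (D + 1) * b * b) / r ^ 2 := by field_simp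
    have e2 : (b / r) ^ 2 * D = (b ^ 2 * D) / r ^ 2 := by field_simp
    rw [e1, e2] at h
    exact (div_le_div_iff_of_pos_right hr).mp h
  have : b ^ 2 = 0 := by nlinarith [sq_nonneg b, mul_nonneg (sq_nonneg b) hD0]
  exact pow_eq_zero_iff (two_ne_zero) |>.mp this

/-- An orthogonal projection whose range and kernel are orthogonal for the form of the symmetric
matrix `W` commutes with `W`. -/
lemma commute_of_cross {n : ℕ} (X W : Matrix (Fin n) (Fin n) ℝ) (hs : Xᵀ = X) (hi : X * X = X)
    (hW : Wᵀ = W)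
    (h : ∀ x u : Fin n → ℝ, X *ᵥ x = x → X *ᵥ u = 0 → x ⬝ᵥ W *ᵥ u = 0) : X * W = W * X := by
  have h0 : X * W * (1 - X) = 0 := by
    apply ext_of_mulVec_single
    intro i
    generalize (Pi.single i 1 : Fin n → ℝ) = w
    rw [zero_mulVec, ← dotProduct_self_eq_zero]
    have := h (X *ᵥ (W *ᵥ ((1 - X) *ᵥ w))) ((1 - X) *ᵥ w) (by rw [mulVec_mulVec, hi])
      (by rw [mulVec_mulVec, mul_sub, hi, mul_one, sub_self, zero_mulVec])
    rw [← mulVec_mulVec, ← mulVec_mulVec, dot_mulVec_adj, hs, mulVec_mulVec, hi]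
    exact this
  have h1 : X * W = X * W * X := by
    rw [mul_sub, mul_one, sub_eq_zero] at h0; exact h0
  have h2 := congrArg transpose h1
  simp only [transpose_mul, hs, hW] at h2
  rw [h1, h2, Matrix.mul_assoc]

/-! ### One step of subspace iteration -/

/-- For orthogonal projections `X` and `QQᵀ` of the same rank, both sides equal
`2k - 2 tr (X QQᵀ)`. -/
lemma dist_sq {n k : ℕ} (X : Matrix (Fin n) (Fin n) ℝ) (hs : Xᵀ = X) (hi : X * X = X)
    (ht : X.trace = k) (Q : Matrix (Fin n) (Fin k) ℝ) (hQ : Qᵀ * Q = 1) :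
    frobNorm (X - Q * Qᵀ) ^ 2 = 2 * (((1 - X) * Q)ᵀ * ((1 - X) * Q)).trace := by
  have hQt : (Q * Qᵀ).trace = k := by rw [trace_mul_comm, hQ]; simp
  have hQQ : Q * Qᵀ * (Q * Qᵀ) = Q * Qᵀ := by
    rw [Matrix.mul_assoc, ← Matrix.mul_assoc Qᵀ, hQ, Matrix.one_mul]
  have hN : (1 - X)ᵀ * (1 - X) = 1 - X := by
    simp [hs, sub_mul, mul_sub, hi]
  have e : ((1 - X) * Q)ᵀ * ((1 - X) * Q) = Qᵀ * ((1 - X) * Q) := by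
    rw [transpose_mul, Matrix.mul_assoc, ← Matrix.mul_assoc _ (1 - X) Q, hN]
  rw [frobNorm_sq_s10, e, trace_mul_comm Qᵀ, Matrix.mul_assoc, transpose_sub, hs, transpose_mul,
    transpose_transpose, sub_mul, mul_sub, mul_sub, hi, hQQ, Matrix.sub_mul,
    Matrix.one_mul, trace_sub, trace_sub, trace_sub, trace_sub, trace_mul_comm (Q * Qᵀ) X, ht, hQt]
  ring

/-- A lower bound for the operator `R` passes to its transpose, hence to the rows of `T * R`. -/
lemma trace_mul_ge {n k : ℕ} (R : Matrix (Fin k) (Fin k) ℝ) (m : ℝ) (hm : 0 < m)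
    (hR : ∀ y, m * (y ⬝ᵥ y) ≤ (R *ᵥ y) ⬝ᵥ (R *ᵥ y)) (T : Matrix (Fin n) (Fin k) ℝ) :
    m * (Tᵀ * T).trace ≤ ((T * R)ᵀ * (T * R)).trace := by
  have hinj : Function.Injective R.mulVec := by
    intro a b hab
    have h := hR (a - b)
    rw [mulVec_sub, show R *ᵥ a = R *ᵥ b from hab, sub_self, zero_dotProduct] at h
    have h0 : (a - b) ⬝ᵥ (a - b) = 0 := by
      have := dot_self_nonneg (a - b)
      nlinarith
    exact sub_eq_zero.mp (dotProduct_self_eq_zero.mp h0)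
  have hsurj : Function.Surjective R.mulVec :=
    mulVec_surjective_iff_isUnit.mpr (mulVec_injective_iff_isUnit.mp hinj)
  have hRt : ∀ y, m * (y ⬝ᵥ y) ≤ (Rᵀ *ᵥ y) ⬝ᵥ (Rᵀ *ᵥ y) := by
    intro y
    obtain ⟨z, hz⟩ := hsurj y
    have hz : R *ᵥ z = y := hz
    have h1 : y ⬝ᵥ y = (Rᵀ *ᵥ y) ⬝ᵥ z := by
      rw [← dot_mulVec_adj, hz]
    have h2 := hR z
    rw [hz] at h2
    -- Expanding `0 ≤ ‖Rᵀ y - m z‖²`.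
    have h3 := dot_self_nonneg (Rᵀ *ᵥ y - m • z)
    simp only [sub_dotProduct, dotProduct_sub, smul_dotProduct, dotProduct_smul, smul_eq_mul,
      dotProduct_comm z, ← h1] at h3
    nlinarith
  rw [trace_transpose_mul_self_row, trace_transpose_mul_self_row, Finset.mul_sum]
  refine Finset.sum_le_sum fun i _ => ?_
  have e : (T * R).row i = Rᵀ *ᵥ T.row i := by
    ext j
    simp [mul_apply, mulVec, dotProduct, mul_comm]
  rw [e]
  exact hRt _

/-- One step of subspace iteration contracts the component orthogonal to the invariant subspace
`range X`, when `W` is bounded below by `l` on it and bounded by `g` on its complement. -/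
lemma subspace_step {n k : ℕ} (X W : Matrix (Fin n) (Fin n) ℝ) (hs : Xᵀ = X) (hi : X * X = X)
    (hW : Wᵀ = W) (hcomm : X * W = W * X) (g l : ℝ) (hg : 0 < g) (hl : 0 < l)
    (hx : ∀ x, X *ᵥ x = x → l * (x ⬝ᵥ x) ≤ x ⬝ᵥ W *ᵥ x)
    (hu : ∀ u, X *ᵥ u = 0 → |u ⬝ᵥ W *ᵥ u| ≤ g * (u ⬝ᵥ u))
    (Q Qp : Matrix (Fin n) (Fin k) ℝ) (R : Matrix (Fin k) (Fin k) ℝ) (hQ : Qᵀ * Q = 1)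
    (hQp : Qpᵀ * Qp = 1) (hQR : Qp * R = W * Q)
    (hσ : (((1 - X) * Q)ᵀ * ((1 - X) * Q)).trace < 1) :
    l ^ 2 * (1 - (((1 - X) * Q)ᵀ * ((1 - X) * Q)).trace) *
      (((1 - X) * Qp)ᵀ * ((1 - X) * Qp)).trace ≤
      g ^ 2 * (((1 - X) * Q)ᵀ * ((1 - X) * Q)).trace := by
  set N := 1 - X with hN
  have hNs : Nᵀ = N := by simp [hN, hs]
  have hNi : N * N = N := by simp [hN, sub_mul, mul_sub, hi]
  have hXN : X * N = 0 := by simp [hN, mul_sub, hi]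
  have hNW : N * W = W * N := by simp [hN, sub_mul, mul_sub, hcomm]
  have pyth : ∀ v : Fin n → ℝ, v ⬝ᵥ v = (X *ᵥ v) ⬝ᵥ (X *ᵥ v) + (N *ᵥ v) ⬝ᵥ (N *ᵥ v) := by
    intro v
    have h1 : (X *ᵥ v) ⬝ᵥ (X *ᵥ v) = v ⬝ᵥ X *ᵥ v := by
      rw [dot_mulVec_adj X, hs, mulVec_mulVec, hi, dotProduct_comm]
    have h2 : (N *ᵥ v) ⬝ᵥ (N *ᵥ v) = v ⬝ᵥ N *ᵥ v := by
      rw [dot_mulVec_adj N, hNs, mulVec_mulVec, hNi, dotProduct_comm]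
    rw [h1, h2, hN, sub_mulVec, one_mulVec, dotProduct_sub]
    ring
  have isom : ∀ (A : Matrix (Fin n) (Fin k) ℝ), Aᵀ * A = 1 → ∀ y,
      (A *ᵥ y) ⬝ᵥ (A *ᵥ y) = y ⬝ᵥ y := by
    intro A hA y
    rw [dot_mulVec_adj, mulVec_mulVec, hA, one_mulVec]
  set σ := ((N * Q)ᵀ * (N * Q)).trace with hσdef
  have hlow : ∀ x, X *ᵥ x = x → l ^ 2 * (x ⬝ᵥ x) ≤ (W *ᵥ x) ⬝ᵥ (W *ᵥ x) := by
    intro x hxx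
    have h1 := hx x hxx
    -- Expanding `0 ≤ ‖W x - l x‖²`.
    have h3 := dot_self_nonneg (W *ᵥ x - l • x)
    simp only [sub_dotProduct, dotProduct_sub, smul_dotProduct, dotProduct_smul, smul_eq_mul,
      dotProduct_comm (W *ᵥ x) x] at h3
    nlinarith
  have hR : ∀ y, l ^ 2 * (1 - σ) * (y ⬝ᵥ y) ≤ (R *ᵥ y) ⬝ᵥ (R *ᵥ y) := by
    intro y
    have h1 : (R *ᵥ y) ⬝ᵥ (R *ᵥ y) = (W *ᵥ (Q *ᵥ y)) ⬝ᵥ (W *ᵥ (Q *ᵥ y)) := by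
      rw [← isom Qp hQp, mulVec_mulVec, hQR, ← mulVec_mulVec]
    have h2 := pyth (W *ᵥ (Q *ᵥ y))
    have h3 : X *ᵥ (W *ᵥ (Q *ᵥ y)) = W *ᵥ (X *ᵥ (Q *ᵥ y)) := by
      rw [mulVec_mulVec, hcomm, ← mulVec_mulVec]
    have h4 := hlow (X *ᵥ (Q *ᵥ y)) (by rw [mulVec_mulVec, hi])
    have h5 := pyth (Q *ᵥ y)
    rw [isom Q hQ] at h5
    have h6 := mulVec_sq_le_trace (N * Q) y
    rw [← mulVec_mulVec, ← hσdef] at h6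
    have h7 := dot_self_nonneg (N *ᵥ (W *ᵥ (Q *ᵥ y)))
    rw [h3] at h2
    rw [h1, h2]
    have h8 : (1 - σ) * (y ⬝ᵥ y) ≤ (X *ᵥ (Q *ᵥ y)) ⬝ᵥ (X *ᵥ (Q *ᵥ y)) := by linarith
    have h9 := mul_le_mul_of_nonneg_left h8 (sq_nonneg l)
    rw [← _root_.mul_assoc] at h9
    linarith
  have hup : ∀ v, (W *ᵥ (N *ᵥ v)) ⬝ᵥ (W *ᵥ (N *ᵥ v)) ≤ g ^ 2 * ((N *ᵥ v) ⬝ᵥ (N *ᵥ v)) := by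
    intro v
    have h := mulVec_sq_le_of_form (W * N) (by rw [transpose_mul, hNs, hW, hNW]) g hg
      (fun w => ?_) (N *ᵥ v)
    · rwa [mulVec_mulVec, Matrix.mul_assoc, hNi, ← mulVec_mulVec] at h
    · have e : w ⬝ᵥ (W * N) *ᵥ w = (N *ᵥ w) ⬝ᵥ W *ᵥ (N *ᵥ w) := by
        nth_rw 1 [← hNi]
        rw [← Matrix.mul_assoc, ← hNW, Matrix.mul_assoc, ← mulVec_mulVec, dot_mulVec_adj, hNs,
          ← mulVec_mulVec]
      rw [e]
      refine (hu _ (by rw [mulVec_mulVec, hXN, zero_mulVec])).trans ?_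
      have := pyth w
      have := dot_self_nonneg (X *ᵥ w)
      exact mul_le_mul_of_nonneg_left (by linarith) hg.le
  have h1 := trace_mul_ge R (l ^ 2 * (1 - σ)) (mul_pos (by positivity) (by linarith)) hR (N * Qp)
  refine h1.trans ?_
  have e : N * Qp * R = W * (N * Q) := by
    rw [Matrix.mul_assoc, hQR, ← Matrix.mul_assoc, hNW, Matrix.mul_assoc]
  rw [e, hσdef, trace_transpose_mul_self, trace_transpose_mul_self, Finset.mul_sum]
  refine Finset.sum_le_sum fun j _ => ?_
  have e1 : (N * Q).col j = N *ᵥ Q.col j := by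
    ext i; simp [mul_apply, mulVec, dotProduct]
  have e2 : (W * (N * Q)).col j = W *ᵥ (N *ᵥ Q.col j) := by
    rw [← e1]; ext i; simp [mul_apply, mulVec, dotProduct]
  rw [e1, e2]
  exact hup _

/-! ### The contraction estimate -/

theorem stmt10 {n k : ℕ} (hk : 0 < k) (hkn : k < n)
    (f : Matrix (Fin n) (Fin n) ℝ → ℝ)
    (grad : Matrix (Fin n) (Fin n) ℝ → Matrix (Fin n) (Fin n) ℝ)
    (β : ℝ) (hβ : 0 < β)
    (hgradSymm : ∀ X : Matrix (Fin n) (Fin n) ℝ, (grad X).IsSymm)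
    (hconv : ∀ X Y : Matrix (Fin n) (Fin n) ℝ, X.IsSymm → Y.IsSymm →
      f X + (grad X * (Y - X)).trace ≤ f Y)
    (hsmooth : ∀ X Y : Matrix (Fin n) (Fin n) ℝ, X.IsSymm → Y.IsSymm →
      frobNorm (grad X - grad Y) ≤ β * frobNorm (X - Y))
    (η G : ℝ) (hη0 : 0 < η) (hη : η < 1 / G)
    (Q : Matrix (Fin n) (Fin k) ℝ) (hQ : Qᵀ * Q = 1)
    (Y W : Matrix (Fin n) (Fin n) ℝ)
    (hY : Y = Q * Qᵀ) (hW : W = Y - η • grad Y)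
    (hGY : specNorm (grad Y) ≤ G)
    (Xp : Matrix (Fin n) (Fin n) ℝ)
    (hXpMem : Xp ∈ Fantope n k)
    (hXpProj : ∀ Z ∈ Fantope n k, frobNorm (Xp - W) ≤ frobNorm (Z - W))
    (hXpP : Xp ∈ ProjSet n k)
    (hclose : frobNorm (Xp - Y) < Real.sqrt 2)
    (Qp : Matrix (Fin n) (Fin k) ℝ) (hQp : Qpᵀ * Qp = 1)
    (R : Matrix (Fin k) (Fin k) ℝ) (hR : R.BlockTriangular (id : Fin k → Fin k))
    (hQR : Qp * R = W * Q)
    (Yp : Matrix (Fin n) (Fin n) ℝ) (hYp : Yp = Qp * Qpᵀ) :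
    frobNorm (Xp - Yp) ^ 2 ≤
      (1 / (1 - (1 / 2) * frobNorm (Xp - Y) ^ 2)) *
        (η * G / (1 - η * G)) ^ 2 * frobNorm (Xp - Y) ^ 2 := by
  have hG : 0 < G := by
    by_contra! h
    have : 1 / G ≤ 0 := one_div_nonpos.mpr h
    linarith
  have hg : 0 < η * G := by positivity
  have hg1 : η * G < 1 := (lt_div_iff₀ hG).mp hη
  have hXs : Xpᵀ = Xp := hXpMem.1
  have hXt : Xp.trace = k := hXpMem.2.2.2
  obtain ⟨P, hP, hXP⟩ := hXpP
  have hXi : Xp * Xp = Xp := by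
    rw [hXP, Matrix.mul_assoc, ← Matrix.mul_assoc Pᵀ, hP, Matrix.one_mul]
  have hMs : (grad Y)ᵀ = grad Y := hgradSymm Y
  have hYs : Yᵀ = Y := by rw [hY]; simp
  have hYi : Y * Y = Y := by rw [hY, Matrix.mul_assoc, ← Matrix.mul_assoc Qᵀ, hQ, Matrix.one_mul]
  have hWs : Wᵀ = W := by rw [hW]; simp [hMs, hYs]
  have hform : ∀ v : Fin n → ℝ, |v ⬝ᵥ grad Y *ᵥ v| ≤ G * (v ⬝ᵥ v) := by
    intro v
    have h := mulVec_sq_le_of_specNorm_le _ G hG.le hGY v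
    -- Expanding `0 ≤ ‖M v ± G v‖²`.
    have h1 := dot_self_nonneg (grad Y *ᵥ v - G • v)
    have h2 := dot_self_nonneg (grad Y *ᵥ v + G • v)
    simp only [sub_dotProduct, dotProduct_sub, add_dotProduct, dotProduct_add, smul_dotProduct,
      dotProduct_smul, smul_eq_mul, dotProduct_comm (grad Y *ᵥ v) v] at h1 h2
    rw [abs_le]
    constructor <;> nlinarith
  have hWform : ∀ v : Fin n → ℝ, v ⬝ᵥ W *ᵥ v = v ⬝ᵥ Y *ᵥ v - η * (v ⬝ᵥ grad Y *ᵥ v) := by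
    intro v
    rw [hW, sub_mulVec, smul_mulVec, dotProduct_sub, dotProduct_smul, smul_eq_mul]
  have hW_lo : ∀ v : Fin n → ℝ, -(η * G) * (v ⬝ᵥ v) ≤ v ⬝ᵥ W *ᵥ v := by
    intro v
    have h1 : 0 ≤ v ⬝ᵥ Y *ᵥ v := (posSemidef_of_idem Y hYs hYi).dotProduct_mulVec_nonneg v
    have h2 := mul_le_mul_of_nonneg_left (abs_le.mp (hform v)).2 hη0.le
    rw [hWform]
    linarith
  have hW_hi : ∀ v : Fin n → ℝ, v ⬝ᵥ W *ᵥ v ≤ (1 + η * G) * (v ⬝ᵥ v) := by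
    intro v
    have h1 : 0 ≤ v ⬝ᵥ (1 - Y) *ᵥ v :=
      (posSemidef_of_idem (1 - Y) (by simp [hYs])
        (by simp [sub_mul, mul_sub, hYi])).dotProduct_mulVec_nonneg v
    rw [sub_mulVec, one_mulVec, dotProduct_sub] at h1
    have h2 := mul_le_mul_of_nonneg_left (abs_le.mp (hform v)).1 hη0.le
    rw [hWform]
    linarith
  have gap := spectral_gap Xp W hXpMem hXi hWs hXpProj
  obtain ⟨x₀, hx₀, hx₀1⟩ : ∃ x : Fin n → ℝ, Xp *ᵥ x = x ∧ x ⬝ᵥ x = 1 := by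
    refine ⟨P *ᵥ Pi.single ⟨0, hk⟩ 1, ?_, ?_⟩
    · rw [mulVec_mulVec, hXP, Matrix.mul_assoc, hP, Matrix.mul_one]
    · rw [dot_mulVec_adj, mulVec_mulVec, hP, one_mulVec]; simp
  obtain ⟨u₀, hu₀, hu₀1⟩ : ∃ u : Fin n → ℝ, Xp *ᵥ u = 0 ∧ u ⬝ᵥ u = 1 := by
    obtain ⟨v, hv⟩ : ∃ v : Fin n → ℝ, (1 - Xp) *ᵥ v ≠ 0 := by
      by_contra! h
      have h0 : (1 - Xp) = 0 := by
        apply ext_of_mulVec_single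
        intro i
        rw [h, zero_mulVec]
      have h1 := congrArg trace h0
      rw [trace_sub, hXt, trace_one, trace_zero, Fintype.card_fin] at h1
      have : (k : ℝ) < n := by exact_mod_cast hkn
      linarith
    obtain ⟨r, e, he, -, her⟩ := exists_unit _ hv
    refine ⟨e, ?_, he⟩
    rw [her, mulVec_smul, mulVec_mulVec, mul_sub, mul_one, hXi, sub_self, zero_mulVec, smul_zero]
  have hcross : ∀ x u : Fin n → ℝ, Xp *ᵥ x = x → Xp *ᵥ u = 0 → x ⬝ᵥ W *ᵥ u = 0 := by
    intro x u hx hu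
    rcases eq_or_ne x 0 with rfl | hx0
    · simp
    rcases eq_or_ne u 0 with rfl | hu0
    · simp
    obtain ⟨r, e, he, hxe, hex⟩ := exists_unit x hx0
    obtain ⟨s, d, hd, hud, hdu⟩ := exists_unit u hu0
    have h := (gap e d (by rw [hex, mulVec_smul, hx]) he
      (by rw [hdu, mulVec_smul, hu, smul_zero]) hd).1
    rw [hxe, hud, mulVec_smul, smul_dotProduct, dotProduct_smul, h]
    simp
  have hcomm := commute_of_cross Xp W hXs hXi hWs hcross
  have hxl : ∀ x : Fin n → ℝ, Xp *ᵥ x = x → (1 - η * G) * (x ⬝ᵥ x) ≤ x ⬝ᵥ W *ᵥ x := by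
    intro x hx
    rcases eq_or_ne x 0 with rfl | hx0
    · simp
    obtain ⟨r, e, he, hxe, hex⟩ := exists_unit x hx0
    have h := (gap e u₀ (by rw [hex, mulVec_smul, hx]) he hu₀ hu₀1).2
    have h2 := hW_lo u₀
    rw [hu₀1] at h2
    rw [hxe, mulVec_smul]
    simp only [smul_dotProduct, dotProduct_smul, smul_eq_mul, he]
    nlinarith [mul_self_nonneg r]
  have hul : ∀ u : Fin n → ℝ, Xp *ᵥ u = 0 → |u ⬝ᵥ W *ᵥ u| ≤ η * G * (u ⬝ᵥ u) := by
    intro u hu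
    rw [abs_le]
    refine ⟨by have := hW_lo u; linarith, ?_⟩
    rcases eq_or_ne u 0 with rfl | hu0
    · simp
    obtain ⟨s, d, hd, hud, hdu⟩ := exists_unit u hu0
    have h := (gap x₀ d hx₀ hx₀1 (by rw [hdu, mulVec_smul, hu, smul_zero]) hd).2
    have h2 := hW_hi x₀
    rw [hx₀1] at h2
    rw [hud, mulVec_smul]
    simp only [smul_dotProduct, dotProduct_smul, smul_eq_mul, hd]
    nlinarith [mul_self_nonneg s]
  have hd1 := dist_sq Xp hXs hXi hXt Q hQ
  have hd2 := dist_sq Xp hXs hXi hXt Qp hQp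
  rw [← hY] at hd1
  rw [← hYp] at hd2
  have hlt : frobNorm (Xp - Y) ^ 2 < 2 := by
    have h := pow_lt_pow_left₀ hclose (Real.sqrt_nonneg _) two_ne_zero
    rwa [Real.sq_sqrt (by norm_num)] at h
  have step := subspace_step Xp W hXs hXi hWs hcomm (η * G) (1 - η * G) hg (by linarith) hxl hul
    Q Qp R hQ hQp hQR (by linarith)
  rw [hd1] at hlt ⊢
  rw [hd2]
  generalize (((1 - Xp) * Q)ᵀ * ((1 - Xp) * Q)).trace = σ at *
  generalize (((1 - Xp) * Qp)ᵀ * ((1 - Xp) * Qp)).trace = τ at *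
  have hl : 0 < 1 - η * G := by linarith
  have hσ : 0 < 1 - σ := by linarith
  have e : 1 / (1 - 1 / 2 * (2 * σ)) * (η * G / (1 - η * G)) ^ 2 * (2 * σ) =
      2 * ((η * G) ^ 2 * σ) / ((1 - η * G) ^ 2 * (1 - σ)) := by
    rw [show 1 - 1 / 2 * (2 * σ) = 1 - σ by ring]
    field_simp
  rw [e, le_div_iff₀ (by positivity)]
  linarith
end
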